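/- Let d ↦ n(d) be a function with n(d) → ∞ and d/n(d) → 0 as d → ∞. For each d, let X_1, …, X_{n(d)} be i.i.d. d-dimensional standard normal random vectors N_d(0, I). Let S_d = (1/n(d)) Σ_{j=1}^{n(d)} X_j X_j^t be the sample covariance matrix, T_d Tyler's M-estimator of the sample, and set S*_d = √(n(d)/d)(S_d − I), T*_d = √(n(d)/d)(T_d − I). Then ‖T*_d − S*_d‖₂ → 0 in probability as d → ∞. -/

import Mathlib

open MeasureTheory ProbabilityTheory Filter Matrix

/-- The eigenvalues of a real symmetric `d × d` matrix, sorted in increasing order,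
so that `sortedEigs A i` is `λ_{i+1}(A)` with `λ_1(A) ≤ … ≤ λ_d(A)`
(junk value `0` if the matrix is not symmetric). -/
noncomputable def sortedEigs {d : ℕ} (A : Matrix (Fin d) (Fin d) ℝ) : Fin d → ℝ :=
  if h : A.IsHermitian then h.eigenvalues ∘ Tuple.sort h.eigenvalues else 0

/-- The spectral norm `‖A‖₂ = max (|λ_1(A)|, |λ_d(A)|)` of a symmetric matrix,
i.e. the largest absolute value of an eigenvalue. -/
noncomputable def specNorm {d : ℕ} (A : Matrix (Fin d) (Fin d) ℝ) : ℝ :=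
  ⨆ i : Fin d, |sortedEigs A i|

/-- `IsTyler X T` says that `T` is Tyler's M-estimator of the sample
`X : Fin n → (Fin d → ℝ)`: it is symmetric positive definite, normalized by
`tr T = d`, and satisfies Tyler's fixed-point equation
`T = (d/n) ∑_j (X_j X_jᵗ) / (X_jᵗ T⁻¹ X_j)`. -/
def IsTyler {d n : ℕ} (X : Fin n → Fin d → ℝ) (T : Matrix (Fin d) (Fin d) ℝ) : Prop :=
  T.PosDef ∧ T.trace = d ∧
    T = ((d : ℝ) / (n : ℝ)) •
      ∑ j : Fin n, (X j ⬝ᵥ T⁻¹ *ᵥ X j)⁻¹ • vecMulVec (X j) (X j)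

/-!
Write `U_j` for the direction of `X_j`, a unit vector. Tyler's estimator depends on the directions
only, and `T ≈ S̃ := (d / n) ∑ U_j U_jᵗ`: conjugating the fixed-point equation by `S̃ ^ (1 / 2)`
gives an equation whose linearization at the identity has a spectral gap, as soon as the
off-diagonal part of the Gram matrix `((U_i · U_j) ^ 2 - 1 / d)` has operator norm small compared to
`n / d`. Its inhomogeneity is driven by `∑ (U_jᵗ S̃⁻¹ U_j - 1) ^ 2`, which stays bounded in
probability by a leave-one-out argument, so that `T - S̃ = o(√(d / n))`. The radial part `S - S̃` is
`n⁻¹ ∑ (|X_j| ^ 2 - d) U_j U_jᵗ`. Both operator norm bounds, on the radial part and on the Gram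
matrix, follow from the expected trace of the fourth power of a sum of independent centered terms,
while `‖S - 1‖` is controlled by a Chernoff bound over a net of the sphere.
-/

namespace TylerGaussian

open scoped Matrix.Norms.Frobenius

/-! ### Quadratic forms and the Frobenius norm -/

section QuadraticForms

variable {m k : Type*} [Fintype m] [Fintype k]

lemma dotProduct_self_nonneg (v : m → ℝ) : 0 ≤ v ⬝ᵥ v :=
  Finset.sum_nonneg fun _ _ => mul_self_nonneg _

lemma ne_zero_of_dotProduct_self_eq_one {v : m → ℝ} (hv : v ⬝ᵥ v = 1) : v ≠ 0 := by
  rintro rfl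
  simp at hv

lemma dotProduct_self_pos {v : m → ℝ} (hv : v ≠ 0) : 0 < v ⬝ᵥ v :=
  (dotProduct_self_nonneg v).lt_of_ne' (dotProduct_self_eq_zero.not.2 hv)

lemma sq_dotProduct_le (a b : m → ℝ) : (a ⬝ᵥ b) ^ 2 ≤ (a ⬝ᵥ a) * (b ⬝ᵥ b) := by
  simpa [dotProduct, sq] using Finset.sum_mul_sq_le_sq_mul_sq Finset.univ a b

lemma dotProduct_mulVec_comm {A : Matrix m m ℝ} (hA : A.IsSymm) (u v : m → ℝ) :
    u ⬝ᵥ A *ᵥ v = (A *ᵥ u) ⬝ᵥ v := by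
  rw [dotProduct_mulVec, ← mulVec_transpose, hA.eq]

lemma mulVec_dotProduct_mulVec {A : Matrix m m ℝ} (hA : A.IsSymm) (u v : m → ℝ) :
    (A *ᵥ u) ⬝ᵥ (A *ᵥ v) = u ⬝ᵥ (A * A) *ᵥ v := by
  rw [← dotProduct_mulVec_comm hA, mulVec_mulVec]

lemma dotProduct_vecMulVec_mulVec (a v : m → ℝ) :
    v ⬝ᵥ vecMulVec a a *ᵥ v = (a ⬝ᵥ v) ^ 2 := by
  simp [vecMulVec_mulVec, dotProduct_comm v a, sq]

lemma trace_mul_vecMulVec (A : Matrix m m ℝ) (a : m → ℝ) :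
    (A * vecMulVec a a).trace = a ⬝ᵥ A *ᵥ a := by
  rw [mul_vecMulVec, trace_vecMulVec, dotProduct_comm]

lemma posDef_of_mul_dotProduct_self_le {S : Matrix m m ℝ} (hS : S.IsSymm) {a : ℝ} (ha : 0 < a)
    (h : ∀ v, a * (v ⬝ᵥ v) ≤ v ⬝ᵥ S *ᵥ v) : S.PosDef := by
  refine .of_dotProduct_mulVec_pos hS fun v hv => ?_
  rw [star_trivial]
  exact (mul_pos ha (dotProduct_self_pos hv)).trans_le (h v)

lemma isUnit_det_of_posDef [DecidableEq m] {S : Matrix m m ℝ} (hS : S.PosDef) : IsUnit S.det :=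
  (isUnit_iff_isUnit_det _).1 hS.isUnit

lemma dotProduct_mulVec_pos_of_posDef {S : Matrix m m ℝ} (hS : S.PosDef) {v : m → ℝ}
    (hv : v ≠ 0) : 0 < v ⬝ᵥ S *ᵥ v := by
  simpa using hS.dotProduct_mulVec_pos hv

lemma exists_isSymm_mul_self_eq {S : Matrix m m ℝ} (hS : S.PosDef) :
    ∃ B : Matrix m m ℝ, B.IsSymm ∧ B * B = S := by
  classical
  open scoped MatrixOrder in
  exact ⟨CFC.sqrt S, (CFC.sqrt_nonneg S).posSemidef.isHermitian,
    CFC.sqrt_mul_sqrt_self S hS.posSemidef.nonneg⟩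

lemma frobenius_norm_sq (A : Matrix m k ℝ) : ‖A‖ ^ 2 = ∑ i, ∑ j, A i j ^ 2 := by
  rw [frobenius_norm_def, ← Real.sqrt_eq_rpow, Real.sq_sqrt (by positivity)]
  simp

lemma frobenius_norm_sq_eq_trace {A : Matrix m m ℝ} (hA : A.IsSymm) :
    ‖A‖ ^ 2 = (A * A).trace := by
  simp only [frobenius_norm_sq, trace, diag, mul_apply]
  exact Finset.sum_congr rfl fun i _ => Finset.sum_congr rfl fun j _ => by
    rw [sq, hA.apply i j]

lemma frobenius_norm_one_sq [DecidableEq m] : ‖(1 : Matrix m m ℝ)‖ ^ 2 = Fintype.card m := by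
  simp [frobenius_norm_sq, one_apply]

lemma abs_trace_mul_le (A : Matrix m k ℝ) (B : Matrix k m ℝ) :
    |(A * B).trace| ≤ ‖A‖ * ‖B‖ := by
  refine abs_le_of_sq_le_sq ?_ (by positivity)
  rw [mul_pow, ← frobenius_norm_transpose B, frobenius_norm_sq, frobenius_norm_sq]
  simp only [trace, diag, mul_apply, transpose_apply]
  simp only [← Finset.sum_product']
  exact Finset.sum_mul_sq_le_sq_mul_sq _ (fun x : m × k => A x.1 x.2) (fun x => B x.2 x.1)

lemma mulVec_dotProduct_self_le (A : Matrix m k ℝ) (v : k → ℝ) :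
    (A *ᵥ v) ⬝ᵥ (A *ᵥ v) ≤ ‖A‖ ^ 2 * (v ⬝ᵥ v) := by
  rw [frobenius_norm_sq, Finset.sum_mul]
  refine Finset.sum_le_sum fun i _ => ?_
  simpa [mulVec, dotProduct, sq] using sq_dotProduct_le (A i) v

lemma sq_frobenius_norm_mul_le_of_mulVec_le {a : ℝ} {Q : Matrix m m ℝ}
    (hQ : ∀ v, (Q *ᵥ v) ⬝ᵥ (Q *ᵥ v) ≤ a * (v ⬝ᵥ v)) (M : Matrix m k ℝ) :
    ‖Q * M‖ ^ 2 ≤ a * ‖M‖ ^ 2 := by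
  rw [← frobenius_norm_transpose (Q * M), ← frobenius_norm_transpose M,
    frobenius_norm_sq, frobenius_norm_sq, Finset.mul_sum]
  refine Finset.sum_le_sum fun j _ => ?_
  simpa [dotProduct, mulVec, mul_apply, sq] using hQ (Mᵀ j)

lemma frobenius_norm_conj_le_of_mulVec_le {a : ℝ} (ha : 0 ≤ a) {Q : Matrix m m ℝ} (hs : Q.IsSymm)
    (hQ : ∀ v, (Q *ᵥ v) ⬝ᵥ (Q *ᵥ v) ≤ a * (v ⬝ᵥ v)) (M : Matrix m m ℝ) :
    ‖Q * M * Q‖ ≤ a * ‖M‖ := by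
  refine abs_le_of_sq_le_sq' ?_ (by positivity) |>.2
  calc ‖Q * M * Q‖ ^ 2 = ‖Q * (Q * M)ᵀ‖ ^ 2 := by
        rw [← frobenius_norm_transpose]; simp [hs.eq]
    _ ≤ a * ‖Q * M‖ ^ 2 := by
        rw [← frobenius_norm_transpose (Q * M)]
        exact sq_frobenius_norm_mul_le_of_mulVec_le hQ _
    _ ≤ a * (a * ‖M‖ ^ 2) :=
        mul_le_mul_of_nonneg_left (sq_frobenius_norm_mul_le_of_mulVec_le hQ M) ha
    _ = (a * ‖M‖) ^ 2 := by ring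

lemma abs_sub_one_le_of_trace_eq {S T : Matrix m m ℝ} (hST : T.trace = S.trace)
    (hS : 0 < S.trace) {t b : ℝ} (h : ∀ v, |v ⬝ᵥ (t • T - S) *ᵥ v| ≤ b * (v ⬝ᵥ S *ᵥ v)) :
    |t - 1| ≤ b := by
  classical
  have htrace : ∀ M : Matrix m m ℝ,
      M.trace = ∑ i, (Pi.single i (1 : ℝ) : m → ℝ) ⬝ᵥ M *ᵥ Pi.single i 1 := fun M => by
    simp [trace]
  have hsum : |(t • T - S).trace| ≤ b * S.trace := by
    rw [htrace, htrace S, Finset.mul_sum]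
    exact (Finset.abs_sum_le_sum_abs _ _).trans (Finset.sum_le_sum fun i _ => h _)
  rw [trace_sub, trace_smul, hST, smul_eq_mul, ← sub_one_mul, abs_mul, abs_of_pos hS] at hsum
  exact le_of_mul_le_mul_right hsum hS

end QuadraticForms

/-! ### Numerical radius and spectral norm -/

/-- `NumRadiusLE M b` says that the numerical radius of `M` is at most `b`, i.e.
`|vᵗMv| ≤ b |v|²` for all `v`; for symmetric `M` this bounds the operator norm. -/
def NumRadiusLE {m : Type*} [Fintype m] (M : Matrix m m ℝ) (b : ℝ) : Prop :=
  ∀ v, |v ⬝ᵥ M *ᵥ v| ≤ b * (v ⬝ᵥ v)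

namespace NumRadiusLE

variable {m : Type*} [Fintype m] {M N : Matrix m m ℝ} {a b : ℝ}

lemma sub (hM : NumRadiusLE M a) (hN : NumRadiusLE N b) : NumRadiusLE (M - N) (a + b) := fun v => by
  rw [sub_mulVec, dotProduct_sub, add_mul]
  exact (abs_sub _ _).trans (add_le_add (hM v) (hN v))

lemma smul (hM : NumRadiusLE M a) (c : ℝ) : NumRadiusLE (c • M) (|c| * a) := fun v => by
  rw [smul_mulVec, dotProduct_smul, smul_eq_mul, abs_mul, mul_assoc]
  exact mul_le_mul_of_nonneg_left (hM v) (abs_nonneg c)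

lemma mono (hM : NumRadiusLE M a) (h : a ≤ b) : NumRadiusLE M b := fun v =>
  (hM v).trans (mul_le_mul_of_nonneg_right h (dotProduct_self_nonneg v))

lemma of_frobenius_norm_le (h : ‖M‖ ≤ a) : NumRadiusLE M a := fun v => by
  have hv := dotProduct_self_nonneg v
  refine abs_le_of_sq_le_sq ?_ (mul_nonneg ((norm_nonneg _).trans h) hv)
  calc (v ⬝ᵥ M *ᵥ v) ^ 2 ≤ (v ⬝ᵥ v) * ((M *ᵥ v) ⬝ᵥ (M *ᵥ v)) := sq_dotProduct_le _ _
    _ ≤ (v ⬝ᵥ v) * (‖M‖ ^ 2 * (v ⬝ᵥ v)) := by gcongr; exact mulVec_dotProduct_self_le M v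
    _ ≤ (v ⬝ᵥ v) * (a ^ 2 * (v ⬝ᵥ v)) := by gcongr
    _ = (a * (v ⬝ᵥ v)) ^ 2 := by ring

lemma of_frobenius_norm_mul_self_le (hM : M.IsSymm) (ha : 0 ≤ a) (h : ‖M * M‖ ≤ a ^ 2) :
    NumRadiusLE M a := fun v => by
  have hv := dotProduct_self_nonneg v
  refine abs_le_of_sq_le_sq ?_ (mul_nonneg ha hv)
  calc (v ⬝ᵥ M *ᵥ v) ^ 2 ≤ (v ⬝ᵥ v) * ((M *ᵥ v) ⬝ᵥ (M *ᵥ v)) := sq_dotProduct_le _ _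
    _ = (v ⬝ᵥ v) * (v ⬝ᵥ (M * M) *ᵥ v) := by rw [mulVec_dotProduct_mulVec hM]
    _ ≤ (v ⬝ᵥ v) * (a ^ 2 * (v ⬝ᵥ v)) := by
        gcongr; exact (le_abs_self _).trans (of_frobenius_norm_le h v)
    _ = (a * (v ⬝ᵥ v)) ^ 2 := by ring

lemma abs_eigenvalue_le (hM : NumRadiusLE M a) {v : m → ℝ} (hv : v ≠ 0) {c : ℝ}
    (hc : M *ᵥ v = c • v) : |c| ≤ a := by
  have h := hM v
  rw [hc, dotProduct_smul, smul_eq_mul, abs_mul, abs_of_nonneg (dotProduct_self_nonneg v)] at h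
  exact le_of_mul_le_mul_right h (dotProduct_self_pos hv)

lemma mul_dotProduct_self_le_of_sub_one [DecidableEq m] (hM : NumRadiusLE (M - 1) a)
    (v : m → ℝ) : (1 - a) * (v ⬝ᵥ v) ≤ v ⬝ᵥ M *ᵥ v := by
  have h := abs_le.1 (hM v) |>.1
  rw [sub_mulVec, one_mulVec, dotProduct_sub] at h
  linarith

lemma dotProduct_mulVec_le_of_sub_one [DecidableEq m] (hM : NumRadiusLE (M - 1) a)
    (v : m → ℝ) : v ⬝ᵥ M *ᵥ v ≤ (1 + a) * (v ⬝ᵥ v) := by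
  have h := abs_le.1 (hM v) |>.2
  rw [sub_mulVec, one_mulVec, dotProduct_sub] at h
  linarith

end NumRadiusLE

lemma eigenvectorBasis_dotProduct_self {m : Type*} [Fintype m] [DecidableEq m] {A : Matrix m m ℝ}
    (hA : A.IsHermitian) (i : m) :
    (hA.eigenvectorBasis i).ofLp ⬝ᵥ (hA.eigenvectorBasis i).ofLp = 1 := by
  have h := hA.eigenvectorBasis.inner_eq_one i
  rwa [EuclideanSpace.inner_eq_star_dotProduct, star_trivial] at h

lemma specNorm_le_of_numRadiusLE {d : ℕ} {A : Matrix (Fin d) (Fin d) ℝ} {b : ℝ} (hb : 0 ≤ b)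
    (hA : NumRadiusLE A b) : specNorm A ≤ b := by
  refine Real.iSup_le (fun i => ?_) hb
  unfold sortedEigs
  split_ifs with hH
  · exact hA.abs_eigenvalue_le
      (ne_zero_of_dotProduct_self_eq_one (eigenvectorBasis_dotProduct_self hH _))
      (hH.mulVec_eigenvectorBasis _)
  · simpa using hb

lemma exists_max_eigenvalue {m : Type*} [Fintype m] [Nonempty m] {A : Matrix m m ℝ}
    (hA : A.IsHermitian) :
    ∃ (c : ℝ) (v : m → ℝ), v ⬝ᵥ v = 1 ∧ A *ᵥ v = c • v ∧ ∀ u, u ⬝ᵥ A *ᵥ u ≤ c * (u ⬝ᵥ u) := by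
  classical
  obtain ⟨i, -, hi⟩ := Finset.exists_max_image Finset.univ hA.eigenvalues Finset.univ_nonempty
  refine ⟨hA.eigenvalues i, _, eigenvectorBasis_dotProduct_self hA i, hA.mulVec_eigenvectorBasis i,
    fun u => ?_⟩
  have hparseval (u v : m → ℝ) : u ⬝ᵥ v =
      ∑ j, ((hA.eigenvectorBasis j).ofLp ⬝ᵥ u) * ((hA.eigenvectorBasis j).ofLp ⬝ᵥ v) := by
    have h := hA.eigenvectorBasis.sum_inner_mul_inner (WithLp.toLp 2 u) (WithLp.toLp 2 v)
    simpa [EuclideanSpace.inner_eq_star_dotProduct, dotProduct_comm] using h.symm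
  rw [hparseval u u, hparseval u, Finset.mul_sum]
  refine Finset.sum_le_sum fun j _ => ?_
  rw [dotProduct_mulVec_comm (show A.IsSymm from hA),
    hA.mulVec_eigenvectorBasis, smul_dotProduct, smul_eq_mul, mul_left_comm]
  exact mul_le_mul_of_nonneg_right (hi j (Finset.mem_univ _)) (mul_self_nonneg _)

/-! ### Traceless parts and weighted scatter matrices -/

section Traceless

variable {m : Type*} [Fintype m] [DecidableEq m]

/-- The traceless part `A - (tr A / d) I` of a `d × d` matrix. -/
noncomputable def traceless (A : Matrix m m ℝ) : Matrix m m ℝ :=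
  A - (A.trace / Fintype.card m) • 1

lemma traceless_isSymm {A : Matrix m m ℝ} (hA : A.IsSymm) : (traceless A).IsSymm :=
  hA.sub (isSymm_one.smul _)

lemma trace_traceless [Nonempty m] (A : Matrix m m ℝ) : (traceless A).trace = 0 := by
  simp [traceless]

lemma traceless_mulVec (A : Matrix m m ℝ) (v : m → ℝ) :
    traceless A *ᵥ v = A *ᵥ v - (A.trace / Fintype.card m) • v := by
  rw [traceless, sub_mulVec, smul_mulVec, one_mulVec]

lemma dotProduct_traceless_mulVec (A : Matrix m m ℝ) (v : m → ℝ) :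
    v ⬝ᵥ traceless A *ᵥ v = v ⬝ᵥ A *ᵥ v - A.trace / Fintype.card m * (v ⬝ᵥ v) := by
  rw [traceless_mulVec, dotProduct_sub, dotProduct_smul, smul_eq_mul]

lemma norm_traceless_le {A : Matrix m m ℝ} (hA : A.IsSymm) : ‖traceless A‖ ≤ ‖A‖ := by
  rcases isEmpty_or_nonempty m with hm | hm
  · rw [Subsingleton.elim (traceless A) A]
  refine abs_le_of_sq_le_sq' ?_ (norm_nonneg _) |>.2
  have expand : ‖traceless A‖ ^ 2 = ‖A‖ ^ 2 - A.trace ^ 2 / Fintype.card m := by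
    rw [frobenius_norm_sq_eq_trace (traceless_isSymm hA), frobenius_norm_sq_eq_trace hA]
    simp only [traceless, sub_mul, mul_sub, trace_sub, Matrix.mul_smul, Matrix.smul_mul,
      Matrix.mul_one, Matrix.one_mul, trace_smul, trace_one, smul_eq_mul]
    field_simp
    ring
  rw [expand]
  exact sub_le_self _ (by positivity)

end Traceless

section Scatter

variable {m ι : Type*} [Fintype m] [Fintype ι]

/-- The weighted scatter matrix `(d/n) ∑ⱼ cⱼ Uⱼ Uⱼᵗ` of `n` vectors in `ℝ^d`. The factor `d/n`
makes `scatter 1 U` have trace `d` when the `Uⱼ` are unit vectors. -/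
noncomputable def scatter (c : ι → ℝ) (U : ι → m → ℝ) : Matrix m m ℝ :=
  ((Fintype.card m : ℝ) / Fintype.card ι) • ∑ j, c j • vecMulVec (U j) (U j)

lemma scatter_isSymm (c : ι → ℝ) (U : ι → m → ℝ) : (scatter c U).IsSymm := by
  simp [IsSymm, scatter, transpose_sum, transpose_vecMulVec]

lemma scatter_sub (c c' : ι → ℝ) (U : ι → m → ℝ) :
    scatter (c - c') U = scatter c U - scatter c' U := by
  simp only [scatter, Pi.sub_apply, sub_smul, Finset.sum_sub_distrib, smul_sub]

lemma trace_mul_scatter (A : Matrix m m ℝ) (c : ι → ℝ) (U : ι → m → ℝ) :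
    (A * scatter c U).trace =
      (Fintype.card m : ℝ) / Fintype.card ι * ∑ j, c j * (U j ⬝ᵥ A *ᵥ U j) := by
  simp only [scatter, Matrix.mul_smul, trace_smul, Matrix.mul_sum, trace_sum,
    trace_mul_vecMulVec, smul_eq_mul]

lemma mul_scatter_mul {K : Matrix m m ℝ} (hK : K.IsSymm) (c : ι → ℝ) (U : ι → m → ℝ) :
    K * scatter c U * K = scatter c fun j => K *ᵥ U j := by
  simp only [scatter, Matrix.mul_smul, Matrix.smul_mul, Matrix.mul_sum, Matrix.sum_mul,
    mul_vecMulVec, vecMulVec_mul, ← mulVec_transpose, hK.eq]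

lemma trace_scatter_one [Nonempty ι] {U : ι → m → ℝ} (hU : ∀ j, U j ⬝ᵥ U j = 1) :
    (scatter 1 U).trace = Fintype.card m := by
  classical
  have h := trace_mul_scatter 1 1 U
  simpa [hU] using h

lemma nonempty_of_scatter_eq_one [DecidableEq m] [Nonempty m] {c : ι → ℝ} {U : ι → m → ℝ}
    (h : scatter c U = 1) : Nonempty ι := by
  by_contra hι
  rw [not_nonempty_iff] at hι
  simp [scatter] at h

end Scatter

/-! ### Stability of Tyler's fixed-point equation -/

section Stability

variable {m ι : Type*} [Fintype m] [DecidableEq m] [Fintype ι]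

/-- Tyler's equation `T = (d/n) ∑ⱼ Uⱼ Uⱼᵗ / (Uⱼᵗ T⁻¹ Uⱼ)`, without any normalization. -/
def IsTylerFixedPoint (U : ι → m → ℝ) (T : Matrix m m ℝ) : Prop :=
  T = scatter (fun j => (U j ⬝ᵥ T⁻¹ *ᵥ U j)⁻¹) U

lemma IsTylerFixedPoint.conj {U : ι → m → ℝ} {T K : Matrix m m ℝ} (hT : IsTylerFixedPoint U T)
    (hK : K.IsSymm) (hKu : IsUnit K.det) :
    IsTylerFixedPoint (fun j => K *ᵥ U j) (K * T * K) := by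
  have quad : ∀ j, (K *ᵥ U j) ⬝ᵥ (K * T * K)⁻¹ *ᵥ (K *ᵥ U j) = U j ⬝ᵥ T⁻¹ *ᵥ U j := fun j => by
    rw [Matrix.mul_inv_rev, Matrix.mul_inv_rev, ← dotProduct_mulVec_comm hK]
    simp only [mulVec_mulVec, ← Matrix.mul_assoc, Matrix.mul_nonsing_inv _ hKu, Matrix.one_mul]
    rw [Matrix.mul_assoc, Matrix.nonsing_inv_mul _ hKu, Matrix.mul_one]
  unfold IsTylerFixedPoint
  simp only [quad]
  rw [← mul_scatter_mul hK, ← hT]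

/-- `TracelessEnergyLE U θ` says that `(d/n) ∑ⱼ (Uⱼᵗ C Uⱼ)² ≤ θ ‖C‖²` for all symmetric traceless
matrices `C`. For `θ < 1` it makes Tyler's equation well conditioned. -/
def TracelessEnergyLE (U : ι → m → ℝ) (θ : ℝ) : Prop :=
  ∀ C : Matrix m m ℝ, C.IsSymm → C.trace = 0 →
    (Fintype.card m : ℝ) / Fintype.card ι * ∑ j, (U j ⬝ᵥ C *ᵥ U j) ^ 2 ≤ θ * ‖C‖ ^ 2

lemma inv_mul_sub_inv_mul_sub_eq {R : Matrix m m ℝ} (hR : R.IsSymm) {w : m → ℝ}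
    (hw : w ⬝ᵥ w ≠ 0) (hRw : w ⬝ᵥ R *ᵥ w ≠ 0) :
    (w ⬝ᵥ R *ᵥ w)⁻¹ * (w ⬝ᵥ (R * R) *ᵥ w) - (w ⬝ᵥ w)⁻¹ * (w ⬝ᵥ traceless R *ᵥ w)
        - R.trace / Fintype.card m =
      ((w ⬝ᵥ w) * (w ⬝ᵥ (traceless R * traceless R) *ᵥ w) - (w ⬝ᵥ traceless R *ᵥ w) ^ 2) /
        ((w ⬝ᵥ R *ᵥ w) * (w ⬝ᵥ w)) := by
  have hCC : w ⬝ᵥ (traceless R * traceless R) *ᵥ w = w ⬝ᵥ (R * R) *ᵥ w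
      - 2 * (R.trace / Fintype.card m) * (w ⬝ᵥ R *ᵥ w)
      + (R.trace / Fintype.card m) ^ 2 * (w ⬝ᵥ w) := by
    rw [← mulVec_dotProduct_mulVec (traceless_isSymm hR), traceless_mulVec,
      ← mulVec_dotProduct_mulVec hR]
    simp only [sub_dotProduct, dotProduct_sub, dotProduct_smul, smul_dotProduct, smul_eq_mul,
      dotProduct_comm (R *ᵥ w) w]
    ring
  rw [hCC, dotProduct_traceless_mulVec]
  field_simp
  ring

lemma mul_sub_le_inv_mul_sub_inv_mul_sub {R : Matrix m m ℝ} (hR : R.PosDef) {a b c : ℝ}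
    (hc : ∀ v, v ⬝ᵥ R *ᵥ v ≤ c * (v ⬝ᵥ v)) {w : m → ℝ} (hw : w ≠ 0)
    (ha : a ≤ (w ⬝ᵥ w)⁻¹) (hb : (w ⬝ᵥ w)⁻¹ ≤ b) :
    c⁻¹ * (a * (w ⬝ᵥ (traceless R * traceless R) *ᵥ w) - b ^ 2 * (w ⬝ᵥ traceless R *ᵥ w) ^ 2) ≤
      (w ⬝ᵥ R *ᵥ w)⁻¹ * (w ⬝ᵥ (R * R) *ᵥ w) - (w ⬝ᵥ w)⁻¹ * (w ⬝ᵥ traceless R *ᵥ w)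
        - R.trace / Fintype.card m := by
  have hRs : R.IsSymm := hR.1
  have hp := dotProduct_self_pos hw
  have hr := dotProduct_mulVec_pos_of_posDef hR hw
  have hc0 : 0 < c := pos_of_mul_pos_left (hr.trans_le (hc w)) hp.le
  rw [inv_mul_sub_inv_mul_sub_eq hRs hp.ne' hr.ne',
    ← mulVec_dotProduct_mulVec (traceless_isSymm hRs)]
  have hcs := sq_dotProduct_le w (traceless R *ᵥ w)
  have hy := dotProduct_self_nonneg (traceless R *ᵥ w)
  have hrc := hc w
  generalize (traceless R *ᵥ w) ⬝ᵥ (traceless R *ᵥ w) = y at *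
  generalize w ⬝ᵥ traceless R *ᵥ w = x at *
  generalize w ⬝ᵥ w = p at *
  generalize w ⬝ᵥ R *ᵥ w = r at *
  calc c⁻¹ * (a * y - b ^ 2 * x ^ 2)
      ≤ c⁻¹ * (p⁻¹ * y - (p⁻¹) ^ 2 * x ^ 2) := by gcongr
    _ = (p * y - x ^ 2) / (c * p * p) := by field_simp
    _ ≤ (p * y - x ^ 2) / (r * p) :=
        div_le_div_of_nonneg_left (sub_nonneg.2 hcs) (by positivity) (by gcongr)

lemma sum_inv_mul_sub_eq_neg_trace [Nonempty m] {W : ι → m → ℝ} {T : Matrix m m ℝ}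
    (hT : T.PosDef) (hW : scatter 1 W = 1) (hTW : IsTylerFixedPoint W T) :
    (Fintype.card m : ℝ) / Fintype.card ι * ∑ j,
      ((W j ⬝ᵥ T⁻¹ *ᵥ W j)⁻¹ * (W j ⬝ᵥ (T⁻¹ * T⁻¹) *ᵥ W j)
        - (W j ⬝ᵥ W j)⁻¹ * (W j ⬝ᵥ traceless T⁻¹ *ᵥ W j) - T⁻¹.trace / Fintype.card m) =
      -(traceless T⁻¹ * (scatter (fun j => (W j ⬝ᵥ W j)⁻¹) W - 1)).trace := by
  have := nonempty_of_scatter_eq_one hW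
  have hfix : T⁻¹.trace = (Fintype.card m : ℝ) / Fintype.card ι *
      ∑ j, (W j ⬝ᵥ T⁻¹ *ᵥ W j)⁻¹ * (W j ⬝ᵥ (T⁻¹ * T⁻¹) *ᵥ W j) := by
    rw [← trace_mul_scatter, ← hTW, Matrix.mul_assoc,
      Matrix.nonsing_inv_mul _ (isUnit_det_of_posDef hT), Matrix.mul_one]
  rw [Matrix.mul_sub, trace_sub, trace_mul_scatter, Matrix.mul_one, trace_traceless]
  simp only [Finset.sum_sub_distrib, mul_sub, ← hfix, Finset.sum_const, Finset.card_univ,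
    nsmul_eq_mul]
  field_simp
  ring

lemma sum_dotProduct_mul_self_mulVec {W : ι → m → ℝ} (hW : scatter 1 W = 1) {C : Matrix m m ℝ}
    (hC : C.IsSymm) :
    (Fintype.card m : ℝ) / Fintype.card ι * ∑ j, W j ⬝ᵥ (C * C) *ᵥ W j = ‖C‖ ^ 2 := by
  have h := trace_mul_scatter (C * C) 1 W
  rw [hW, Matrix.mul_one, ← frobenius_norm_sq_eq_trace hC] at h
  simpa using h.symm

lemma norm_traceless_inv_le_of_forall_le [Nonempty m] {W : ι → m → ℝ} {T : Matrix m m ℝ}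
    (hT : T.PosDef) (hW : scatter 1 W = 1) (hTW : IsTylerFixedPoint W T)
    (hlow : ∀ j, 10 / 11 ≤ W j ⬝ᵥ W j) (hupp : ∀ j, W j ⬝ᵥ W j ≤ 10 / 9)
    (hθ : TracelessEnergyLE W (1 / 4)) {c : ℝ} (hc0 : 0 < c)
    (hc : ∀ v, v ⬝ᵥ T⁻¹ *ᵥ v ≤ c * (v ⬝ᵥ v)) :
    ‖traceless T⁻¹‖ ≤ 2 * c * ‖scatter (fun j => (W j ⬝ᵥ W j)⁻¹) W - 1‖ := by
  set δ : ℝ := Fintype.card m / Fintype.card ι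
  set C := traceless T⁻¹
  set G := scatter (fun j => (W j ⬝ᵥ W j)⁻¹) W - 1
  have hCs : C.IsSymm := traceless_isSymm hT.inv.1
  have hp : ∀ j, 0 < W j ⬝ᵥ W j := fun j => lt_of_lt_of_le (by norm_num) (hlow j)
  have hterm : ∀ j, _ := fun j => mul_sub_le_inv_mul_sub_inv_mul_sub hT.inv hc
    (fun h => (hp j).ne' (dotProduct_self_eq_zero.2 h))
    ((le_inv_comm₀ (by norm_num) (hp j)).2 ((hupp j).trans (by norm_num)) : (9 / 10 : ℝ) ≤ _)
    ((inv_le_comm₀ (hp j) (by norm_num)).2 (le_trans (by norm_num) (hlow j)) : _ ≤ (11 / 10 : ℝ))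
  have htrace : c⁻¹ * (1 / 2 * ‖C‖ ^ 2) ≤ -(C * G).trace := by
    have hE := hθ C hCs (trace_traceless _)
    calc c⁻¹ * (1 / 2 * ‖C‖ ^ 2)
        ≤ c⁻¹ * (9 / 10 * (δ * ∑ j, W j ⬝ᵥ (C * C) *ᵥ W j)
            - (11 / 10) ^ 2 * (δ * ∑ j, (W j ⬝ᵥ C *ᵥ W j) ^ 2)) := by
          rw [sum_dotProduct_mul_self_mulVec hW hCs]
          gcongr
          linarith [sq_nonneg ‖C‖]
      _ = δ * ∑ j, c⁻¹ * (9 / 10 * (W j ⬝ᵥ (C * C) *ᵥ W j)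
            - (11 / 10) ^ 2 * (W j ⬝ᵥ C *ᵥ W j) ^ 2) := by
          rw [← Finset.mul_sum, Finset.sum_sub_distrib, ← Finset.mul_sum, ← Finset.mul_sum]
          ring
      _ ≤ -(C * G).trace := by
          rw [← sum_inv_mul_sub_eq_neg_trace hT hW hTW]
          exact mul_le_mul_of_nonneg_left (Finset.sum_le_sum fun j _ => hterm j) (by positivity)
  have hsq : ‖C‖ * ‖C‖ ≤ ‖C‖ * (2 * c * ‖G‖) := by
    have h := (htrace.trans (neg_le_abs _)).trans (abs_trace_mul_le C G)
    rw [inv_mul_le_iff₀ hc0] at h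
    linarith
  rcases (norm_nonneg C).eq_or_lt with h0 | h0
  · rw [← h0]; positivity
  · exact le_of_mul_le_mul_left hsq h0

lemma norm_traceless_inv_le [Nonempty m] {W : ι → m → ℝ} {T : Matrix m m ℝ}
    (hT : T.PosDef) (hW : scatter 1 W = 1) (hTW : IsTylerFixedPoint W T)
    (hlow : ∀ j, 10 / 11 ≤ W j ⬝ᵥ W j) (hupp : ∀ j, W j ⬝ᵥ W j ≤ 10 / 9)
    (hθ : TracelessEnergyLE W (1 / 4))
    (hG : ‖scatter (fun j => (W j ⬝ᵥ W j)⁻¹) W - 1‖ ≤ 1 / 4) :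
    ‖traceless T⁻¹‖ ≤ 4 * (T⁻¹.trace / Fintype.card m) *
      ‖scatter (fun j => (W j ⬝ᵥ W j)⁻¹) W - 1‖ := by
  obtain ⟨c, v, hv1, hcv, hc⟩ := exists_max_eigenvalue hT.inv.1
  have hv := ne_zero_of_dotProduct_self_eq_one hv1
  have hc0 : 0 < c :=
    pos_of_mul_pos_left ((dotProduct_mulVec_pos_of_posDef hT.inv hv).trans_le (hc v))
      (dotProduct_self_nonneg v)
  have hC := norm_traceless_inv_le_of_forall_le hT hW hTW hlow hupp hθ hc0 hc
  have hcC : |c - T⁻¹.trace / Fintype.card m| ≤ ‖traceless T⁻¹‖ :=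
    (NumRadiusLE.of_frobenius_norm_le le_rfl).abs_eigenvalue_le hv
      (by rw [traceless_mulVec, hcv, sub_smul])
  have hct : c ≤ 2 * (T⁻¹.trace / Fintype.card m) := by
    nlinarith [(abs_le.1 hcC).2]
  nlinarith [norm_nonneg (scatter (fun j => (W j ⬝ᵥ W j)⁻¹) W - 1)]

end Stability

lemma norm_sub_one_le_of_mul_eq_one {A : Type*} [NormedRing A] {a b : A} {η : ℝ}
    (hab : a * b = 1) (ha : ‖a - 1‖ ≤ η) (hη : η ≤ 1 / 2) : ‖b - 1‖ ≤ 2 * η := by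
  have hb : b - 1 = -(a - 1) - (a - 1) * (b - 1) := by
    rw [sub_mul, mul_sub, hab]; simp
  have h : ‖b - 1‖ ≤ η + η * ‖b - 1‖ := by
    calc ‖b - 1‖ = ‖-(a - 1) - (a - 1) * (b - 1)‖ := congrArg norm hb
      _ ≤ ‖a - 1‖ + ‖a - 1‖ * ‖b - 1‖ :=
          (norm_sub_le _ _).trans (by rw [norm_neg]; gcongr; exact norm_mul_le _ _)
      _ ≤ _ := by gcongr
  nlinarith [norm_nonneg (b - 1)]

section Whitening

variable {m ι : Type*} [Fintype m] [DecidableEq m] [Fintype ι]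

lemma exists_norm_smul_sub_one_le [Nonempty m] {W : ι → m → ℝ} {T : Matrix m m ℝ}
    (hT : T.PosDef) (hW : scatter 1 W = 1) (hTW : IsTylerFixedPoint W T)
    (hlow : ∀ j, 10 / 11 ≤ W j ⬝ᵥ W j) (hupp : ∀ j, W j ⬝ᵥ W j ≤ 10 / 9)
    (hθ : TracelessEnergyLE W (1 / 4)) {g : ℝ} (hg : g ≤ 1 / 8)
    (hG : ‖scatter (fun j => (W j ⬝ᵥ W j)⁻¹) W - 1‖ ≤ g) :
    ∃ t : ℝ, ‖t • T - 1‖ ≤ 8 * g := by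
  set t := T⁻¹.trace / Fintype.card m with ht
  have htpos : 0 < t := div_pos hT.inv.trace_pos (by exact_mod_cast Fintype.card_pos)
  have hC := norm_traceless_inv_le hT hW hTW hlow hupp hθ (hG.trans (hg.trans (by norm_num)))
  have hinv : (t⁻¹ • T⁻¹) * (t • T) = 1 := by
    rw [smul_mul_smul_comm, inv_mul_cancel₀ htpos.ne',
      Matrix.nonsing_inv_mul _ (isUnit_det_of_posDef hT), one_smul]
  have hnear : ‖t⁻¹ • T⁻¹ - 1‖ ≤ 4 * g := by
    have : t⁻¹ • T⁻¹ - 1 = t⁻¹ • traceless T⁻¹ := by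
      rw [traceless, ← ht, smul_sub, inv_smul_smul₀ htpos.ne']
    rw [this, norm_smul, norm_inv, Real.norm_of_nonneg htpos.le, inv_mul_le_iff₀ htpos]
    nlinarith
  exact ⟨t, (norm_sub_one_le_of_mul_eq_one hinv hnear (by linarith)).trans (by linarith)⟩

lemma sum_sq_le_sum_sub_sq_of_sum_eq_zero {x : ι → ℝ} (hx : ∑ j, x j = 0) (s : ℝ) :
    ∑ j, x j ^ 2 ≤ ∑ j, (x j - s) ^ 2 := by
  have h : ∑ j, (x j - s) ^ 2 = ∑ j, x j ^ 2 - 2 * s * ∑ j, x j + Fintype.card ι * s ^ 2 := by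
    simp only [sub_sq, Finset.sum_add_distrib, Finset.sum_sub_distrib, Finset.sum_const,
      Finset.card_univ, nsmul_eq_mul, Finset.mul_sum]
    congr 2
    exact Finset.sum_congr rfl fun j _ => by ring
  rw [h, hx]
  have : (0 : ℝ) ≤ Fintype.card ι * s ^ 2 := by positivity
  linarith

lemma TracelessEnergyLE.conj [Nonempty m] {U : ι → m → ℝ} {θ a : ℝ} (hθ : TracelessEnergyLE U θ)
    (hθ0 : 0 ≤ θ) (hU : ∀ j, U j ⬝ᵥ U j = 1) {K : Matrix m m ℝ} (hK : K.IsSymm) (ha : 0 ≤ a)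
    (hKa : ∀ v, (K *ᵥ v) ⬝ᵥ (K *ᵥ v) ≤ a * (v ⬝ᵥ v)) (hone : scatter 1 (fun j => K *ᵥ U j) = 1) :
    TracelessEnergyLE (fun j => K *ᵥ U j) (a ^ 2 * θ) := fun C hC hCtr => by
  have := nonempty_of_scatter_eq_one hone
  set D := K * C * K
  have hD : D.IsSymm := by simp [D, IsSymm, hK.eq, hC.eq, Matrix.mul_assoc]
  have hquad : ∀ j, U j ⬝ᵥ traceless D *ᵥ U j =
      (K *ᵥ U j) ⬝ᵥ C *ᵥ (K *ᵥ U j) - D.trace / Fintype.card m := fun j => by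
    rw [dotProduct_traceless_mulVec, hU, mul_one, ← dotProduct_mulVec_comm hK]
    simp [D, mulVec_mulVec, Matrix.mul_assoc]
  have hsum : ∑ j, (K *ᵥ U j) ⬝ᵥ C *ᵥ (K *ᵥ U j) = 0 := by
    have h := trace_mul_scatter C 1 fun j => K *ᵥ U j
    rw [hone, Matrix.mul_one, hCtr] at h
    simpa using h.symm
  calc _ ≤ _ := mul_le_mul_of_nonneg_left
        (sum_sq_le_sum_sub_sq_of_sum_eq_zero hsum (D.trace / Fintype.card m)) (by positivity)
    _ ≤ θ * ‖traceless D‖ ^ 2 := by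
        simpa only [hquad] using hθ _ (traceless_isSymm hD) (trace_traceless D)
    _ ≤ θ * (a * ‖C‖) ^ 2 := by
        gcongr
        exact (norm_traceless_le hD).trans (frobenius_norm_conj_le_of_mulVec_le ha hK hKa C)
    _ = _ := by ring

/-- A whitening of a positive definite `S`: a symmetric square root `B` and its inverse `K`. -/
structure IsWhitening (S B K : Matrix m m ℝ) : Prop where
  isSymm_root : B.IsSymm
  isSymm_inv : K.IsSymm
  root_mul_root : B * B = S
  root_mul_inv : B * K = 1
  inv_mul_root : K * B = 1

lemma exists_isWhitening {S : Matrix m m ℝ} (hS : S.PosDef) : ∃ B K, IsWhitening S B K := by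
  obtain ⟨B, hB, hBB⟩ := exists_isSymm_mul_self_eq hS
  have hBu : IsUnit B.det := by
    have := isUnit_det_of_posDef hS
    rw [← hBB, det_mul] at this
    exact isUnit_of_mul_isUnit_left this
  exact ⟨B, B⁻¹, hB, hB.inv, hBB, Matrix.mul_nonsing_inv _ hBu, Matrix.nonsing_inv_mul _ hBu⟩

namespace IsWhitening

variable {S B K : Matrix m m ℝ} (h : IsWhitening S B K)
include h

lemma inv_eq : S⁻¹ = K * K := Matrix.inv_eq_right_inv <| by
  rw [← h.root_mul_root, Matrix.mul_assoc, ← Matrix.mul_assoc B K K, h.root_mul_inv,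
    Matrix.one_mul, h.root_mul_inv]

lemma conj_eq_one : K * S * K = 1 := by
  rw [← h.root_mul_root, ← Matrix.mul_assoc, h.inv_mul_root, Matrix.one_mul, h.root_mul_inv]

lemma inv_mulVec_dotProduct_self (v : m → ℝ) : (K *ᵥ v) ⬝ᵥ (K *ᵥ v) = v ⬝ᵥ S⁻¹ *ᵥ v := by
  rw [mulVec_dotProduct_mulVec h.isSymm_inv, h.inv_eq]

lemma dotProduct_inv_mulVec (v : m → ℝ) : (K *ᵥ v) ⬝ᵥ S *ᵥ (K *ᵥ v) = v ⬝ᵥ v := by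
  rw [← dotProduct_mulVec_comm h.isSymm_inv, mulVec_mulVec, mulVec_mulVec,
    h.conj_eq_one, one_mulVec]

lemma isUnit_det_inv : IsUnit K.det := by
  have := congrArg det h.root_mul_inv
  rw [det_mul, det_one] at this
  exact .of_mul_eq_one_right _ this

lemma posDef_conj {T : Matrix m m ℝ} (hT : T.PosDef) : (K * T * K).PosDef := by
  have hinj : Function.Injective K.mulVec := fun x y hxy => by
    simpa [mulVec_mulVec, h.root_mul_inv] using congrArg B.mulVec hxy
  simpa [h.isSymm_inv.eq] using hT.conjTranspose_mul_mul_same hinj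

lemma abs_quadForm_smul_sub_le {T : Matrix m m ℝ} {t b : ℝ}
    (hT : NumRadiusLE (t • (K * T * K) - 1) b) (v : m → ℝ) :
    |v ⬝ᵥ (t • T - S) *ᵥ v| ≤ b * (v ⬝ᵥ S *ᵥ v) := by
  have hconj : B * (t • (K * T * K) - 1) * B = t • T - S := by
    have hT : B * (K * T * K) * B = T := by
      rw [Matrix.mul_assoc K, ← Matrix.mul_assoc B K, h.root_mul_inv, Matrix.one_mul,
        Matrix.mul_assoc, h.inv_mul_root, Matrix.mul_one]
    rw [Matrix.mul_sub, Matrix.sub_mul, Matrix.mul_one, h.root_mul_root, Matrix.mul_smul,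
      Matrix.smul_mul, hT]
  have hz := hT (B *ᵥ v)
  rwa [mulVec_dotProduct_mulVec h.isSymm_root, h.root_mul_root,
    ← dotProduct_mulVec_comm h.isSymm_root, mulVec_mulVec, mulVec_mulVec, hconj] at hz

end IsWhitening

lemma numRadiusLE_sub_of_abs_quadForm_le {S T : Matrix m m ℝ}
    (hST : T.trace = S.trace) (hS : 0 < S.trace) (hS1 : NumRadiusLE (S - 1) (1 / 10)) {t b : ℝ}
    (hb : b ≤ 1 / 2) (h : ∀ v, |v ⬝ᵥ (t • T - S) *ᵥ v| ≤ b * (v ⬝ᵥ S *ᵥ v)) :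
    NumRadiusLE (T - S) (22 / 5 * b) := fun v => by
  have ht := abs_sub_one_le_of_trace_eq hST hS h
  have hb0 := (abs_nonneg _).trans ht
  have hv := dotProduct_self_nonneg v
  have hSv : 0 ≤ v ⬝ᵥ S *ᵥ v :=
    (mul_nonneg (by norm_num) hv).trans (hS1.mul_dotProduct_self_le_of_sub_one v)
  have ht2 : 1 / 2 ≤ t := by linarith [(abs_le.1 ht).1]
  have hmul : t * |v ⬝ᵥ (T - S) *ᵥ v| ≤ 2 * b * (v ⬝ᵥ S *ᵥ v) := by
    calc t * |v ⬝ᵥ (T - S) *ᵥ v|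
        = |v ⬝ᵥ (t • T - S) *ᵥ v + -((t - 1) * (v ⬝ᵥ S *ᵥ v))| := by
          rw [← abs_of_pos (show 0 < t by linarith), ← abs_mul, abs_of_pos (show 0 < t by linarith)]
          simp only [sub_mulVec, smul_mulVec, dotProduct_sub, dotProduct_smul, smul_eq_mul]
          ring_nf
      _ ≤ b * (v ⬝ᵥ S *ᵥ v) + b * (v ⬝ᵥ S *ᵥ v) := by
          refine (abs_add_le _ _).trans (add_le_add (h v) ?_)
          rw [abs_neg, abs_mul, abs_of_nonneg hSv]
          gcongr
      _ = _ := by ring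
  have hS2 : b * (v ⬝ᵥ S *ᵥ v) ≤ b * ((1 + 1 / 10) * (v ⬝ᵥ v)) :=
    mul_le_mul_of_nonneg_left (hS1.dotProduct_mulVec_le_of_sub_one v) hb0
  nlinarith [abs_nonneg (v ⬝ᵥ (T - S) *ᵥ v)]

theorem IsTylerFixedPoint.numRadiusLE_sub_scatter [Nonempty m] [Nonempty ι] {U : ι → m → ℝ}
    {T : Matrix m m ℝ} (hTU : IsTylerFixedPoint U T) (hT : T.PosDef)
    (hTtr : T.trace = Fintype.card m) (hU : ∀ j, U j ⬝ᵥ U j = 1)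
    (hS : NumRadiusLE (scatter 1 U - 1) (1 / 10)) (hθ : TracelessEnergyLE U (1 / 5)) {e : ℝ}
    (he : e ≤ 9 / 160)
    (hG : ‖scatter (fun j => (U j ⬝ᵥ (scatter 1 U)⁻¹ *ᵥ U j)⁻¹ - 1) U‖ ≤ e) :
    NumRadiusLE (T - scatter 1 U) (40 * e) := by
  set S := scatter 1 U
  have hSlow := hS.mul_dotProduct_self_le_of_sub_one
  have hSupp := hS.dotProduct_mulVec_le_of_sub_one
  obtain ⟨B, K, hw⟩ := exists_isWhitening
    (posDef_of_mul_dotProduct_self_le (scatter_isSymm 1 U) (by norm_num) hSlow)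
  have hKupp : ∀ v, (K *ᵥ v) ⬝ᵥ (K *ᵥ v) ≤ 10 / 9 * (v ⬝ᵥ v) := fun v => by
    linarith [hSlow (K *ᵥ v), hw.dotProduct_inv_mulVec v]
  have hKlow : ∀ v, 10 / 11 * (v ⬝ᵥ v) ≤ (K *ᵥ v) ⬝ᵥ (K *ᵥ v) := fun v => by
    linarith [hSupp (K *ᵥ v), hw.dotProduct_inv_mulVec v]
  have hW : scatter 1 (fun j => K *ᵥ U j) = 1 := by
    rw [← mul_scatter_mul hw.isSymm_inv, hw.conj_eq_one]
  have hGW : ‖scatter (fun j => ((K *ᵥ U j) ⬝ᵥ (K *ᵥ U j))⁻¹) (fun j => K *ᵥ U j) - 1‖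
      ≤ 10 / 9 * e := by
    simp only [hw.inv_mulVec_dotProduct_self]
    rw [← hW, ← scatter_sub, ← mul_scatter_mul hw.isSymm_inv]
    exact (frobenius_norm_conj_le_of_mulVec_le (by norm_num) hw.isSymm_inv hKupp _).trans
      (mul_le_mul_of_nonneg_left hG (by norm_num))
  have hθW : TracelessEnergyLE (fun j => K *ᵥ U j) (1 / 4) := fun C hC hCtr =>
    (hθ.conj (by norm_num) hU hw.isSymm_inv (by norm_num) hKupp hW C hC hCtr).trans
      (mul_le_mul_of_nonneg_right (by norm_num) (sq_nonneg _))
  obtain ⟨t, ht⟩ := exists_norm_smul_sub_one_le (hw.posDef_conj hT) hW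
    (hTU.conj hw.isSymm_inv hw.isUnit_det_inv) (fun j => by simpa [hU] using hKlow (U j))
    (fun j => by simpa [hU] using hKupp (U j)) hθW (by linarith) hGW
  have hStr : S.trace = Fintype.card m := trace_scatter_one hU
  refine (numRadiusLE_sub_of_abs_quadForm_le (hTtr.trans hStr.symm)
    (hStr ▸ by exact_mod_cast Fintype.card_pos) hS (by linarith)
    (hw.abs_quadForm_smul_sub_le (.of_frobenius_norm_le ht))).mono ?_
  linarith [(norm_nonneg _).trans hG]

end Whitening

/-! ### The Gram kernel of squared inner products -/

section TracelessDyads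

variable {m ι : Type*} [Fintype m] [DecidableEq m]

lemma trace_mul_traceless_dyad {u : m → ℝ} (hu : u ⬝ᵥ u = 1) (C : Matrix m m ℝ) :
    (C * traceless (vecMulVec u u)).trace = u ⬝ᵥ C *ᵥ u - C.trace / Fintype.card m := by
  rw [traceless, Matrix.mul_sub, trace_sub, trace_mul_vecMulVec, trace_vecMulVec, hu,
    Matrix.mul_smul, Matrix.mul_one, trace_smul, smul_eq_mul, one_div_mul_eq_div]

lemma trace_traceless_dyad_mul [Nonempty m] {u v : m → ℝ} (hu : u ⬝ᵥ u = 1) (hv : v ⬝ᵥ v = 1) :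
    (traceless (vecMulVec u u) * traceless (vecMulVec v v)).trace =
      (u ⬝ᵥ v) ^ 2 - 1 / Fintype.card m := by
  rw [trace_mul_traceless_dyad hv, trace_traceless, dotProduct_traceless_mulVec,
    dotProduct_vecMulVec_mulVec, trace_vecMulVec, hu, hv, zero_div, sub_zero, mul_one]

lemma sum_smul_traceless_dyad_isSymm [Fintype ι] (U : ι → m → ℝ) (x : ι → ℝ) :
    (∑ j, x j • traceless (vecMulVec (U j) (U j))).IsSymm := by
  rw [IsSymm, transpose_sum]
  exact Finset.sum_congr rfl fun j _ =>
    ((traceless_isSymm (transpose_vecMulVec _ _)).smul (x j)).eq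

lemma sq_norm_sum_smul_traceless_dyad [Fintype ι] [Nonempty m] {U : ι → m → ℝ}
    (hU : ∀ j, U j ⬝ᵥ U j = 1) (x : ι → ℝ) :
    ‖∑ j, x j • traceless (vecMulVec (U j) (U j))‖ ^ 2 =
      ∑ i, ∑ j, x i * x j * ((U i ⬝ᵥ U j) ^ 2 - 1 / Fintype.card m) := by
  rw [frobenius_norm_sq_eq_trace (sum_smul_traceless_dyad_isSymm U x), Finset.sum_mul_sum]
  simp only [smul_mul_smul_comm, trace_sum, trace_smul, trace_traceless_dyad_mul (hU _) (hU _),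
    smul_eq_mul]

lemma scatter_eq_sum_traceless_add [Fintype ι] [Nonempty m] {U : ι → m → ℝ}
    (hU : ∀ j, U j ⬝ᵥ U j = 1) (x : ι → ℝ) :
    scatter x U = ((Fintype.card m : ℝ) / Fintype.card ι) •
        ∑ j, x j • traceless (vecMulVec (U j) (U j)) +
      ((∑ j, x j) / Fintype.card ι) • (1 : Matrix m m ℝ) := by
  have hd : (Fintype.card m : ℝ) ≠ 0 := by exact_mod_cast Fintype.card_ne_zero
  simp only [scatter, traceless, trace_vecMulVec, hU, smul_sub, Finset.sum_sub_distrib, smul_smul,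
    ← Finset.sum_smul, ← Finset.sum_mul]
  rw [show (Fintype.card m : ℝ) / Fintype.card ι * ((∑ j, x j) * (1 / Fintype.card m)) =
    (∑ j, x j) / Fintype.card ι by field_simp]
  abel

end TracelessDyads

section Gram

variable {m ι : Type*} [Fintype m] [DecidableEq ι]

/-- The off-diagonal part of the Gram matrix of the traceless dyads of unit vectors `Uⱼ`: its
entries off the diagonal are `(Uᵢ · Uⱼ)² - 1/d`. -/
noncomputable def offDiagGram (U : ι → m → ℝ) : Matrix ι ι ℝ := fun i j =>
  if i = j then 0 else (U i ⬝ᵥ U j) ^ 2 - 1 / Fintype.card m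

variable [Fintype ι] [DecidableEq m] [Nonempty m] {U : ι → m → ℝ} {h : ℝ}

lemma sq_norm_sum_smul_traceless_dyad_le (hU : ∀ j, U j ⬝ᵥ U j = 1)
    (hH : NumRadiusLE (offDiagGram U) h) (x : ι → ℝ) :
    ‖∑ j, x j • traceless (vecMulVec (U j) (U j))‖ ^ 2 ≤ (1 + h) * (x ⬝ᵥ x) := by
  have expand : ‖∑ j, x j • traceless (vecMulVec (U j) (U j))‖ ^ 2 =
      x ⬝ᵥ offDiagGram U *ᵥ x + (1 - 1 / Fintype.card m) * (x ⬝ᵥ x) := by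
    have hentry : ∀ i j, (U i ⬝ᵥ U j) ^ 2 - 1 / (Fintype.card m : ℝ) =
        offDiagGram U i j + if i = j then 1 - 1 / (Fintype.card m : ℝ) else 0 := fun i j => by
      by_cases hij : i = j
      · simp [offDiagGram, hij, hU]
      · simp [offDiagGram, hij]
    rw [sq_norm_sum_smul_traceless_dyad hU]
    simp only [hentry, mul_add, mul_ite, mul_zero, Finset.sum_add_distrib, Finset.sum_ite_eq,
      Finset.mem_univ, if_true]
    simp only [dotProduct, mulVec, Finset.mul_sum]
    congr 1
    · exact Finset.sum_congr rfl fun i _ => Finset.sum_congr rfl fun j _ => by ring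
    · exact Finset.sum_congr rfl fun i _ => by ring
  have hxx := dotProduct_self_nonneg x
  have hd : 0 ≤ 1 / (Fintype.card m : ℝ) * (x ⬝ᵥ x) := by positivity
  rw [expand]
  linarith [(abs_le.1 (hH x)).2]

/- This is the adjoint of the previous bound: `C ↦ (Uⱼᵗ C Uⱼ)ⱼ` is dual to `x ↦ ∑ⱼ xⱼ Qⱼ`. -/
lemma sum_sq_dotProduct_mulVec_le (hU : ∀ j, U j ⬝ᵥ U j = 1) (hh : 0 ≤ h)
    (hH : NumRadiusLE (offDiagGram U) h) {C : Matrix m m ℝ} (hC : C.trace = 0) :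
    ∑ j, (U j ⬝ᵥ C *ᵥ U j) ^ 2 ≤ (1 + h) * ‖C‖ ^ 2 := by
  set z : ι → ℝ := fun j => U j ⬝ᵥ C *ᵥ U j
  have hzz : ∑ j, (U j ⬝ᵥ C *ᵥ U j) ^ 2 = z ⬝ᵥ z :=
    Finset.sum_congr rfl fun j _ => sq _
  have hpair : (C * ∑ j, z j • traceless (vecMulVec (U j) (U j))).trace = z ⬝ᵥ z := by
    simp only [Matrix.mul_sum, Matrix.mul_smul, trace_sum, trace_smul,
      trace_mul_traceless_dyad (hU _), hC, zero_div, sub_zero, smul_eq_mul]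
    rfl
  have hcs : (z ⬝ᵥ z) ^ 2 ≤ ‖C‖ ^ 2 * ((1 + h) * (z ⬝ᵥ z)) := by
    rw [← sq_abs, ← hpair]
    refine (pow_le_pow_left₀ (abs_nonneg _) (abs_trace_mul_le _ _) 2).trans ?_
    rw [mul_pow, hpair]
    gcongr
    exact sq_norm_sum_smul_traceless_dyad_le hU hH z
  rw [hzz]
  rcases (dotProduct_self_nonneg z).eq_or_lt with h0 | h0
  · rw [← h0]; positivity
  · nlinarith

lemma tracelessEnergyLE_of_offDiagGram (hU : ∀ j, U j ⬝ᵥ U j = 1) (hh : 0 ≤ h)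
    (hH : NumRadiusLE (offDiagGram U) h) :
    TracelessEnergyLE U ((Fintype.card m : ℝ) / Fintype.card ι * (1 + h)) := fun C _ hC => by
  rw [mul_assoc]
  exact mul_le_mul_of_nonneg_left (sum_sq_dotProduct_mulVec_le hU hh hH hC) (by positivity)

lemma sq_norm_scatter_le (hU : ∀ j, U j ⬝ᵥ U j = 1) (hH : NumRadiusLE (offDiagGram U) h)
    (x : ι → ℝ) :
    ‖scatter x U‖ ^ 2 ≤ 2 * ((Fintype.card m : ℝ) / Fintype.card ι) *
      ((Fintype.card m : ℝ) / Fintype.card ι * (1 + h) * (x ⬝ᵥ x)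
        + (∑ j, x j) ^ 2 / Fintype.card ι) := by
  set δ : ℝ := Fintype.card m / Fintype.card ι
  set A := ∑ j, x j • traceless (vecMulVec (U j) (U j))
  have hδn : δ / Fintype.card ι = Fintype.card m / (Fintype.card ι : ℝ) ^ 2 := by
    rw [div_div, sq]
  calc ‖scatter x U‖ ^ 2
      ≤ (‖δ • A‖ + ‖((∑ j, x j) / Fintype.card ι) • (1 : Matrix m m ℝ)‖) ^ 2 := by
        rw [scatter_eq_sum_traceless_add hU]; gcongr; exact norm_add_le _ _
    _ ≤ 2 * (‖δ • A‖ ^ 2 + ‖((∑ j, x j) / Fintype.card ι) • (1 : Matrix m m ℝ)‖ ^ 2) :=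
        add_sq_le
    _ = 2 * (δ ^ 2 * ‖A‖ ^ 2 + δ * ((∑ j, x j) ^ 2 / Fintype.card ι)) := by
        rw [norm_smul, norm_smul, mul_pow, mul_pow, frobenius_norm_one_sq, Real.norm_eq_abs,
          Real.norm_eq_abs, sq_abs, sq_abs, div_pow, mul_div_left_comm δ, hδn]
        ring
    _ ≤ 2 * (δ ^ 2 * ((1 + h) * (x ⬝ᵥ x)) + δ * ((∑ j, x j) ^ 2 / Fintype.card ι)) := by
        gcongr; exact sq_norm_sum_smul_traceless_dyad_le hU hH x
    _ = _ := by ring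

end Gram

section InverseWeights

variable {m ι : Type*} [Fintype m] [Fintype ι]

lemma sum_sq_inv_sub_one_le {p : ι → ℝ} (hp : ∀ j, 10 / 11 ≤ p j) :
    ∑ j, ((p j)⁻¹ - 1) ^ 2 ≤ 121 / 100 * ∑ j, (p j - 1) ^ 2 := by
  rw [Finset.mul_sum]
  refine Finset.sum_le_sum fun j _ => ?_
  have hpos : 0 < p j := lt_of_lt_of_le (by norm_num) (hp j)
  have hinv : (p j)⁻¹ ≤ 11 / 10 := (inv_le_comm₀ hpos (by norm_num)).2 (by linarith [hp j])
  calc ((p j)⁻¹ - 1) ^ 2 = (p j)⁻¹ ^ 2 * (p j - 1) ^ 2 := by field_simp; ring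
    _ ≤ (11 / 10) ^ 2 * (p j - 1) ^ 2 := by gcongr
    _ = _ := by norm_num

/- Since the `pⱼ - 1` sum to zero, the sum of the `pⱼ⁻¹ - 1` is of second order. -/
lemma abs_sum_inv_sub_one_le {p : ι → ℝ} (hp : ∀ j, 10 / 11 ≤ p j) (hsum : ∑ j, (p j - 1) = 0) :
    |∑ j, ((p j)⁻¹ - 1)| ≤ 11 / 10 * ∑ j, (p j - 1) ^ 2 := by
  have hpos : ∀ j, 0 < p j := fun j => lt_of_lt_of_le (by norm_num) (hp j)
  have hrem : ∑ j, ((p j)⁻¹ - 1) = ∑ j, (p j)⁻¹ * (p j - 1) ^ 2 := by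
    rw [← add_zero (∑ j, ((p j)⁻¹ - 1)), ← hsum, ← Finset.sum_add_distrib]
    exact Finset.sum_congr rfl fun j _ => by have := hpos j; field_simp; ring
  rw [hrem, abs_of_nonneg (Finset.sum_nonneg fun j _ => by have := hpos j; positivity),
    Finset.mul_sum]
  gcongr with j
  exact (inv_le_comm₀ (hpos j) (by norm_num)).2 (by linarith [hp j])

variable [DecidableEq m]

lemma dotProduct_self_le_mul_dotProduct_inv_mulVec {S : Matrix m m ℝ} (hS : S.PosDef) {a : ℝ}
    (ha : ∀ v, v ⬝ᵥ S *ᵥ v ≤ a * (v ⬝ᵥ v)) (v : m → ℝ) : v ⬝ᵥ v ≤ a * (v ⬝ᵥ S⁻¹ *ᵥ v) := by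
  obtain ⟨B, K, hw⟩ := exists_isWhitening hS
  rw [← hw.dotProduct_inv_mulVec, ← hw.inv_mulVec_dotProduct_self]
  exact ha _

lemma sum_dotProduct_inv_scatter_mulVec_sub_one [Nonempty m] [Nonempty ι] {U : ι → m → ℝ}
    (hS : (scatter 1 U).PosDef) : ∑ j, (U j ⬝ᵥ (scatter 1 U)⁻¹ *ᵥ U j - 1) = 0 := by
  have hd : (Fintype.card m : ℝ) ≠ 0 := by exact_mod_cast Fintype.card_ne_zero
  have hn : (Fintype.card ι : ℝ) ≠ 0 := by exact_mod_cast Fintype.card_ne_zero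
  have h := trace_mul_scatter (scatter 1 U)⁻¹ 1 U
  rw [Matrix.nonsing_inv_mul _ (isUnit_det_of_posDef hS), trace_one] at h
  simp only [Pi.one_apply, one_mul] at h
  rw [Finset.sum_sub_distrib, Finset.sum_const, Finset.card_univ, nsmul_eq_mul, mul_one,
    sub_eq_zero]
  field_simp at h
  exact h.symm

variable [DecidableEq ι] [Nonempty m] [Nonempty ι] {U : ι → m → ℝ} {h L : ℝ}

lemma sq_norm_scatter_inv_sub_one_le (hU : ∀ j, U j ⬝ᵥ U j = 1)
    (hS : NumRadiusLE (scatter 1 U - 1) (1 / 10)) (hh : 0 ≤ h)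
    (hH : NumRadiusLE (offDiagGram U) h)
    (hL : ∑ j, (U j ⬝ᵥ (scatter 1 U)⁻¹ *ᵥ U j - 1) ^ 2 ≤ L) :
    ‖scatter (fun j => (U j ⬝ᵥ (scatter 1 U)⁻¹ *ᵥ U j)⁻¹ - 1) U‖ ^ 2 ≤
      3 * ((Fintype.card m : ℝ) / Fintype.card ι) *
        ((Fintype.card m : ℝ) / Fintype.card ι * (1 + h) * L + L ^ 2 / Fintype.card ι) := by
  have hpd : (scatter 1 U).PosDef := posDef_of_mul_dotProduct_self_le (scatter_isSymm 1 U)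
    (by norm_num) hS.mul_dotProduct_self_le_of_sub_one
  set p : ι → ℝ := fun j => U j ⬝ᵥ (scatter 1 U)⁻¹ *ᵥ U j
  have hp : ∀ j, 10 / 11 ≤ p j := fun j => by
    have := dotProduct_self_le_mul_dotProduct_inv_mulVec hpd hS.dotProduct_mulVec_le_of_sub_one
      (U j)
    rw [hU] at this
    linarith
  have hL0 : 0 ≤ L := (Finset.sum_nonneg fun _ _ => sq_nonneg _).trans hL
  have hxx : (fun j => (p j)⁻¹ - 1) ⬝ᵥ (fun j => (p j)⁻¹ - 1) ≤ 121 / 100 * L := by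
    simp only [dotProduct, ← sq]
    linarith [sum_sq_inv_sub_one_le hp]
  have hsum : (∑ j, ((p j)⁻¹ - 1)) ^ 2 ≤ (11 / 10 * L) ^ 2 := by
    rw [← sq_abs]
    gcongr
    exact (abs_sum_inv_sub_one_le hp (sum_dotProduct_inv_scatter_mulVec_sub_one hpd)).trans
      (by linarith)
  set δ : ℝ := Fintype.card m / Fintype.card ι
  calc _ ≤ 2 * δ * (δ * (1 + h) * (121 / 100 * L) + (11 / 10 * L) ^ 2 / Fintype.card ι) :=
        (sq_norm_scatter_le hU hH _).trans (by gcongr)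
    _ = 242 / 100 * (δ * (δ * (1 + h) * L + L ^ 2 / Fintype.card ι)) := by ring
    _ ≤ 3 * (δ * (δ * (1 + h) * L + L ^ 2 / Fintype.card ι)) := by gcongr; norm_num
    _ = _ := by ring

theorem IsTylerFixedPoint.numRadiusLE_sub_scatter_of_offDiagGram {T : Matrix m m ℝ}
    (hTU : IsTylerFixedPoint U T) (hT : T.PosDef) (hTtr : T.trace = Fintype.card m)
    (hU : ∀ j, U j ⬝ᵥ U j = 1) (hS : NumRadiusLE (scatter 1 U - 1) (1 / 10)) (hh : 0 ≤ h)
    (hH : NumRadiusLE (offDiagGram U) h)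
    (hδ : (Fintype.card m : ℝ) / Fintype.card ι * (1 + h) ≤ 1 / 5)
    (hL : ∑ j, (U j ⬝ᵥ (scatter 1 U)⁻¹ *ᵥ U j - 1) ^ 2 ≤ L) {e : ℝ} (he0 : 0 ≤ e)
    (he1 : e ≤ 9 / 160)
    (he : 3 * ((Fintype.card m : ℝ) / Fintype.card ι) *
      ((Fintype.card m : ℝ) / Fintype.card ι * (1 + h) * L + L ^ 2 / Fintype.card ι) ≤ e ^ 2) :
    NumRadiusLE (T - scatter 1 U) (40 * e) := by
  have hθ : TracelessEnergyLE U (1 / 5) := fun C hC hCtr =>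
    (tracelessEnergyLE_of_offDiagGram hU hh hH C hC hCtr).trans
      (mul_le_mul_of_nonneg_right hδ (sq_nonneg _))
  exact hTU.numRadiusLE_sub_scatter hT hTtr hU hS hθ he1
    (abs_le_of_sq_le_sq' ((sq_norm_scatter_inv_sub_one_le hU hS hh hH hL).trans he) he0).2

end InverseWeights

/-! ### Leave-one-out comparison -/

lemma abs_div_one_add_mul_sub_le {δ q t : ℝ} (hδ : 0 ≤ δ) (hq : 0 ≤ q) (ht : 0 ≤ t) :
    |q / (1 + δ * q) - t / (1 + δ * t)| ≤ |q - t| := by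
  have hquot : q / (1 + δ * q) - t / (1 + δ * t) = (q - t) / ((1 + δ * q) * (1 + δ * t)) := by
    field_simp
    ring
  rw [hquot, abs_div, abs_of_pos (by positivity : 0 < (1 + δ * q) * (1 + δ * t))]
  exact div_le_self (abs_nonneg _)
    (one_le_mul_of_one_le_of_one_le (le_add_of_nonneg_right (by positivity))
      (le_add_of_nonneg_right (by positivity)))

section RankOneUpdate

variable {m : Type*} [Fintype m] [DecidableEq m] {M : Matrix m m ℝ} {u : m → ℝ}
  {δ a b : ℝ}

lemma inv_add_smul_vecMulVec (hM : M.PosDef) (hδ : 0 ≤ δ) (u : m → ℝ) :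
    (M + δ • vecMulVec u u)⁻¹ =
      M⁻¹ - (δ / (1 + δ * (u ⬝ᵥ M⁻¹ *ᵥ u))) • vecMulVec (M⁻¹ *ᵥ u) (M⁻¹ *ᵥ u) := by
  have hMu := isUnit_det_of_posDef hM
  have hq : 0 ≤ u ⬝ᵥ M⁻¹ *ᵥ u := by simpa using hM.inv.posSemidef.dotProduct_mulVec_nonneg u
  have hMinv : (M⁻¹)ᵀ = M⁻¹ := hM.inv.isHermitian
  have hmul_inv : (M + δ • vecMulVec u u) * M⁻¹ = 1 + δ • vecMulVec u (M⁻¹ *ᵥ u) := by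
    rw [Matrix.add_mul, Matrix.mul_nonsing_inv _ hMu, Matrix.smul_mul, vecMulVec_mul,
      ← mulVec_transpose, hMinv]
  have hmulVec : (M + δ • vecMulVec u u) *ᵥ (M⁻¹ *ᵥ u) = (1 + δ * (u ⬝ᵥ M⁻¹ *ᵥ u)) • u := by
    rw [add_mulVec, mulVec_mulVec, Matrix.mul_nonsing_inv _ hMu, one_mulVec, smul_mulVec,
      vecMulVec_mulVec, add_smul, one_smul, mul_smul, op_smul_eq_smul]
  refine inv_eq_right_inv ?_
  rw [Matrix.mul_sub, hmul_inv, Matrix.mul_smul, mul_vecMulVec, hmulVec, smul_vecMulVec,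
    smul_smul, div_mul_cancel₀ _ (by positivity), add_sub_cancel_right]

lemma dotProduct_inv_add_smul_vecMulVec_mulVec (hM : M.PosDef) (hδ : 0 ≤ δ) (u : m → ℝ) :
    u ⬝ᵥ (M + δ • vecMulVec u u)⁻¹ *ᵥ u =
      u ⬝ᵥ M⁻¹ *ᵥ u / (1 + δ * (u ⬝ᵥ M⁻¹ *ᵥ u)) := by
  have hq : 0 ≤ u ⬝ᵥ M⁻¹ *ᵥ u := by simpa using hM.inv.posSemidef.dotProduct_mulVec_nonneg u
  rw [inv_add_smul_vecMulVec hM hδ, sub_mulVec, dotProduct_sub, smul_mulVec, dotProduct_smul,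
    dotProduct_vecMulVec_mulVec, dotProduct_comm (M⁻¹ *ᵥ u), smul_eq_mul]
  field_simp
  ring

lemma abs_trace_inv_sub_trace_inv_add_le (hM : M.PosDef) (hδ : 0 ≤ δ) (u : m → ℝ) :
    |M⁻¹.trace - (M + δ • vecMulVec u u)⁻¹.trace| ≤ δ * ((M⁻¹ *ᵥ u) ⬝ᵥ (M⁻¹ *ᵥ u)) := by
  have hq : 0 ≤ u ⬝ᵥ M⁻¹ *ᵥ u := by simpa using hM.inv.posSemidef.dotProduct_mulVec_nonneg u
  have hx := dotProduct_self_nonneg (M⁻¹ *ᵥ u)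
  rw [inv_add_smul_vecMulVec hM hδ, trace_sub, trace_smul, trace_vecMulVec, smul_eq_mul,
    sub_sub_cancel, abs_of_nonneg (by positivity)]
  gcongr
  exact div_le_self hδ (le_add_of_nonneg_right (by positivity))

lemma inv_mulVec_dotProduct_self_le_of_mul_le (hM : M.PosDef) (ha : 0 < a)
    (h : ∀ v, a * (v ⬝ᵥ v) ≤ v ⬝ᵥ M *ᵥ v) (v : m → ℝ) :
    (M⁻¹ *ᵥ v) ⬝ᵥ (M⁻¹ *ᵥ v) ≤ (a ^ 2)⁻¹ * (v ⬝ᵥ v) := by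
  set w := M⁻¹ *ᵥ v with hw
  have hMw : M *ᵥ w = v := by
    rw [hw, mulVec_mulVec, Matrix.mul_nonsing_inv _ (isUnit_det_of_posDef hM), one_mulVec]
  have hv0 := dotProduct_self_nonneg v
  rcases (dotProduct_self_nonneg w).eq_or_lt with h0 | hpos
  · rw [← h0]; positivity
  have hlow : a * (w ⬝ᵥ w) ≤ w ⬝ᵥ v := by simpa only [hMw] using h w
  have hsq : (w ⬝ᵥ w) * (a ^ 2 * (w ⬝ᵥ w)) ≤ (w ⬝ᵥ w) * (v ⬝ᵥ v) :=
    calc (w ⬝ᵥ w) * (a ^ 2 * (w ⬝ᵥ w)) = (a * (w ⬝ᵥ w)) ^ 2 := by ring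
      _ ≤ (w ⬝ᵥ v) ^ 2 := by gcongr
      _ ≤ _ := sq_dotProduct_le w v
  rw [inv_mul_eq_div, le_div_iff₀' (by positivity)]
  exact le_of_mul_le_mul_left hsq hpos

lemma norm_inv_sub_one_le (hM : M.PosDef) (ha : 0 ≤ a)
    (h : ∀ v, (M⁻¹ *ᵥ v) ⬝ᵥ (M⁻¹ *ᵥ v) ≤ a ^ 2 * (v ⬝ᵥ v)) :
    ‖M⁻¹ - 1‖ ≤ a * ‖M - 1‖ := by
  have hfactor : M⁻¹ - 1 = M⁻¹ * (1 - M) := by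
    rw [Matrix.mul_sub, Matrix.nonsing_inv_mul _ (isUnit_det_of_posDef hM), Matrix.mul_one]
  refine (abs_le_of_sq_le_sq' ?_ (by positivity)).2
  rw [hfactor, mul_pow, norm_sub_rev M 1]
  exact sq_frobenius_norm_mul_le_of_mulVec_le h _

lemma sq_dotProduct_inv_add_smul_vecMulVec_mulVec_sub_le (hM : M.PosDef) (hδ : 0 ≤ δ)
    (hb : (M⁻¹ *ᵥ u) ⬝ᵥ (M⁻¹ *ᵥ u) ≤ b) {τ : ℝ}
    (hτ : τ = (M + δ • vecMulVec u u)⁻¹.trace / Fintype.card m) :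
    (u ⬝ᵥ (M + δ • vecMulVec u u)⁻¹ *ᵥ u - τ / (1 + δ * τ)) ^ 2 ≤
      2 * (u ⬝ᵥ M⁻¹ *ᵥ u - M⁻¹.trace / Fintype.card m) ^ 2 +
        2 * (δ * b / Fintype.card m) ^ 2 := by
  have hτ0 : 0 ≤ τ := hτ ▸ div_nonneg (hM.add_posSemidef
    ((posSemidef_vecMulVec_self_star u).smul hδ)).inv.posSemidef.trace_nonneg (Nat.cast_nonneg _)
  have hq : 0 ≤ u ⬝ᵥ M⁻¹ *ᵥ u := by simpa using hM.inv.posSemidef.dotProduct_mulVec_nonneg u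
  rw [dotProduct_inv_add_smul_vecMulVec_mulVec hM hδ]
  set q := u ⬝ᵥ M⁻¹ *ᵥ u
  set t := M⁻¹.trace / Fintype.card m with ht
  have hτt : |t - τ| ≤ δ * b / Fintype.card m := by
    rw [ht, hτ, ← sub_div, abs_div, Nat.abs_cast]
    gcongr
    exact (abs_trace_inv_sub_trace_inv_add_le hM hδ u).trans (by gcongr)
  calc (q / (1 + δ * q) - τ / (1 + δ * τ)) ^ 2 ≤ (q - τ) ^ 2 :=
        sq_le_sq.2 (abs_div_one_add_mul_sub_le hδ hq hτ0)
    _ = ((q - t) + (t - τ)) ^ 2 := by ring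
    _ ≤ 2 * ((q - t) ^ 2 + (t - τ) ^ 2) := add_sq_le
    _ = 2 * (q - t) ^ 2 + 2 * |t - τ| ^ 2 := by rw [sq_abs]; ring
    _ ≤ _ := by gcongr

end RankOneUpdate

section LeaveOneOut

variable {m ι : Type*} [Fintype m] [Fintype ι] [DecidableEq ι]

/-- The scatter matrix of the sample with the `j`-th vector removed, still normalized by the full
sample size. -/
noncomputable def leaveOneOut (U : ι → m → ℝ) (j : ι) : Matrix m m ℝ :=
  scatter (fun i => if i = j then 0 else 1) U

lemma scatter_one_eq_leaveOneOut_add (U : ι → m → ℝ) (j : ι) :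
    scatter 1 U = leaveOneOut U j +
      ((Fintype.card m : ℝ) / Fintype.card ι) • vecMulVec (U j) (U j) := by
  have h : scatter (Pi.single j 1) U =
      ((Fintype.card m : ℝ) / Fintype.card ι) • vecMulVec (U j) (U j) := by
    simp [scatter, Pi.single_apply, ite_smul]
  rw [← h, ← sub_eq_iff_eq_add, ← scatter_sub, leaveOneOut]
  congr 1
  ext i
  by_cases hij : i = j <;> simp [hij]

lemma mul_dotProduct_self_le_leaveOneOut {U : ι → m → ℝ} (hU : ∀ j, U j ⬝ᵥ U j = 1) {a : ℝ}
    (ha : ∀ v, a * (v ⬝ᵥ v) ≤ v ⬝ᵥ scatter 1 U *ᵥ v) (j : ι) (v : m → ℝ) :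
    (a - (Fintype.card m : ℝ) / Fintype.card ι) * (v ⬝ᵥ v) ≤ v ⬝ᵥ leaveOneOut U j *ᵥ v := by
  have h := ha v
  have hproj : (U j ⬝ᵥ v) ^ 2 ≤ v ⬝ᵥ v := by simpa [hU] using sq_dotProduct_le (U j) v
  rw [scatter_one_eq_leaveOneOut_add U j, add_mulVec, dotProduct_add, smul_mulVec,
    dotProduct_smul, dotProduct_vecMulVec_mulVec, smul_eq_mul] at h
  have := mul_le_mul_of_nonneg_left hproj
    (by positivity : 0 ≤ (Fintype.card m : ℝ) / Fintype.card ι)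
  linarith

variable [DecidableEq m]

open Classical in
/-- The squared deviation of `Uⱼᵗ M⁻¹ Uⱼ` from `tr M⁻¹ / d`, where `M` is the leave-one-out scatter
matrix. It is cut off where `M` is badly conditioned, so that it is integrable. -/
noncomputable def leaveOneOutDeviation (U : ι → m → ℝ) (j : ι) : ℝ :=
  if ‖(leaveOneOut U j)⁻¹ - 1‖ ≤ 2 * ‖leaveOneOut U j - 1‖ then
    (U j ⬝ᵥ traceless ((leaveOneOut U j)⁻¹ - 1) *ᵥ U j) ^ 2 else 0

variable [Nonempty m] {U : ι → m → ℝ}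

lemma leaveOneOutDeviation_eq (hU : ∀ j, U j ⬝ᵥ U j = 1) {j : ι}
    (hcond : ‖(leaveOneOut U j)⁻¹ - 1‖ ≤ 2 * ‖leaveOneOut U j - 1‖) :
    leaveOneOutDeviation U j = (U j ⬝ᵥ (leaveOneOut U j)⁻¹ *ᵥ U j -
      (leaveOneOut U j)⁻¹.trace / Fintype.card m) ^ 2 := by
  have hd : (Fintype.card m : ℝ) ≠ 0 := by exact_mod_cast Fintype.card_ne_zero
  rw [leaveOneOutDeviation, if_pos hcond, dotProduct_traceless_mulVec, sub_mulVec, one_mulVec,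
    dotProduct_sub, hU, trace_sub, trace_one]
  field_simp
  ring

lemma sq_dotProduct_inv_scatter_mulVec_sub_le (hU : ∀ j, U j ⬝ᵥ U j = 1)
    (hδ : (Fintype.card m : ℝ) / Fintype.card ι ≤ 1 / 10)
    (hS : NumRadiusLE (scatter 1 U - 1) (1 / 10)) (j : ι) {τ : ℝ}
    (hτ : τ = (scatter 1 U)⁻¹.trace / Fintype.card m) :
    (U j ⬝ᵥ (scatter 1 U)⁻¹ *ᵥ U j -
        τ / (1 + (Fintype.card m : ℝ) / Fintype.card ι * τ)) ^ 2 ≤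
      2 * leaveOneOutDeviation U j + 8 / (Fintype.card ι : ℝ) ^ 2 := by
  have hlow : ∀ v, 8 / 10 * (v ⬝ᵥ v) ≤ v ⬝ᵥ leaveOneOut U j *ᵥ v := fun v =>
    (mul_le_mul_of_nonneg_right (by linarith) (dotProduct_self_nonneg v)).trans
      (mul_dotProduct_self_le_leaveOneOut hU hS.mul_dotProduct_self_le_of_sub_one j v)
  have hpd : (leaveOneOut U j).PosDef :=
    posDef_of_mul_dotProduct_self_le (scatter_isSymm _ U) (by norm_num) hlow
  have hinv : ∀ v, ((leaveOneOut U j)⁻¹ *ᵥ v) ⬝ᵥ ((leaveOneOut U j)⁻¹ *ᵥ v) ≤ 2 * (v ⬝ᵥ v) :=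
    fun v => (inv_mulVec_dotProduct_self_le_of_mul_le hpd (by norm_num) hlow v).trans
      (mul_le_mul_of_nonneg_right (by norm_num) (dotProduct_self_nonneg v))
  have hcond : ‖(leaveOneOut U j)⁻¹ - 1‖ ≤ 2 * ‖leaveOneOut U j - 1‖ :=
    norm_inv_sub_one_le hpd (by norm_num) fun v =>
      (hinv v).trans (mul_le_mul_of_nonneg_right (by norm_num) (dotProduct_self_nonneg v))
  rw [scatter_one_eq_leaveOneOut_add U j] at hτ ⊢
  rw [leaveOneOutDeviation_eq hU hcond]
  refine (sq_dotProduct_inv_add_smul_vecMulVec_mulVec_sub_le hpd (by positivity)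
    ((hinv (U j)).trans_eq (by rw [hU, mul_one])) hτ).trans_eq ?_
  have hd : (Fintype.card m : ℝ) ≠ 0 := by exact_mod_cast Fintype.card_ne_zero
  field_simp
  ring

lemma sum_sq_dotProduct_inv_scatter_mulVec_sub_one_le [Nonempty ι] (hU : ∀ j, U j ⬝ᵥ U j = 1)
    (hδ : (Fintype.card m : ℝ) / Fintype.card ι ≤ 1 / 10)
    (hS : NumRadiusLE (scatter 1 U - 1) (1 / 10)) :
    ∑ j, (U j ⬝ᵥ (scatter 1 U)⁻¹ *ᵥ U j - 1) ^ 2 ≤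
      2 * ∑ j, leaveOneOutDeviation U j + 8 / Fintype.card ι := by
  have hn : (Fintype.card ι : ℝ) ≠ 0 := by exact_mod_cast Fintype.card_ne_zero
  have hpd := posDef_of_mul_dotProduct_self_le (scatter_isSymm 1 U) (by norm_num)
    hS.mul_dotProduct_self_le_of_sub_one
  set τ := (scatter 1 U)⁻¹.trace / Fintype.card m with hτ
  calc ∑ j, (U j ⬝ᵥ (scatter 1 U)⁻¹ *ᵥ U j - 1) ^ 2
      ≤ ∑ j, (U j ⬝ᵥ (scatter 1 U)⁻¹ *ᵥ U j - 1 -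
          (τ / (1 + (Fintype.card m : ℝ) / Fintype.card ι * τ) - 1)) ^ 2 :=
        sum_sq_le_sum_sub_sq_of_sum_eq_zero (sum_dotProduct_inv_scatter_mulVec_sub_one hpd) _
    _ ≤ ∑ j, (2 * leaveOneOutDeviation U j + 8 / (Fintype.card ι : ℝ) ^ 2) := by
        gcongr with j
        rw [sub_sub_sub_cancel_right]
        exact sq_dotProduct_inv_scatter_mulVec_sub_le hU hδ hS j hτ
    _ = _ := by
        rw [Finset.sum_add_distrib, ← Finset.mul_sum, Finset.sum_const, Finset.card_univ,
          nsmul_eq_mul]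
        field_simp

end LeaveOneOut

/-! ### Reduction to directions -/

section Direction

variable {m : Type*} [Fintype m]

/-- The unit vector in the direction of `x`. At `x = 0` it is a fixed unit vector, so that the
identity `x = |x| • direction x` and `|direction x| = 1` hold without exception. -/
noncomputable def direction (x : m → ℝ) : m → ℝ :=
  if x ⬝ᵥ x = 0 then fun _ => (√(Fintype.card m))⁻¹ else (√(x ⬝ᵥ x))⁻¹ • x

lemma sqrt_smul_direction (x : m → ℝ) : √(x ⬝ᵥ x) • direction x = x := by
  unfold direction
  split_ifs with hx
  · simp [dotProduct_self_eq_zero.1 hx]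
  · have hpos := (dotProduct_self_nonneg x).lt_of_ne' hx
    rw [smul_smul, mul_inv_cancel₀ (Real.sqrt_pos.2 hpos).ne', one_smul]

lemma direction_dotProduct_self [Nonempty m] (x : m → ℝ) : direction x ⬝ᵥ direction x = 1 := by
  unfold direction
  split_ifs with hx
  · simp [dotProduct, ← mul_inv]
  · have hpos := (dotProduct_self_nonneg x).lt_of_ne' hx
    rw [smul_dotProduct, dotProduct_smul, smul_eq_mul, smul_eq_mul, ← mul_assoc, ← mul_inv,
      Real.mul_self_sqrt hpos.le, inv_mul_cancel₀ hx]

lemma vecMulVec_self_eq_smul_direction (x : m → ℝ) :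
    vecMulVec x x = (x ⬝ᵥ x) • vecMulVec (direction x) (direction x) := by
  conv_lhs => rw [← sqrt_smul_direction x]
  rw [smul_vecMulVec, vecMulVec_smul, smul_smul, Real.mul_self_sqrt (dotProduct_self_nonneg x)]

lemma dotProduct_mulVec_eq_mul_direction (A : Matrix m m ℝ) (x : m → ℝ) :
    x ⬝ᵥ A *ᵥ x = (x ⬝ᵥ x) * (direction x ⬝ᵥ A *ᵥ direction x) := by
  conv_lhs => rw [← sqrt_smul_direction x]
  rw [mulVec_smul, smul_dotProduct, dotProduct_smul, smul_smul, smul_eq_mul,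
    Real.mul_self_sqrt (dotProduct_self_nonneg x)]

variable {ι : Type*} [Fintype ι]

/-- The sample covariance matrix `(1/n) ∑ⱼ Xⱼ Xⱼᵗ`. -/
noncomputable def sampleCov (X : ι → m → ℝ) : Matrix m m ℝ :=
  (Fintype.card ι : ℝ)⁻¹ • ∑ j, vecMulVec (X j) (X j)

/-- The part `(1/n) ∑ⱼ (|Xⱼ|² - d) Uⱼ Uⱼᵗ` of the sample covariance matrix that is due to the
fluctuation of the radii `|Xⱼ|`. -/
noncomputable def radialScatter (X : ι → m → ℝ) : Matrix m m ℝ :=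
  scatter (fun j => X j ⬝ᵥ X j / Fintype.card m - 1) fun j => direction (X j)

lemma sampleCov_eq_scatter_add [Nonempty m] (X : ι → m → ℝ) :
    sampleCov X = scatter 1 (fun j => direction (X j)) + radialScatter X := by
  have hd : (Fintype.card m : ℝ) ≠ 0 := by exact_mod_cast Fintype.card_ne_zero
  have hcov : sampleCov X =
      scatter (fun j => X j ⬝ᵥ X j / Fintype.card m) fun j => direction (X j) := by
    simp only [sampleCov, scatter, Finset.smul_sum, smul_smul]
    refine Finset.sum_congr rfl fun j _ => ?_
    rw [vecMulVec_self_eq_smul_direction (X j), smul_smul]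
    congr 1
    field_simp
  have hrad : radialScatter X =
      scatter (fun j => X j ⬝ᵥ X j / Fintype.card m) (fun j => direction (X j)) -
        scatter 1 fun j => direction (X j) := scatter_sub _ 1 _
  rw [hcov, hrad, add_sub_cancel]

end Direction

section Regular

variable {m ι : Type*} [Fintype m] [DecidableEq m] [Fintype ι]

lemma IsTylerFixedPoint.direction {X : ι → m → ℝ} (hX : ∀ j, X j ≠ 0)
    {T : Matrix m m ℝ} (hT : IsTylerFixedPoint X T) :
    IsTylerFixedPoint (fun j => direction (X j)) T := by
  rw [IsTylerFixedPoint] at hT ⊢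
  conv_lhs => rw [hT]
  unfold scatter
  congr 1
  refine Finset.sum_congr rfl fun j _ => ?_
  beta_reduce
  rw [vecMulVec_self_eq_smul_direction, dotProduct_mulVec_eq_mul_direction, smul_smul, mul_inv,
    mul_right_comm, inv_mul_cancel₀ (dotProduct_self_pos (hX j)).ne', one_mul]

variable [DecidableEq ι]

/-- The deterministic conditions on a sample under which Tyler's estimator is close to the sample
covariance matrix. The parameter `κ` is small, while `L` is of constant order. -/
structure IsRegularSample (X : ι → m → ℝ) (κ L : ℝ) : Prop where
  radial : NumRadiusLE (radialScatter X) (κ * √((Fintype.card m : ℝ) / Fintype.card ι))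
  cov : NumRadiusLE (sampleCov X - 1) (1 / 20)
  gram : NumRadiusLE (offDiagGram fun j => direction (X j))
    (κ * ((Fintype.card ι : ℝ) / Fintype.card m))
  deviation : 2 * ∑ j, leaveOneOutDeviation (fun j => direction (X j)) j +
    8 / Fintype.card ι ≤ L

variable [Nonempty m] {X : ι → m → ℝ} {κ L : ℝ}

lemma IsRegularSample.numRadiusLE_scatter_sub_one (hX : IsRegularSample X κ L) (hκ : κ ≤ 1 / 20)
    (hδ : (Fintype.card m : ℝ) / Fintype.card ι ≤ 1) :
    NumRadiusLE (scatter 1 (fun j => direction (X j)) - 1) (1 / 10) := by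
  have hrad : NumRadiusLE (radialScatter X) (1 / 20) := hX.radial.mono <|
    (mul_le_mul hκ (Real.sqrt_le_one.2 hδ) (Real.sqrt_nonneg _) (by norm_num)).trans_eq (mul_one _)
  have h := hX.cov.sub hrad
  rw [sampleCov_eq_scatter_add, add_sub_right_comm, add_sub_cancel_right] at h
  exact h.mono (by norm_num)

theorem IsRegularSample.numRadiusLE_sub_sampleCov [Nonempty ι] (hX : IsRegularSample X κ L)
    (hX0 : ∀ j, X j ≠ 0) {T : Matrix m m ℝ} (hTX : IsTylerFixedPoint X T) (hT : T.PosDef)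
    (hTtr : T.trace = Fintype.card m) (hκ0 : 0 ≤ κ) (hκ : κ ≤ 1 / 20)
    (hδ : (Fintype.card m : ℝ) / Fintype.card ι ≤ 1 / 10) {e : ℝ} (he0 : 0 ≤ e)
    (he1 : e ≤ 9 / 160)
    (he : 3 * (((Fintype.card m : ℝ) / Fintype.card ι + κ) * L + L ^ 2 / Fintype.card ι) ≤
      e ^ 2) :
    NumRadiusLE (T - sampleCov X)
      ((40 * e + κ) * √((Fintype.card m : ℝ) / Fintype.card ι)) := by
  have hU : ∀ j, direction (X j) ⬝ᵥ direction (X j) = 1 := fun j => direction_dotProduct_self _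
  have hS := hX.numRadiusLE_scatter_sub_one hκ (hδ.trans (by norm_num))
  have hL := (sum_sq_dotProduct_inv_scatter_mulVec_sub_one_le hU hδ hS).trans hX.deviation
  have hδh : (Fintype.card m : ℝ) / Fintype.card ι *
      (1 + κ * ((Fintype.card ι : ℝ) / Fintype.card m)) = Fintype.card m / Fintype.card ι + κ := by
    field_simp
  set δ : ℝ := Fintype.card m / Fintype.card ι
  have hδ0 : 0 < δ := by positivity
  have hsδ : √δ ≤ 1 := Real.sqrt_le_one.2 (hδ.trans (by norm_num))
  have htyler : NumRadiusLE (T - scatter 1 fun j => direction (X j)) (40 * (e * √δ)) := by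
    refine (hTX.direction hX0).numRadiusLE_sub_scatter_of_offDiagGram hT hTtr hU hS
      (by positivity) hX.gram (by rw [hδh]; linarith) hL (by positivity)
      ((mul_le_of_le_one_right he0 hsδ).trans he1) ?_
    rw [hδh, mul_pow, Real.sq_sqrt hδ0.le]
    calc _ = 3 * ((δ + κ) * L + L ^ 2 / Fintype.card ι) * δ := by ring
      _ ≤ _ := by gcongr
  have h := htyler.sub hX.radial
  rw [sub_sub, ← sampleCov_eq_scatter_add] at h
  exact h.mono (by linarith)

end Regular

theorem specNorm_sqrt_smul_sub_le {d n : ℕ} [NeZero d] [NeZero n] {X : Fin n → Fin d → ℝ}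
    {κ L : ℝ} (hX : IsRegularSample X κ L) (hX0 : ∀ j, X j ≠ 0)
    {T : Matrix (Fin d) (Fin d) ℝ} (hT : IsTyler X T) (hκ0 : 0 ≤ κ) (hκ : κ ≤ 1 / 20)
    (hδ : (d : ℝ) / n ≤ 1 / 10) {e : ℝ} (he0 : 0 ≤ e) (he1 : e ≤ 9 / 160)
    (he : 3 * (((d : ℝ) / n + κ) * L + L ^ 2 / n) ≤ e ^ 2) :
    specNorm (√((n : ℝ) / d) • (T - 1) -
      √((n : ℝ) / d) • ((n : ℝ)⁻¹ • ∑ j, vecMulVec (X j) (X j) - 1)) ≤ 40 * e + κ := by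
  obtain ⟨hTpd, hTtr, hTfix⟩ := hT
  have hd : (d : ℝ) ≠ 0 := by exact_mod_cast NeZero.ne d
  have hn : (n : ℝ) ≠ 0 := by exact_mod_cast NeZero.ne n
  have hmain := hX.numRadiusLE_sub_sampleCov hX0
    (show IsTylerFixedPoint X T by simpa [IsTylerFixedPoint, scatter] using hTfix) hTpd
    (by simpa using hTtr) hκ0 hκ (by simpa using hδ) he0 he1 (by simpa using he)
  simp only [sampleCov, Fintype.card_fin] at hmain
  have hscale : √((n : ℝ) / d) * √((d : ℝ) / n) = 1 := by
    rw [← Real.sqrt_mul (by positivity), div_mul_div_cancel₀ hd, div_self hn, Real.sqrt_one]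
  rw [← smul_sub, sub_sub_sub_cancel_right]
  refine specNorm_le_of_numRadiusLE (by positivity) ((hmain.smul √((n : ℝ) / d)).mono (le_of_eq ?_))
  rw [abs_of_nonneg (Real.sqrt_nonneg _), mul_left_comm, hscale, mul_one]

/-! ### Isotropy of the standard normal distribution -/

section Isotropy

variable {m : Type*} [Fintype m]

variable (m) in
/-- The standard normal distribution `N_d(0, I)` on `m → ℝ`; Mathlib's `stdGaussian` lives on
`EuclideanSpace ℝ m` instead. -/
noncomputable abbrev stdNormal : Measure (m → ℝ) := Measure.pi fun _ : m => gaussianReal 0 1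

lemma measurable_dotProduct_self : Measurable fun x : m → ℝ => x ⬝ᵥ x := by
  unfold dotProduct
  fun_prop

lemma measurable_direction : Measurable (direction : (m → ℝ) → m → ℝ) := by
  have h := measurable_dotProduct_self (m := m)
  exact Measurable.ite (h (measurableSet_singleton 0)) measurable_const
    ((Real.continuous_sqrt.measurable.comp h).inv.smul measurable_id)

lemma measurable_dotProduct_direction (p : m → ℝ) : Measurable fun x : m → ℝ => p ⬝ᵥ direction x :=
  Finset.measurable_sum _ fun i _ =>
    measurable_const.mul ((measurable_pi_apply i).comp measurable_direction)

lemma ae_stdNormal_ne_zero [Nonempty m] : ∀ᵐ x ∂stdNormal m, x ≠ 0 := by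
  have : NullSingletonClass (gaussianReal 0 1) := nullSingletonClass_gaussianReal one_ne_zero
  have : NullSingletonClass (stdNormal m) := Measure.pi_nullSingletonClass (Classical.arbitrary m)
  exact compl_mem_ae_iff.2 (measure_singleton _)

lemma measurePreserving_linearIsometryEquiv
    (f : EuclideanSpace ℝ m ≃ₗᵢ[ℝ] EuclideanSpace ℝ m) :
    MeasurePreserving ((MeasurableEquiv.toLp 2 (m → ℝ)).trans
      (f.toHomeomorph.toMeasurableEquiv.trans (MeasurableEquiv.toLp 2 (m → ℝ)).symm))
      (stdNormal m) (stdNormal m) := by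
  have hLp : MeasurePreserving (MeasurableEquiv.toLp 2 (m → ℝ)) (stdNormal m)
      (stdGaussian (EuclideanSpace ℝ m)) := ⟨MeasurableEquiv.measurable _, map_pi_eq_stdGaussian⟩
  have hf : MeasurePreserving f.toHomeomorph.toMeasurableEquiv
      (stdGaussian (EuclideanSpace ℝ m)) (stdGaussian (EuclideanSpace ℝ m)) :=
    ⟨MeasurableEquiv.measurable _, stdGaussian_map f⟩
  exact hLp.trans (hf.trans (hLp.symm _))

lemma exists_measurePreserving_dotProduct_eq {p q : m → ℝ} (hpq : p ⬝ᵥ p = q ⬝ᵥ q) :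
    ∃ e : (m → ℝ) ≃ᵐ (m → ℝ), MeasurePreserving e (stdNormal m) (stdNormal m) ∧
      (∀ x, e x ⬝ᵥ e x = x ⬝ᵥ x) ∧ ∀ x, p ⬝ᵥ e x = q ⬝ᵥ x := by
  have hinner : ∀ x y : m → ℝ, inner ℝ (WithLp.toLp 2 x) (WithLp.toLp 2 y) = x ⬝ᵥ y := fun x y => by
    simp [EuclideanSpace.inner_eq_star_dotProduct, dotProduct_comm]
  have hnorm : ‖WithLp.toLp 2 q‖ = ‖WithLp.toLp 2 p‖ := by
    rw [← sq_eq_sq₀ (norm_nonneg _) (norm_nonneg _), ← real_inner_self_eq_norm_sq,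
      ← real_inner_self_eq_norm_sq, hinner, hinner, hpq]
  set f := Submodule.reflection (Submodule.span ℝ {WithLp.toLp 2 q - WithLp.toLp 2 p})ᗮ
  refine ⟨_, measurePreserving_linearIsometryEquiv f, fun x => ?_, fun x => ?_⟩
  · rw [← hinner, ← hinner x]
    exact f.inner_map_map _ _
  · rw [← hinner, ← hinner q]
    exact (congrArg (inner ℝ · _) (Submodule.reflection_sub hnorm).symm).trans (f.inner_map_map _ _)

lemma integral_comp_dotProduct_direction_eq [Nonempty m] (F : ℝ → ℝ → ℝ) {p q : m → ℝ}
    (hpq : p ⬝ᵥ p = q ⬝ᵥ q) :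
    ∫ x, F (x ⬝ᵥ x) (p ⬝ᵥ direction x) ∂stdNormal m =
      ∫ x, F (x ⬝ᵥ x) (q ⬝ᵥ direction x) ∂stdNormal m := by
  obtain ⟨e, he, hnorm, hdot⟩ := exists_measurePreserving_dotProduct_eq hpq
  rw [← he.integral_comp' (g := fun x => F (x ⬝ᵥ x) (p ⬝ᵥ direction x))]
  refine integral_congr_ae (ae_stdNormal_ne_zero.mono fun x hx => ?_)
  have hx' := dotProduct_self_eq_zero.not.2 hx
  simp only [direction, hnorm, if_neg hx', dotProduct_smul, hdot]

end Isotropy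

section DirectionMoments

variable {m : Type*} [Fintype m] [Nonempty m]

lemma sq_dotProduct_direction_le (p x : m → ℝ) : (p ⬝ᵥ direction x) ^ 2 ≤ p ⬝ᵥ p := by
  simpa [direction_dotProduct_self] using sq_dotProduct_le p (direction x)

lemma integrable_mul_sq_dotProduct_direction {g : ℝ → ℝ}
    (hg : Integrable (fun x => g (x ⬝ᵥ x)) (stdNormal m)) (p : m → ℝ) :
    Integrable (fun x => g (x ⬝ᵥ x) * (p ⬝ᵥ direction x) ^ 2) (stdNormal m) :=
  hg.mul_bdd (c := p ⬝ᵥ p)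
    ((measurable_dotProduct_direction p).pow_const 2).aestronglyMeasurable
    (.of_forall fun x => by simpa using sq_dotProduct_direction_le p x)

lemma integral_mul_sq_dotProduct_direction {g : ℝ → ℝ}
    (hg : Integrable (fun x => g (x ⬝ᵥ x)) (stdNormal m)) (p : m → ℝ) :
    ∫ x, g (x ⬝ᵥ x) * (p ⬝ᵥ direction x) ^ 2 ∂stdNormal m =
      p ⬝ᵥ p / Fintype.card m * ∫ x, g (x ⬝ᵥ x) ∂stdNormal m := by
  classical
  have hd : (Fintype.card m : ℝ) ≠ 0 := by exact_mod_cast Fintype.card_ne_zero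
  have hcoord : ∀ i, ∫ x, g (x ⬝ᵥ x) * (p ⬝ᵥ direction x) ^ 2 ∂stdNormal m =
      (p ⬝ᵥ p) * ∫ x, g (x ⬝ᵥ x) * (Pi.single i 1 ⬝ᵥ direction x) ^ 2 ∂stdNormal m := fun i => by
    have hpq : p ⬝ᵥ p = Pi.single i √(p ⬝ᵥ p) ⬝ᵥ Pi.single i √(p ⬝ᵥ p) := by
      simp [Real.mul_self_sqrt (dotProduct_self_nonneg p)]
    rw [integral_comp_dotProduct_direction_eq (fun s t => g s * t ^ 2) hpq,
      ← integral_const_mul]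
    refine integral_congr_ae (.of_forall fun x => ?_)
    simp only [single_dotProduct, one_mul, mul_pow, Real.sq_sqrt (dotProduct_self_nonneg p)]
    ring
  have hsum : ∑ i, ∫ x, g (x ⬝ᵥ x) * (Pi.single i 1 ⬝ᵥ direction x) ^ 2 ∂stdNormal m =
      ∫ x, g (x ⬝ᵥ x) ∂stdNormal m := by
    rw [← integral_finsetSum _ fun i _ => integrable_mul_sq_dotProduct_direction hg _]
    refine integral_congr_ae (.of_forall fun x => ?_)
    have hunit : ∑ i, direction x i ^ 2 = 1 := by
      simpa [dotProduct, sq] using direction_dotProduct_self x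
    simp only [single_dotProduct, one_mul, ← Finset.mul_sum, hunit, mul_one]
  have havg := Finset.sum_congr rfl fun i (_ : i ∈ Finset.univ) => hcoord i
  rw [Finset.sum_const, ← Finset.mul_sum, hsum, Finset.card_univ, nsmul_eq_mul] at havg
  rw [div_mul_eq_mul_div, eq_div_iff hd, mul_comm, havg]

lemma integral_mul_dotProduct_direction_mul {g : ℝ → ℝ}
    (hg : Integrable (fun x => g (x ⬝ᵥ x)) (stdNormal m)) (p q : m → ℝ) :
    ∫ x, g (x ⬝ᵥ x) * ((p ⬝ᵥ direction x) * (q ⬝ᵥ direction x)) ∂stdNormal m =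
      p ⬝ᵥ q / Fintype.card m * ∫ x, g (x ⬝ᵥ x) ∂stdNormal m := by
  have hpolar : ∀ x : m → ℝ, g (x ⬝ᵥ x) * ((p ⬝ᵥ direction x) * (q ⬝ᵥ direction x)) =
      (g (x ⬝ᵥ x) * ((p + q) ⬝ᵥ direction x) ^ 2 -
        g (x ⬝ᵥ x) * ((p - q) ⬝ᵥ direction x) ^ 2) / 4 := fun x => by
    rw [add_dotProduct, sub_dotProduct]
    ring
  simp only [hpolar]
  rw [integral_div, integral_sub (integrable_mul_sq_dotProduct_direction hg _)
    (integrable_mul_sq_dotProduct_direction hg _), integral_mul_sq_dotProduct_direction hg,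
    integral_mul_sq_dotProduct_direction hg]
  simp only [add_dotProduct, sub_dotProduct, dotProduct_add, dotProduct_sub, dotProduct_comm q p]
  ring

end DirectionMoments

section FourthMoments

variable {m : Type*} [Fintype m]

lemma exists_eq_sum_smul_vecMulVec [DecidableEq m] {A : Matrix m m ℝ} (hA : A.IsSymm) :
    ∃ (c : m → ℝ) (v : m → m → ℝ), (∀ k l, v k ⬝ᵥ v l = if k = l then 1 else 0) ∧
      A = ∑ k, c k • vecMulVec (v k) (v k) := by
  have hH : A.IsHermitian := hA
  refine ⟨hH.eigenvalues, fun k => (hH.eigenvectorBasis k).ofLp, fun k l => ?_, ?_⟩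
  · have h := orthonormal_iff_ite.1 hH.eigenvectorBasis.orthonormal l k
    rw [EuclideanSpace.inner_eq_star_dotProduct] at h
    simpa [eq_comm] using h
  · conv_lhs => rw [hH.spectral_theorem, Unitary.conjStarAlgAut_apply]
    ext i j
    rw [mul_apply]
    simp only [mul_diagonal, Matrix.sum_apply, Matrix.smul_apply, vecMulVec_apply, smul_eq_mul]
    exact Finset.sum_congr rfl fun k _ => by simp; ring

variable [Nonempty m]

lemma integrable_sq_mul_sq_dotProduct_direction (p q : m → ℝ) :
    Integrable (fun x => (p ⬝ᵥ direction x) ^ 2 * (q ⬝ᵥ direction x) ^ 2) (stdNormal m) := by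
  have hp : Integrable (fun x => (p ⬝ᵥ direction x) ^ 2) (stdNormal m) := by
    simpa using integrable_mul_sq_dotProduct_direction (g := fun _ => 1) (integrable_const _) p
  exact hp.mul_bdd (c := q ⬝ᵥ q)
    ((measurable_dotProduct_direction q).pow_const 2).aestronglyMeasurable
    (.of_forall fun x => by simpa using sq_dotProduct_direction_le q x)

lemma integral_dotProduct_direction_pow_four_eq_mul (p : m → ℝ) (i : m) :
    ∫ x, (p ⬝ᵥ direction x) ^ 4 ∂stdNormal m =
      (p ⬝ᵥ p) ^ 2 * ∫ x, direction x i ^ 4 ∂stdNormal m := by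
  classical
  have hpq : p ⬝ᵥ p = Pi.single i √(p ⬝ᵥ p) ⬝ᵥ Pi.single i √(p ⬝ᵥ p) := by
    simp [Real.mul_self_sqrt (dotProduct_self_nonneg p)]
  have hroot : √(p ⬝ᵥ p) ^ 4 = (p ⬝ᵥ p) ^ 2 := by
    rw [show 4 = 2 * 2 from rfl, pow_mul, Real.sq_sqrt (dotProduct_self_nonneg p)]
  rw [integral_comp_dotProduct_direction_eq (fun _ t => t ^ 4) hpq, ← integral_const_mul]
  simp only [single_dotProduct, mul_pow, hroot]

lemma integral_sq_mul_sq_dotProduct_direction_eq_mul (p q : m → ℝ) (i : m) :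
    ∫ x, (p ⬝ᵥ direction x) ^ 2 * (q ⬝ᵥ direction x) ^ 2 ∂stdNormal m =
      ((p ⬝ᵥ p) * (q ⬝ᵥ q) + 2 * (p ⬝ᵥ q) ^ 2) * ((∫ x, direction x i ^ 4 ∂stdNormal m) / 3) := by
  have hpolar : ∀ x : m → ℝ, (p ⬝ᵥ direction x) ^ 2 * (q ⬝ᵥ direction x) ^ 2 =
      (((p + q) ⬝ᵥ direction x) ^ 4 + ((p - q) ⬝ᵥ direction x) ^ 4
        - (2 * (p ⬝ᵥ direction x) ^ 4 + 2 * (q ⬝ᵥ direction x) ^ 4)) / 12 := fun x => by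
    rw [add_dotProduct, sub_dotProduct]
    ring
  have hint : ∀ r : m → ℝ, Integrable (fun x => (r ⬝ᵥ direction x) ^ 4) (stdNormal m) := fun r =>
    (integrable_sq_mul_sq_dotProduct_direction r r).congr (.of_forall fun x => by ring)
  simp only [hpolar]
  rw [integral_div, integral_sub ((hint _).fun_add (hint _))
    (((hint _).const_mul 2).fun_add ((hint _).const_mul 2)), integral_add (hint _) (hint _),
    integral_add ((hint _).const_mul 2) ((hint _).const_mul 2), integral_const_mul,
    integral_const_mul]
  simp only [integral_dotProduct_direction_pow_four_eq_mul _ i]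
  simp only [add_dotProduct, sub_dotProduct, dotProduct_add, dotProduct_sub, dotProduct_comm q p]
  ring

lemma integral_direction_pow_four (i : m) :
    (∫ x, direction x i ^ 4 ∂stdNormal m) / 3 =
      ((Fintype.card m : ℝ) * (Fintype.card m + 2))⁻¹ := by
  classical
  set a := (∫ x, direction x i ^ 4 ∂stdNormal m) / 3
  have hpair : ∀ k l : m, ∫ x, direction x k ^ 2 * direction x l ^ 2 ∂stdNormal m =
      (1 + 2 * if k = l then 1 else 0) * a := fun k l => by
    have h := integral_sq_mul_sq_dotProduct_direction_eq_mul (Pi.single k (1 : ℝ)) (Pi.single l 1) i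
    simpa [Pi.single_apply, eq_comm, a] using h
  have hint : ∀ k l : m,
      Integrable (fun x => direction x k ^ 2 * direction x l ^ 2) (stdNormal m) := fun k l => by
    simpa using integrable_sq_mul_sq_dotProduct_direction (Pi.single k (1 : ℝ)) (Pi.single l 1)
  have hunit : ∀ x : m → ℝ, ∑ k, ∑ l, direction x k ^ 2 * direction x l ^ 2 = 1 := fun x => by
    have h : ∑ k, direction x k ^ 2 = 1 := by
      simpa [dotProduct, sq] using direction_dotProduct_self x
    rw [← Finset.sum_mul_sum, h, one_mul]
  have htotal : ∑ k : m, ∑ l : m, (1 + 2 * if k = l then (1 : ℝ) else 0) * a = 1 := by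
    simp only [← hpair]
    simp_rw [← integral_finsetSum _ fun l _ => hint _ l]
    rw [← integral_finsetSum _ fun k _ => integrable_finsetSum _ fun l _ => hint k l]
    simp [hunit]
  refine eq_inv_of_mul_eq_one_left ?_
  rw [← htotal]
  simp [← Finset.sum_mul, Finset.sum_add_distrib]
  ring

lemma integral_sq_mul_sq_dotProduct_direction (p q : m → ℝ) :
    ∫ x, (p ⬝ᵥ direction x) ^ 2 * (q ⬝ᵥ direction x) ^ 2 ∂stdNormal m =
      ((p ⬝ᵥ p) * (q ⬝ᵥ q) + 2 * (p ⬝ᵥ q) ^ 2) *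
        ((Fintype.card m : ℝ) * (Fintype.card m + 2))⁻¹ := by
  rw [integral_sq_mul_sq_dotProduct_direction_eq_mul p q (Classical.arbitrary m),
    integral_direction_pow_four]

lemma integral_sq_dotProduct_mulVec_direction [DecidableEq m] {A : Matrix m m ℝ} (hA : A.IsSymm) :
    ∫ x, (direction x ⬝ᵥ A *ᵥ direction x) ^ 2 ∂stdNormal m =
      (A.trace ^ 2 + 2 * ‖A‖ ^ 2) * ((Fintype.card m : ℝ) * (Fintype.card m + 2))⁻¹ := by
  obtain ⟨c, v, horth, hsum⟩ := exists_eq_sum_smul_vecMulVec hA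
  have hquad : ∀ y, y ⬝ᵥ A *ᵥ y = ∑ k, c k * (v k ⬝ᵥ y) ^ 2 := fun y => by
    simp [hsum, sum_mulVec, dotProduct_sum, smul_mulVec, dotProduct_vecMulVec_mulVec]
  have htrace : A.trace = ∑ k, c k := by simp [hsum, trace_sum, horth]
  have hnorm : ‖A‖ ^ 2 = ∑ k, c k * c k := by
    rw [frobenius_norm_sq_eq_trace hA]
    nth_rw 2 [hsum]
    simp [Finset.mul_sum, trace_sum, trace_mul_vecMulVec, hquad, horth]
  have hexpand : ∀ x : m → ℝ, (direction x ⬝ᵥ A *ᵥ direction x) ^ 2 =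
      ∑ k, ∑ l, c k * c l * ((v k ⬝ᵥ direction x) ^ 2 * (v l ⬝ᵥ direction x) ^ 2) := fun x => by
    rw [hquad, sq, Finset.sum_mul_sum]
    exact Finset.sum_congr rfl fun k _ => Finset.sum_congr rfl fun l _ => by ring
  have hint := fun k l => (integrable_sq_mul_sq_dotProduct_direction (v k) (v l)).const_mul
    (c k * c l)
  simp only [hexpand]
  rw [integral_finsetSum _ fun k _ => integrable_finsetSum _ fun l _ => hint k l]
  simp_rw [integral_finsetSum _ fun l _ => hint _ l, integral_const_mul,
    integral_sq_mul_sq_dotProduct_direction, horth, ← mul_assoc, ← Finset.sum_mul]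
  congr 1
  simp [mul_add, Finset.sum_add_distrib, htrace, hnorm, sq, Finset.mul_sum, mul_comm]

lemma integral_sq_dotProduct_traceless_mulVec_direction_le [DecidableEq m] {A : Matrix m m ℝ}
    (hA : A.IsSymm) :
    ∫ x, (direction x ⬝ᵥ traceless A *ᵥ direction x) ^ 2 ∂stdNormal m ≤
      2 / (Fintype.card m : ℝ) ^ 2 * ‖A‖ ^ 2 := by
  have hd : (0 : ℝ) < Fintype.card m := by exact_mod_cast Fintype.card_pos
  rw [integral_sq_dotProduct_mulVec_direction (traceless_isSymm hA), trace_traceless, sq (0 : ℝ),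
    zero_mul, zero_add]
  have hle : ((Fintype.card m : ℝ) * (Fintype.card m + 2))⁻¹ ≤ ((Fintype.card m : ℝ) ^ 2)⁻¹ :=
    inv_anti₀ (by positivity) (by nlinarith)
  calc 2 * ‖traceless A‖ ^ 2 * ((Fintype.card m : ℝ) * (Fintype.card m + 2))⁻¹
      ≤ 2 * ‖A‖ ^ 2 * ((Fintype.card m : ℝ) ^ 2)⁻¹ := by
        gcongr
        exact norm_traceless_le hA
    _ = _ := by ring

end FourthMoments

/-! ### Integration over an i.i.d. sample by resampling one observation -/

section Resampling

variable {ι E : Type*} [Fintype ι] [DecidableEq ι] [MeasurableSpace E] {μ : Measure E}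
  [IsProbabilityMeasure μ]

variable (μ) in
lemma measurePreserving_update (j : ι) :
    MeasurePreserving (fun p : (ι → E) × E => Function.update p.1 j p.2)
      ((Measure.pi fun _ : ι => μ).prod μ) (Measure.pi fun _ : ι => μ) := by
  refine ⟨measurable_update', (Measure.pi_eq fun s hs => ?_).symm⟩
  have hpreimage : (fun p : (ι → E) × E => Function.update p.1 j p.2) ⁻¹' Set.univ.pi s =
      (Set.univ.pi (Function.update s j Set.univ)) ×ˢ s j := by
    ext p
    simp only [Set.mem_preimage, Set.mem_univ_pi, Set.mem_prod]
    refine ⟨fun h => ⟨fun i => ?_, by simpa using h j⟩, fun h i => ?_⟩ <;>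
      obtain rfl | hi := eq_or_ne i j
    · simp
    · simpa [hi] using h i
    · simpa using h.2
    · simpa [hi] using h.1 i
  rw [Measure.map_apply measurable_update' (.univ_pi hs), hpreimage, Measure.prod_prod,
    Measure.pi_pi, ← Finset.mul_prod_erase _ _ (Finset.mem_univ j),
    ← Finset.mul_prod_erase _ (fun i => μ (s i)) (Finset.mem_univ j), Function.update_self,
    measure_univ, one_mul, mul_comm]
  congr 1
  exact Finset.prod_congr rfl fun i hi => by rw [Function.update_of_ne (Finset.ne_of_mem_erase hi)]

lemma integrable_integral_update {F : (ι → E) → ℝ} (hF : Integrable F (Measure.pi fun _ => μ))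
    (j : ι) :
    Integrable (fun x => ∫ y, F (Function.update x j y) ∂μ) (Measure.pi fun _ => μ) :=
  ((measurePreserving_update μ j).integrable_comp_of_integrable hF).integral_prod_left

lemma integral_integral_update {F : (ι → E) → ℝ} (hF : Integrable F (Measure.pi fun _ => μ))
    (j : ι) :
    ∫ x, ∫ y, F (Function.update x j y) ∂μ ∂(Measure.pi fun _ => μ) =
      ∫ x, F x ∂(Measure.pi fun _ => μ) := by
  have h := measurePreserving_update μ j
  calc ∫ x, ∫ y, F (Function.update x j y) ∂μ ∂(Measure.pi fun _ => μ)
      = ∫ p, F (Function.update p.1 j p.2) ∂((Measure.pi fun _ => μ).prod μ) :=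
        (integral_prod _ (h.integrable_comp_of_integrable hF)).symm
    _ = ∫ x, F x ∂(Measure.pi fun _ => μ) := by
        conv_rhs => rw [← h.map_eq, integral_map h.aemeasurable (h.map_eq.symm ▸ hF.1)]

lemma integral_le_integral_of_integral_update_le {F G : (ι → E) → ℝ} (j : ι)
    (hF : Integrable F (Measure.pi fun _ => μ)) (hG : Integrable G (Measure.pi fun _ => μ))
    (hFG : ∀ x, ∫ y, F (Function.update x j y) ∂μ ≤ G x) :
    ∫ x, F x ∂(Measure.pi fun _ => μ) ≤ ∫ x, G x ∂(Measure.pi fun _ => μ) := by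
  rw [← integral_integral_update hF j]
  exact integral_mono (integrable_integral_update hF j) hG hFG

end Resampling

lemma integral_sum_four {α ι : Type*} [MeasurableSpace α] [Fintype ι] {ν : Measure α}
    {f : ι → ι → ι → ι → α → ℝ} (hf : ∀ i j k l, Integrable (f i j k l) ν) :
    ∫ x, ∑ i, ∑ j, ∑ k, ∑ l, f i j k l x ∂ν = ∑ i, ∑ j, ∑ k, ∑ l, ∫ x, f i j k l x ∂ν := by
  rw [integral_finsetSum _ fun i _ => integrable_finsetSum _ fun j _ =>
    integrable_finsetSum _ fun k _ => integrable_finsetSum _ fun l _ => hf i j k l]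
  simp_rw [integral_finsetSum _ fun j _ => integrable_finsetSum _ fun k _ =>
    integrable_finsetSum _ fun l _ => hf _ j k l]
  simp_rw [integral_finsetSum _ fun k _ => integrable_finsetSum _ fun l _ => hf _ _ k l]
  simp_rw [integral_finsetSum _ fun l _ => hf _ _ _ l]

section CycleMoments

lemma sum_four_le_of_cyclic {ι : Type*} [Fintype ι] {F : ι → ι → ι → ι → ℝ} {a b : ℝ}
    (hb : 0 ≤ b) (hcyc : ∀ i j k l, F i j k l = F j k l i)
    (hisolated : ∀ i j k l, i ≠ j → i ≠ k → i ≠ l → F i j k l = 0)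
    (hdiag : ∀ i, F i i i i ≤ a) (hpair : ∀ i k, i ≠ k → F i i k k ≤ b)
    (hcross : ∀ i j, i ≠ j → F i j i j ≤ b) :
    ∑ i, ∑ j, ∑ k, ∑ l, F i j k l ≤ Fintype.card ι * a + 3 * (Fintype.card ι : ℝ) ^ 2 * b := by
  classical
  have hpointwise : ∀ i j k l, F i j k l ≤
      (if i = j then if i = k then if i = l then a else 0 else 0 else 0) +
        (if i = j then if k = l then b else 0 else 0) +
        (if i = k then if j = l then b else 0 else 0) +
        (if i = l then if j = k then b else 0 else 0) := fun i j k l => by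
    have hjkl := hcyc i j k l
    have hkli := hcyc j k l i
    have hlij := hcyc k l i j
    grind
  calc ∑ i, ∑ j, ∑ k, ∑ l, F i j k l
      ≤ ∑ i, ∑ j, ∑ k, ∑ l, ((if i = j then if i = k then if i = l then a else 0 else 0 else 0) +
          (if i = j then if k = l then b else 0 else 0) +
          (if i = k then if j = l then b else 0 else 0) +
          (if i = l then if j = k then b else 0 else 0)) := by
        gcongr
        exact hpointwise _ _ _ _
    _ = Fintype.card ι * a + 3 * (Fintype.card ι : ℝ) ^ 2 * b := by
        simp [Finset.sum_add_distrib, Finset.sum_ite_irrel]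
        ring

variable {E m ι : Type*} [Fintype m]

/-- The term of `tr (∑ⱼ w(xⱼ) u(xⱼ) u(xⱼ)ᵗ)⁴` belonging to the closed walk `i → j → k → l → i`. -/
def cycleProduct (w : E → ℝ) (u : E → m → ℝ) (x : ι → E) (i j k l : ι) : ℝ :=
  w (x i) * w (x j) * w (x k) * w (x l) *
    ((u (x i) ⬝ᵥ u (x j)) * (u (x j) ⬝ᵥ u (x k)) * (u (x k) ⬝ᵥ u (x l)) * (u (x l) ⬝ᵥ u (x i)))

lemma sq_norm_scatter_mul_scatter [Fintype ι] (w : E → ℝ) (u : E → m → ℝ) (x : ι → E) :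
    ‖scatter (fun j => w (x j)) (fun j => u (x j)) *
      scatter (fun j => w (x j)) (fun j => u (x j))‖ ^ 2 =
      ((Fintype.card m : ℝ) / Fintype.card ι) ^ 4 *
        ∑ i, ∑ j, ∑ k, ∑ l, cycleProduct w u x i j k l := by
  have hsquare : (∑ j, w (x j) • vecMulVec (u (x j)) (u (x j))) *
      ∑ j, w (x j) • vecMulVec (u (x j)) (u (x j)) =
      ∑ i, ∑ j, (w (x i) * w (x j) * (u (x i) ⬝ᵥ u (x j))) • vecMulVec (u (x i)) (u (x j)) := by
    rw [Finset.sum_mul_sum]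
    exact Finset.sum_congr rfl fun i _ => Finset.sum_congr rfl fun j _ => by
      rw [smul_mul_smul_comm, vecMulVec_mul_vecMulVec, vecMulVec_smul, smul_smul]
  have hS := scatter_isSymm (fun j => w (x j)) fun j => u (x j)
  have hSS : (scatter (fun j => w (x j)) (fun j => u (x j)) *
      scatter (fun j => w (x j)) fun j => u (x j)).IsSymm := by
    rw [IsSymm, transpose_mul, hS.eq]
  rw [frobenius_norm_sq_eq_trace hSS, scatter, smul_mul_smul_comm, hsquare, smul_mul_smul_comm,
    trace_smul, smul_eq_mul]
  congr 1
  · ring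
  simp only [Finset.sum_mul, Finset.mul_sum, trace_sum, smul_mul_smul_comm, trace_smul,
    vecMulVec_mul_vecMulVec, vecMulVec_smul, trace_vecMulVec, smul_eq_mul]
  refine Finset.sum_congr rfl fun i _ => Finset.sum_congr rfl fun j _ =>
    Finset.sum_congr rfl fun k _ => Finset.sum_congr rfl fun l _ => ?_
  rw [cycleProduct, dotProduct_comm (u (x k)) (u (x j))]
  ring

lemma cycleProduct_rotate (w : E → ℝ) (u : E → m → ℝ) (x : ι → E) (i j k l : ι) :
    cycleProduct w u x i j k l = cycleProduct w u x j k l i := by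
  simp only [cycleProduct]
  ring

variable [MeasurableSpace E]

/-- The weighted random dyad `w • u uᵗ` has a unit vector `u`, mean zero and, in every direction
`p`, second moment `E w² (p · u)² ≤ v`. -/
structure IsCenteredDyad (μ : Measure E) (w : E → ℝ) (u : E → m → ℝ) (v : ℝ) : Prop where
  measurable_weight : Measurable w
  measurable_vector : Measurable u
  unit : ∀ y, u y ⬝ᵥ u y = 1
  integrable_pow_four : Integrable (fun y => w y ^ 4) μ
  integral_eq_zero : ∀ p q, ∫ y, w y * ((p ⬝ᵥ u y) * (q ⬝ᵥ u y)) ∂μ = 0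
  integral_sq_le : ∀ p, p ⬝ᵥ p = 1 → ∫ y, w y ^ 2 * (p ⬝ᵥ u y) ^ 2 ∂μ ≤ v

namespace IsCenteredDyad

variable {μ : Measure E} {w : E → ℝ} {u : E → m → ℝ} {v : ℝ} (h : IsCenteredDyad μ w u v)
include h

lemma sq_dotProduct_le_one (y z : E) : (u y ⬝ᵥ u z) ^ 2 ≤ 1 := by
  simpa [h.unit] using sq_dotProduct_le (u y) (u z)

lemma abs_cycleProduct_le (x : ι → E) (i j k l : ι) : |cycleProduct w u x i j k l| ≤
    w (x i) ^ 4 + w (x j) ^ 4 + w (x k) ^ 4 + w (x l) ^ 4 := by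
  have hdot : ∀ y z, |u y ⬝ᵥ u z| ≤ 1 := fun y z =>
    (sq_le_one_iff_abs_le_one _).1 (h.sq_dotProduct_le_one y z)
  have hamgm : ∀ a b c d : ℝ, |a * b * c * d| ≤ a ^ 4 + b ^ 4 + c ^ 4 + d ^ 4 := fun a b c d => by
    rw [abs_le]
    constructor <;>
      nlinarith [sq_nonneg (a * b + c * d), sq_nonneg (a * b - c * d), sq_nonneg (a ^ 2 - b ^ 2),
        sq_nonneg (c ^ 2 - d ^ 2), sq_nonneg (a ^ 2), sq_nonneg (b ^ 2), sq_nonneg (c ^ 2),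
        sq_nonneg (d ^ 2)]
  rw [cycleProduct, abs_mul]
  refine (mul_le_of_le_one_right (abs_nonneg _) ?_).trans (hamgm _ _ _ _)
  simp only [abs_mul]
  exact mul_le_one₀ (mul_le_one₀ (mul_le_one₀ (hdot _ _) (abs_nonneg _) (hdot _ _)) (abs_nonneg _)
    (hdot _ _)) (abs_nonneg _) (hdot _ _)

lemma measurable_cycleProduct (i j k l : ι) :
    Measurable fun x : ι → E => cycleProduct w u x i j k l := by
  have hw := h.measurable_weight
  have hu : ∀ a, Measurable fun y => u y a := measurable_pi_iff.1 h.measurable_vector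
  unfold cycleProduct dotProduct
  fun_prop

variable [IsProbabilityMeasure μ]

lemma integrable_sq : Integrable (fun y => w y ^ 2) μ :=
  (h.integrable_pow_four.add (integrable_const 1)).mono'
    (h.measurable_weight.pow_const 2).aestronglyMeasurable (.of_forall fun y => by
      rw [Real.norm_of_nonneg (sq_nonneg _)]
      simp only [Pi.add_apply]
      nlinarith [sq_nonneg (w y ^ 2 - 1), sq_nonneg (w y ^ 2)])

variable [Fintype ι]

lemma integrable_cycleProduct (i j k l : ι) :
    Integrable (fun x : ι → E => cycleProduct w u x i j k l) (Measure.pi fun _ => μ) := by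
  have hint : ∀ i : ι, Integrable (fun x : ι → E => w (x i) ^ 4) (Measure.pi fun _ => μ) :=
    fun i => integrable_comp_eval (μ := fun _ : ι => μ) (i := i) h.integrable_pow_four
  exact ((((hint i).add (hint j)).add (hint k)).add (hint l)).mono'
    (h.measurable_cycleProduct i j k l).aestronglyMeasurable
    (.of_forall fun x => h.abs_cycleProduct_le x i j k l)

lemma integral_cycleProduct_diag (i : ι) :
    ∫ x : ι → E, cycleProduct w u x i i i i ∂(Measure.pi fun _ => μ) = ∫ y, w y ^ 4 ∂μ := by
  rw [← integral_comp_eval (μ := fun _ : ι => μ) (i := i)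
    (h.measurable_weight.pow_const 4).aestronglyMeasurable]
  refine integral_congr_ae (.of_forall fun x => ?_)
  simp only [cycleProduct, h.unit]
  ring

lemma integral_cycleProduct_eq_zero {i j k l : ι} (hij : i ≠ j) (hik : i ≠ k) (hil : i ≠ l) :
    ∫ x : ι → E, cycleProduct w u x i j k l ∂(Measure.pi fun _ => μ) = 0 := by
  classical
  rw [← integral_integral_update (h.integrable_cycleProduct i j k l) i]
  refine integral_eq_zero_of_ae (.of_forall fun x => ?_)
  have hfactor : ∀ y, cycleProduct w u (Function.update x i y) i j k l =
      w (x j) * w (x k) * w (x l) * ((u (x j) ⬝ᵥ u (x k)) * (u (x k) ⬝ᵥ u (x l))) *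
        (w y * ((u (x j) ⬝ᵥ u y) * (u (x l) ⬝ᵥ u y))) := fun y => by
    simp only [cycleProduct, Function.update_self, Function.update_of_ne hij.symm,
      Function.update_of_ne hik.symm, Function.update_of_ne hil.symm, dotProduct_comm (u y)]
    ring
  simp only [hfactor, integral_const_mul, h.integral_eq_zero, mul_zero, Pi.zero_apply]

lemma integral_cycleProduct_pair_le {i k : ι} (hik : i ≠ k) :
    ∫ x : ι → E, cycleProduct w u x i i k k ∂(Measure.pi fun _ => μ) ≤ v * ∫ y, w y ^ 2 ∂μ := by
  classical
  rw [← integral_comp_eval (μ := fun _ : ι => μ) (i := k)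
    (h.measurable_weight.pow_const 2).aestronglyMeasurable, ← integral_const_mul]
  refine integral_le_integral_of_integral_update_le i (h.integrable_cycleProduct i i k k)
    ((integrable_comp_eval (μ := fun _ : ι => μ) (i := k) h.integrable_sq).const_mul v) fun x => ?_
  have hfactor : ∀ y, cycleProduct w u (Function.update x i y) i i k k =
      w (x k) ^ 2 * (w y ^ 2 * (u (x k) ⬝ᵥ u y) ^ 2) := fun y => by
    simp only [cycleProduct, Function.update_self, Function.update_of_ne hik.symm, h.unit,
      dotProduct_comm (u y)]
    ring
  simp only [hfactor, integral_const_mul]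
  rw [mul_comm v]
  exact mul_le_mul_of_nonneg_left (h.integral_sq_le _ (h.unit _)) (sq_nonneg _)

lemma integral_cycleProduct_cross_le {i j : ι} (hij : i ≠ j) :
    ∫ x : ι → E, cycleProduct w u x i j i j ∂(Measure.pi fun _ => μ) ≤ v * ∫ y, w y ^ 2 ∂μ := by
  refine le_trans (integral_mono (h.integrable_cycleProduct i j i j)
    (h.integrable_cycleProduct i i j j) fun x => ?_) (h.integral_cycleProduct_pair_le hij)
  have hle := mul_le_mul_of_nonneg_left (h.sq_dotProduct_le_one (x i) (x j))
    (sq_nonneg (w (x i) * w (x j) * (u (x i) ⬝ᵥ u (x j))))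
  simp only [cycleProduct, h.unit, dotProduct_comm (u (x j)) (u (x i))]
  linarith

variable (ι) in
lemma integral_sum_cycleProduct_le (hv : 0 ≤ v) :
    ∫ x : ι → E, ∑ i, ∑ j, ∑ k, ∑ l, cycleProduct w u x i j k l ∂(Measure.pi fun _ => μ) ≤
      Fintype.card ι * ∫ y, w y ^ 4 ∂μ +
        3 * (Fintype.card ι : ℝ) ^ 2 * (v * ∫ y, w y ^ 2 ∂μ) := by
  rw [integral_sum_four h.integrable_cycleProduct]
  exact sum_four_le_of_cyclic (mul_nonneg hv (integral_nonneg fun y => by positivity))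
    (fun i j k l => by simp only [cycleProduct_rotate w u _ i j k l])
    (fun i j k l hij hik hil => h.integral_cycleProduct_eq_zero hij hik hil)
    (fun i => (h.integral_cycleProduct_diag i).le)
    (fun i k => h.integral_cycleProduct_pair_le) (fun i j => h.integral_cycleProduct_cross_le)

end IsCenteredDyad

end CycleMoments

/-! ### The radial fluctuation -/

section Markov

variable {Ω m : Type*} [MeasurableSpace Ω] [Fintype m] {ν : Measure Ω} [IsFiniteMeasure ν]

lemma measureReal_not_numRadiusLE_le {M : Ω → Matrix m m ℝ} (hM : ∀ ω, (M ω).IsSymm)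
    (hint : Integrable (fun ω => ‖M ω * M ω‖ ^ 2) ν) {a : ℝ} (ha : 0 < a) :
    ν.real {ω | ¬ NumRadiusLE (M ω) a} ≤ (∫ ω, ‖M ω * M ω‖ ^ 2 ∂ν) / a ^ 4 := by
  have hsubset : {ω | ¬ NumRadiusLE (M ω) a} ⊆ {ω | a ^ 4 ≤ ‖M ω * M ω‖ ^ 2} := fun ω hω => by
    by_contra hlt
    refine hω (.of_frobenius_norm_mul_self_le (hM ω) ha.le (le_of_sq_le_sq ?_ (sq_nonneg a)))
    exact (not_le.1 hlt).le.trans_eq (by ring)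
  rw [le_div_iff₀ (by positivity), mul_comm]
  exact (mul_le_mul_of_nonneg_left (measureReal_mono hsubset) (by positivity)).trans
    (mul_meas_ge_le_integral_of_nonneg (.of_forall fun ω => sq_nonneg _) hint (a ^ 4))

end Markov

section RadialMoments

lemma integral_sq_sub_one_gaussianReal : ∫ s, (s ^ 2 - 1) ∂gaussianReal 0 1 = 0 := by
  have hvar := variance_id_gaussianReal (μ := 0) (v := 1)
  rw [variance_of_integral_eq_zero aemeasurable_id integral_id_gaussianReal] at hvar
  have hint : Integrable (fun s : ℝ => s ^ 2) (gaussianReal 0 1) :=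
    (memLp_id_gaussianReal 2).integrable_sq
  rw [integral_sub hint (integrable_const _)]
  simpa [sub_eq_zero] using hvar

/-- On a one-point index type the dyad is trivial, so that `cycleProduct` computes the fourth power
of the sum `∑ᵢ (xᵢ² - 1) = |x|² - d`. -/
lemma isCenteredDyad_sq_sub_one :
    IsCenteredDyad (gaussianReal 0 1) (fun s => s ^ 2 - 1) (fun _ (_ : Unit) => 1)
      (∫ s, (s ^ 2 - 1) ^ 2 ∂gaussianReal 0 1) where
  measurable_weight := by fun_prop
  measurable_vector := measurable_const
  unit _ := by simp [dotProduct]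
  integrable_pow_four := by
    have hint : Integrable (fun s : ℝ => ‖s‖ ^ 8) (gaussianReal 0 1) :=
      (memLp_id_gaussianReal 8).integrable_norm_pow (by norm_num)
    refine (hint.add (integrable_const 1)).mono' (by fun_prop) (.of_forall fun s => ?_)
    rw [Real.norm_of_nonneg (by positivity), Pi.add_apply, Real.norm_eq_abs, pow_abs,
      abs_of_nonneg (by positivity)]
    nlinarith [mul_nonneg (sq_nonneg s) (sq_nonneg (s ^ 2 - 1)), sq_nonneg (s ^ 2)]
  integral_eq_zero p q := by
    simp only [dotProduct, Finset.univ_unique, Finset.sum_singleton, mul_one, integral_mul_const,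
      integral_sq_sub_one_gaussianReal, zero_mul]
  integral_sq_le p hp := by
    have hp' : p () ^ 2 = 1 := by simpa [dotProduct, sq] using hp
    simp [dotProduct, hp']

variable {m : Type*} [Fintype m]

lemma pow_four_dotProduct_self_sub_card (x : m → ℝ) :
    (x ⬝ᵥ x - Fintype.card m) ^ 4 =
      ∑ i, ∑ j, ∑ k, ∑ l, cycleProduct (fun s => s ^ 2 - 1) (fun _ (_ : Unit) => 1) x i j k l := by
  have hsum : x ⬝ᵥ x - Fintype.card m = ∑ i, (x i ^ 2 - 1) := by
    simp [dotProduct, sq]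
  simp only [cycleProduct, dotProduct, Finset.univ_unique, Finset.sum_singleton, mul_one,
    ← Finset.mul_sum, ← Finset.sum_mul, ← hsum]
  ring

variable (m) in
lemma integrable_pow_four_dotProduct_self_sub_card :
    Integrable (fun x : m → ℝ => (x ⬝ᵥ x - Fintype.card m) ^ 4) (stdNormal m) := by
  simp only [pow_four_dotProduct_self_sub_card]
  exact integrable_finsetSum _ fun i _ => integrable_finsetSum _ fun j _ =>
    integrable_finsetSum _ fun k _ => integrable_finsetSum _ fun l _ =>
      isCenteredDyad_sq_sub_one.integrable_cycleProduct i j k l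

lemma exists_integral_pow_four_dotProduct_self_sub_card_le :
    ∃ C : ℝ, ∀ (m : Type*) [Fintype m],
      ∫ x : m → ℝ, (x ⬝ᵥ x - Fintype.card m) ^ 4 ∂stdNormal m ≤ C * (Fintype.card m : ℝ) ^ 2 := by
  set V₂ := ∫ s, (s ^ 2 - 1) ^ 2 ∂gaussianReal 0 1
  set V₄ := ∫ s, (s ^ 2 - 1) ^ 4 ∂gaussianReal 0 1
  refine ⟨V₄ + 3 * (V₂ * V₂), fun m _ => ?_⟩
  classical
  simp only [pow_four_dotProduct_self_sub_card]
  refine (isCenteredDyad_sq_sub_one.integral_sum_cycleProduct_le m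
    (integral_nonneg fun s => sq_nonneg _)).trans ?_
  have hV₄ : 0 ≤ V₄ := integral_nonneg fun s => by positivity
  have hcard : (Fintype.card m : ℝ) ≤ (Fintype.card m : ℝ) ^ 2 := by
    exact_mod_cast Nat.le_self_pow two_ne_zero _
  nlinarith [mul_le_mul_of_nonneg_right hcard hV₄]

variable (m) in
lemma integral_dotProduct_self_sub_card :
    ∫ x : m → ℝ, (x ⬝ᵥ x - Fintype.card m) ∂stdNormal m = 0 := by
  have hcoord : ∀ i : m, ∫ x : m → ℝ, (x i ^ 2 - 1) ∂stdNormal m = 0 := fun i => by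
    rw [← integral_sq_sub_one_gaussianReal]
    exact integral_comp_eval (μ := fun _ : m => gaussianReal 0 1) (i := i)
      (f := fun s => s ^ 2 - 1) (by fun_prop)
  have hint : ∀ i : m, Integrable (fun x : m → ℝ => x i ^ 2 - 1) (stdNormal m) := fun i => by
    refine integrable_comp_eval (μ := fun _ : m => gaussianReal 0 1) (i := i)
      (f := fun s => s ^ 2 - 1) ?_
    exact (memLp_id_gaussianReal 2).integrable_sq.sub (integrable_const _)
  calc ∫ x : m → ℝ, (x ⬝ᵥ x - Fintype.card m) ∂stdNormal m
      = ∫ x, ∑ i, (x i ^ 2 - 1) ∂stdNormal m := by simp [dotProduct, sq]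
    _ = 0 := by rw [integral_finsetSum _ fun i _ => hint i]; simp [hcoord]

variable [Nonempty m]

lemma dotProduct_self_div_card_sub_one (x : m → ℝ) :
    x ⬝ᵥ x / Fintype.card m - 1 = (x ⬝ᵥ x - Fintype.card m) / Fintype.card m := by
  rw [sub_div, div_self (by exact_mod_cast Fintype.card_ne_zero)]

variable (m) in
lemma isCenteredDyad_direction :
    IsCenteredDyad (stdNormal m) (fun x => x ⬝ᵥ x / Fintype.card m - 1) direction
      ((∫ x : m → ℝ, (x ⬝ᵥ x / Fintype.card m - 1) ^ 2 ∂stdNormal m) / Fintype.card m) := by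
  have hmeas : Measurable fun x : m → ℝ => x ⬝ᵥ x / Fintype.card m - 1 :=
    (measurable_dotProduct_self.div_const _).sub_const _
  have hfour : Integrable (fun x : m → ℝ => (x ⬝ᵥ x / Fintype.card m - 1) ^ 4) (stdNormal m) := by
    simpa only [dotProduct_self_div_card_sub_one, div_pow] using
      (integrable_pow_four_dotProduct_self_sub_card m).div_const ((Fintype.card m : ℝ) ^ 4)
  have hsq : Integrable (fun x : m → ℝ => (x ⬝ᵥ x / Fintype.card m - 1) ^ 2) (stdNormal m) :=
    ((memLp_two_iff_integrable_sq (hmeas.pow_const 2).aestronglyMeasurable).2 (by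
      simpa [← pow_mul] using hfour)).integrable one_le_two
  have hint : Integrable (fun x : m → ℝ => x ⬝ᵥ x / Fintype.card m - 1) (stdNormal m) :=
    ((memLp_two_iff_integrable_sq hmeas.aestronglyMeasurable).2 hsq).integrable one_le_two
  refine ⟨hmeas, measurable_direction, direction_dotProduct_self, hfour, fun p q => ?_,
    fun p hp => ?_⟩
  · rw [integral_mul_dotProduct_direction_mul (g := fun t => t / Fintype.card m - 1) hint]
    simp only [dotProduct_self_div_card_sub_one, integral_div, integral_dotProduct_self_sub_card,
      zero_div, mul_zero]
  · rw [integral_mul_sq_dotProduct_direction (g := fun t => (t / Fintype.card m - 1) ^ 2) hsq, hp,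
      one_div_mul_eq_div]

lemma sq_integral_sq_le_integral_pow_four {Ω : Type*} [MeasurableSpace Ω] {ν : Measure Ω}
    [IsProbabilityMeasure ν] {f : Ω → ℝ} (hf : AEStronglyMeasurable f ν)
    (hint : Integrable (fun ω => f ω ^ 4) ν) :
    (∫ ω, f ω ^ 2 ∂ν) ^ 2 ≤ ∫ ω, f ω ^ 4 ∂ν := by
  have hmem : MemLp (fun ω => f ω ^ 2) 2 ν :=
    (memLp_two_iff_integrable_sq (hf.pow 2)).2 (by simpa [← pow_mul] using hint)
  have hvar := variance_nonneg (fun ω => f ω ^ 2) ν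
  rw [variance_eq_sub hmem] at hvar
  simpa [← pow_mul] using hvar

lemma integral_sum_cycleProduct_direction_le (ι : Type*) [Fintype ι] {C : ℝ}
    (hC : ∫ x : m → ℝ, (x ⬝ᵥ x - Fintype.card m) ^ 4 ∂stdNormal m ≤ C * (Fintype.card m : ℝ) ^ 2) :
    ∫ x : ι → m → ℝ, ∑ i, ∑ j, ∑ k, ∑ l,
        cycleProduct (fun x => x ⬝ᵥ x / Fintype.card m - 1) direction x i j k l
        ∂(Measure.pi fun _ => stdNormal m) ≤
      (Fintype.card ι + 3 * (Fintype.card ι : ℝ) ^ 2 / Fintype.card m) *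
        (C / (Fintype.card m : ℝ) ^ 2) := by
  classical
  have hdyad := isCenteredDyad_direction m
  have hd : (0 : ℝ) < Fintype.card m := by exact_mod_cast Fintype.card_pos
  have hfour : ∫ x : m → ℝ, (x ⬝ᵥ x / Fintype.card m - 1) ^ 4 ∂stdNormal m ≤
      C / (Fintype.card m : ℝ) ^ 2 := by
    simp only [dotProduct_self_div_card_sub_one, div_pow, integral_div]
    rw [div_le_div_iff₀ (by positivity) (by positivity)]
    calc _ ≤ C * (Fintype.card m : ℝ) ^ 2 * (Fintype.card m : ℝ) ^ 2 := by gcongr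
      _ = _ := by ring
  have htwo := (sq_integral_sq_le_integral_pow_four hdyad.measurable_weight.aestronglyMeasurable
    hdyad.integrable_pow_four).trans hfour
  refine (hdyad.integral_sum_cycleProduct_le ι
    (div_nonneg (integral_nonneg fun x => sq_nonneg _) hd.le)).trans ?_
  rw [div_mul_eq_mul_div, ← sq, add_mul, mul_div_assoc', div_mul_eq_mul_div]
  gcongr

lemma exists_measureReal_not_numRadiusLE_radialScatter_le :
    ∃ C : ℝ, ∀ (m ι : Type*) [Fintype m] [Nonempty m] [Fintype ι] [Nonempty ι] (κ : ℝ), 0 < κ →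
      (Measure.pi fun _ : ι => stdNormal m).real {X | ¬ NumRadiusLE (radialScatter X)
        (κ * √((Fintype.card m : ℝ) / Fintype.card ι))} ≤
      C / κ ^ 4 * (1 / Fintype.card ι + 3 / Fintype.card m) := by
  obtain ⟨C, hC⟩ := exists_integral_pow_four_dotProduct_self_sub_card_le
  refine ⟨C, fun m ι _ _ _ _ κ hκ => ?_⟩
  have hnorm : ∀ X : ι → m → ℝ, ‖radialScatter X * radialScatter X‖ ^ 2 = _ :=
    sq_norm_scatter_mul_scatter (fun x => x ⬝ᵥ x / Fintype.card m - 1) direction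
  have hint : Integrable (fun X : ι → m → ℝ => ‖radialScatter X * radialScatter X‖ ^ 2)
      (Measure.pi fun _ => stdNormal m) := by
    simp only [hnorm]
    exact (integrable_finsetSum _ fun i _ => integrable_finsetSum _ fun j _ =>
      integrable_finsetSum _ fun k _ => integrable_finsetSum _ fun l _ =>
        (isCenteredDyad_direction m).integrable_cycleProduct i j k l).const_mul _
  refine (measureReal_not_numRadiusLE_le (M := radialScatter) (fun X => scatter_isSymm _ _) hint
    (by positivity)).trans ?_
  simp only [hnorm, integral_const_mul]
  rw [mul_pow, show √((Fintype.card m : ℝ) / Fintype.card ι) ^ 4 = (√_ ^ 2) ^ 2 by ring,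
    Real.sq_sqrt (by positivity), div_le_iff₀ (by positivity)]
  calc _ ≤ ((Fintype.card m : ℝ) / Fintype.card ι) ^ 4 *
        ((Fintype.card ι + 3 * (Fintype.card ι : ℝ) ^ 2 / Fintype.card m) *
          (C / (Fintype.card m : ℝ) ^ 2)) := by
        gcongr
        exact integral_sum_cycleProduct_direction_le ι (hC m)
    _ = _ := by
        field_simp

end RadialMoments

/-! ### The Gram matrix of the traceless dyads -/

lemma integrable_of_abs_le {α : Type*} [MeasurableSpace α] {ν : Measure α} [IsFiniteMeasure ν]
    {f : α → ℝ} (hf : Measurable f) {C : ℝ} (hC : ∀ x, |f x| ≤ C) : Integrable f ν :=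
  (integrable_const C).mono' hf.aestronglyMeasurable (.of_forall hC)

lemma sq_norm_mul_self_eq_sum {ι : Type*} [Fintype ι] {A : Matrix ι ι ℝ} (hA : A.IsSymm) :
    ‖A * A‖ ^ 2 = ∑ i, ∑ j, ∑ k, ∑ l, A i j * A j k * A k l * A l i := by
  have hAA : (A * A).IsSymm := by rw [IsSymm, transpose_mul, hA.eq]
  rw [frobenius_norm_sq_eq_trace hAA]
  simp only [trace, diag, mul_apply, Finset.sum_mul_sum, mul_assoc]
  exact Finset.sum_congr rfl fun i _ => Finset.sum_comm

section ReproducingKernel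

variable {E ι : Type*}

/-- The matrix `(q(xᵢ, xⱼ))ᵢⱼ` with its diagonal replaced by zeros. -/
def offDiagKernel [DecidableEq ι] (q : E → E → ℝ) (x : ι → E) : Matrix ι ι ℝ := fun i j =>
  if i = j then 0 else q (x i) (x j)

variable [MeasurableSpace E]

/-- A bounded symmetric kernel `q` which, as an integral operator on `L²(μ)`, satisfies
`q ∘ q = c q`, so that `c⁻¹ q` is an orthogonal projection. -/
structure IsReproducingKernel (μ : Measure E) (q : E → E → ℝ) (c : ℝ) : Prop where
  measurable : Measurable (Function.uncurry q)
  symm : ∀ x y, q x y = q y x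
  abs_le_one : ∀ x y, |q x y| ≤ 1
  integral_mul : ∀ x z, ∫ y, q y x * q y z ∂μ = c * q x z

namespace IsReproducingKernel

variable {μ : Measure E} {q : E → E → ℝ} {c : ℝ} (h : IsReproducingKernel μ q c)
include h

lemma isSymm_offDiagKernel [DecidableEq ι] (x : ι → E) : (offDiagKernel q x).IsSymm := by
  ext i j
  simp only [offDiagKernel, transpose_apply, eq_comm (a := j), h.symm (x j)]

lemma measurable_apply (i j : ι) : Measurable fun x : ι → E => q (x i) (x j) :=
  h.measurable.comp (f := fun x : ι → E => (x i, x j))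
    ((measurable_pi_apply i).prodMk (measurable_pi_apply j))

lemma integral_sq_le (hc : 0 ≤ c) (x : E) : ∫ y, q y x ^ 2 ∂μ ≤ c := by
  simp only [sq, h.integral_mul]
  exact mul_le_of_le_one_right hc ((le_abs_self _).trans (h.abs_le_one x x))

variable [Fintype ι] [IsProbabilityMeasure μ]

lemma integrable_sq_apply (i j : ι) :
    Integrable (fun x : ι → E => q (x i) (x j) ^ 2) (Measure.pi fun _ => μ) :=
  integrable_of_abs_le (C := 1) ((h.measurable_apply i j).pow_const 2) fun x => by
    simpa using h.abs_le_one _ _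

lemma integrable_closedWalk (i j k l : ι) :
    Integrable (fun x : ι → E => q (x i) (x j) * q (x j) (x k) * q (x k) (x l) * q (x l) (x i))
      (Measure.pi fun _ => μ) := by
  have hm := h.measurable_apply (ι := ι)
  refine integrable_of_abs_le (C := 1)
    ((((hm i j).mul (hm j k)).mul (hm k l)).mul (hm l i)) fun x => ?_
  simp only [abs_mul]
  have hb := h.abs_le_one
  exact mul_le_one₀ (mul_le_one₀ (mul_le_one₀ (hb _ _) (abs_nonneg _) (hb _ _)) (abs_nonneg _)
    (hb _ _)) (abs_nonneg _) (hb _ _)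

lemma integral_sq_apply_le (hc : 0 ≤ c) {i j : ι} (hij : i ≠ j) :
    ∫ x : ι → E, q (x i) (x j) ^ 2 ∂(Measure.pi fun _ => μ) ≤ c := by
  classical
  refine (integral_le_integral_of_integral_update_le i (h.integrable_sq_apply i j)
    (integrable_const c) fun x => ?_).trans_eq (by simp)
  simpa only [Function.update_self, Function.update_of_ne hij.symm] using h.integral_sq_le hc (x j)

lemma integral_sq_mul_sq_apply_le (hc : 0 ≤ c) {i j l : ι} (hij : i ≠ j) (hil : i ≠ l)
    (hjl : j ≠ l) :
    ∫ x : ι → E, q (x i) (x j) * q (x j) (x i) * q (x i) (x l) * q (x l) (x i)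
      ∂(Measure.pi fun _ => μ) ≤ c ^ 2 := by
  classical
  have hfactor : ∀ (x : ι → E) y, q (Function.update x j y i) (Function.update x j y j) *
      q (Function.update x j y j) (Function.update x j y i) *
      q (Function.update x j y i) (Function.update x j y l) *
      q (Function.update x j y l) (Function.update x j y i) =
        q y (x i) ^ 2 * q (x i) (x l) ^ 2 := fun x y => by
    simp only [Function.update_self, Function.update_of_ne hij, Function.update_of_ne hjl.symm,
      h.symm (x i) y, h.symm (x l)]
    ring
  calc _ ≤ ∫ x : ι → E, c * q (x i) (x l) ^ 2 ∂(Measure.pi fun _ => μ) := by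
        refine integral_le_integral_of_integral_update_le j (h.integrable_closedWalk i j i l)
          ((h.integrable_sq_apply i l).const_mul c) fun x => ?_
        simp only [hfactor, integral_mul_const]
        exact mul_le_mul_of_nonneg_right (h.integral_sq_le hc _) (sq_nonneg _)
    _ ≤ c ^ 2 := by
        rw [integral_const_mul, sq]
        exact mul_le_mul_of_nonneg_left (h.integral_sq_apply_le hc hil) hc

lemma integral_closedWalk_le_of_distinct (hc : 0 ≤ c) {i j k l : ι} (hij : i ≠ j) (hik : i ≠ k)
    (hil : i ≠ l) (hjk : j ≠ k) (hjl : j ≠ l) (hkl : k ≠ l) :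
    ∫ x : ι → E, q (x i) (x j) * q (x j) (x k) * q (x k) (x l) * q (x l) (x i)
      ∂(Measure.pi fun _ => μ) ≤ c ^ 3 := by
  classical
  have hresample_j : ∀ x : ι → E, ∫ y, q (Function.update x j y i) (Function.update x j y j) *
      q (Function.update x j y j) (Function.update x j y k) *
      q (Function.update x j y k) (Function.update x j y l) *
      q (Function.update x j y l) (Function.update x j y i) ∂μ =
        c * q (x i) (x k) * (q (x k) (x l) * q (x l) (x i)) := fun x => by
    simp only [Function.update_self, Function.update_of_ne hij, Function.update_of_ne hjk.symm,
      Function.update_of_ne hjl.symm, h.symm (x i), mul_assoc _ (q (x k) (x l)), integral_mul_const,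
      h.integral_mul]
  have hresample_l : ∀ x : ι → E, ∫ y, c * q (Function.update x l y i) (Function.update x l y k) *
      (q (Function.update x l y k) (Function.update x l y l) *
        q (Function.update x l y l) (Function.update x l y i)) ∂μ =
        c ^ 2 * q (x i) (x k) ^ 2 := fun x => by
    simp only [Function.update_self, Function.update_of_ne hil, Function.update_of_ne hkl,
      h.symm (x k), integral_const_mul, h.integral_mul]
    ring
  have hint := integrable_integral_update (h.integrable_closedWalk i j k l) j
  rw [← integral_integral_update (h.integrable_closedWalk i j k l) j]
  simp only [hresample_j] at hint ⊢
  rw [← integral_integral_update hint l]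
  simp only [hresample_l, integral_const_mul]
  calc _ ≤ c ^ 2 * c := by gcongr; exact h.integral_sq_apply_le hc hik
    _ = c ^ 3 := by ring

variable [DecidableEq ι]

lemma integrable_closedWalk_offDiagKernel (i j k l : ι) :
    Integrable (fun x : ι → E => offDiagKernel q x i j * offDiagKernel q x j k *
      offDiagKernel q x k l * offDiagKernel q x l i) (Measure.pi fun _ => μ) := by
  by_cases hadj : i = j ∨ j = k ∨ k = l ∨ l = i
  · obtain hij | hjk | hkl | hli := hadj <;> simp [offDiagKernel, *]
  · obtain ⟨hij, hjk, hkl, hli⟩ : i ≠ j ∧ j ≠ k ∧ k ≠ l ∧ l ≠ i := by simpa using hadj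
    simpa only [offDiagKernel, hij, hjk, hkl, hli, if_false] using h.integrable_closedWalk i j k l

lemma integrable_sq_norm_offDiagKernel_mul_self :
    Integrable (fun x : ι → E => ‖offDiagKernel q x * offDiagKernel q x‖ ^ 2)
      (Measure.pi fun _ => μ) := by
  simp only [sq_norm_mul_self_eq_sum (h.isSymm_offDiagKernel _)]
  exact integrable_finsetSum _ fun i _ => integrable_finsetSum _ fun j _ =>
    integrable_finsetSum _ fun k _ => integrable_finsetSum _ fun l _ =>
      h.integrable_closedWalk_offDiagKernel i j k l

lemma integral_closedWalk_offDiagKernel_le (hc : 0 ≤ c) (i j k l : ι) :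
    ∫ x : ι → E, offDiagKernel q x i j * offDiagKernel q x j k * offDiagKernel q x k l *
      offDiagKernel q x l i ∂(Measure.pi fun _ => μ) ≤
    c ^ 3 + (if i = k then c ^ 2 else 0) + (if j = l then c ^ 2 else 0) +
      if i = k then if j = l then c else 0 else 0 := by
  by_cases hadj : i = j ∨ j = k ∨ k = l ∨ l = i
  · have hzero : ∀ x : ι → E, offDiagKernel q x i j * offDiagKernel q x j k *
        offDiagKernel q x k l * offDiagKernel q x l i = 0 := fun x => by
      obtain hij | hjk | hkl | hli := hadj <;> simp [offDiagKernel, *]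
    simp only [hzero, integral_zero]
    positivity
  obtain ⟨hij, hjk, hkl, hli⟩ : i ≠ j ∧ j ≠ k ∧ k ≠ l ∧ l ≠ i := by simpa using hadj
  simp only [offDiagKernel, hij, hjk, hkl, hli, if_false]
  have hc3 := pow_nonneg hc 3
  have hc2 := pow_nonneg hc 2
  by_cases hik : i = k <;> by_cases hjl : j = l
  · subst hik hjl
    refine (integral_mono (h.integrable_closedWalk i j i j) (h.integrable_sq_apply i j)
      fun x => ?_).trans ((h.integral_sq_apply_le hc hij).trans (by simp; linarith))
    have hq := (sq_le_one_iff_abs_le_one _).2 (h.abs_le_one (x i) (x j))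
    simp only [h.symm (x j)]
    nlinarith [mul_le_mul_of_nonneg_left hq (sq_nonneg (q (x i) (x j)))]
  · subst hik
    refine (h.integral_sq_mul_sq_apply_le hc hij hli.symm hjl).trans ?_
    simp [hjl, hc3]
  · subst hjl
    have hrotate : ∀ x : ι → E, q (x i) (x j) * q (x j) (x k) * q (x k) (x j) * q (x j) (x i) =
        q (x j) (x i) * q (x i) (x j) * q (x j) (x k) * q (x k) (x j) := fun x => by ring
    simp only [hrotate]
    refine (h.integral_sq_mul_sq_apply_le hc hij.symm hjk hik).trans ?_
    simp [hik, hc3]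
  · refine (h.integral_closedWalk_le_of_distinct hc hij hik hli.symm hjk hjl hkl).trans ?_
    simp [hik, hjl]

variable (ι) in
lemma integral_sq_norm_offDiagKernel_mul_self_le (hc : 0 ≤ c) :
    ∫ x : ι → E, ‖offDiagKernel q x * offDiagKernel q x‖ ^ 2 ∂(Measure.pi fun _ => μ) ≤
      (Fintype.card ι : ℝ) ^ 4 * c ^ 3 + 2 * (Fintype.card ι : ℝ) ^ 3 * c ^ 2 +
        (Fintype.card ι : ℝ) ^ 2 * c := by
  simp only [sq_norm_mul_self_eq_sum (h.isSymm_offDiagKernel _)]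
  rw [integral_sum_four h.integrable_closedWalk_offDiagKernel]
  calc _ ≤ ∑ i : ι, ∑ j : ι, ∑ k : ι, ∑ l : ι, (c ^ 3 + (if i = k then c ^ 2 else 0) +
        (if j = l then c ^ 2 else 0) + if i = k then if j = l then c else 0 else 0) := by
        gcongr
        exact h.integral_closedWalk_offDiagKernel_le hc _ _ _ _
    _ = _ := by
        simp [Finset.sum_add_distrib, Finset.sum_ite_irrel]
        ring

end IsReproducingKernel

end ReproducingKernel

section DirectionKernel

variable {m : Type*} [Fintype m]

/-- The kernel `(u · v)² - 1/d = tr (Q_u Q_v)` in the directions `u`, `v` of `x`, `y`, where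
`Q_u = u uᵗ - (1/d) I`. -/
noncomputable def sqCosKernel (x y : m → ℝ) : ℝ :=
  (direction x ⬝ᵥ direction y) ^ 2 - 1 / Fintype.card m

variable [Nonempty m]

lemma abs_sqCosKernel_le_one (x y : m → ℝ) : |sqCosKernel x y| ≤ 1 := by
  have hd : (1 : ℝ) ≤ Fintype.card m := by exact_mod_cast Fintype.card_pos
  have hle : 1 / (Fintype.card m : ℝ) ≤ 1 := (div_le_one (by linarith)).2 hd
  have hpos : 0 ≤ 1 / (Fintype.card m : ℝ) := by positivity
  have hcos := sq_dotProduct_direction_le (direction x) y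
  rw [direction_dotProduct_self] at hcos
  rw [sqCosKernel, abs_le]
  constructor <;> linarith [sq_nonneg (direction x ⬝ᵥ direction y)]

lemma integrable_sq_direction_dotProduct (x : m → ℝ) :
    Integrable (fun y => (direction y ⬝ᵥ direction x) ^ 2) (stdNormal m) := by
  simpa [dotProduct_comm] using integrable_mul_sq_dotProduct_direction
    (g := fun _ => 1) (integrable_const 1) (direction x)

lemma integral_sq_direction_dotProduct (x : m → ℝ) :
    ∫ y, (direction y ⬝ᵥ direction x) ^ 2 ∂stdNormal m = 1 / Fintype.card m := by
  have h := integral_mul_sq_dotProduct_direction (g := fun _ => 1) (integrable_const 1)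
    (direction x)
  simpa [dotProduct_comm, direction_dotProduct_self] using h

lemma integral_sqCosKernel (x : m → ℝ) : ∫ y, sqCosKernel y x ∂stdNormal m = 0 := by
  simp only [sqCosKernel]
  rw [integral_sub (integrable_sq_direction_dotProduct x) (integrable_const _),
    integral_sq_direction_dotProduct]
  simp

lemma integral_sqCosKernel_mul (x z : m → ℝ) :
    ∫ y, sqCosKernel y x * sqCosKernel y z ∂stdNormal m =
      2 * ((Fintype.card m : ℝ) * (Fintype.card m + 2))⁻¹ * sqCosKernel x z := by
  have hexpand : ∀ y, sqCosKernel y x * sqCosKernel y z =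
      (direction x ⬝ᵥ direction y) ^ 2 * (direction z ⬝ᵥ direction y) ^ 2 -
        1 / Fintype.card m * (direction y ⬝ᵥ direction x) ^ 2 -
        1 / Fintype.card m * sqCosKernel y z := fun y => by
    simp only [sqCosKernel, dotProduct_comm _ (direction y)]
    ring
  have hsqsq := integrable_sq_mul_sq_dotProduct_direction (direction x) (direction z)
  have hsq := (integrable_sq_direction_dotProduct x).const_mul (1 / (Fintype.card m : ℝ))
  have hker : Integrable (fun y => 1 / Fintype.card m * sqCosKernel y z) (stdNormal m) :=
    ((integrable_sq_direction_dotProduct z).sub (integrable_const _)).const_mul _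
  have hdiff : Integrable (fun y =>
      (direction x ⬝ᵥ direction y) ^ 2 * (direction z ⬝ᵥ direction y) ^ 2 -
        1 / Fintype.card m * (direction y ⬝ᵥ direction x) ^ 2) (stdNormal m) := hsqsq.sub hsq
  simp only [hexpand]
  rw [integral_sub hdiff hker, integral_sub hsqsq hsq, integral_const_mul,
    integral_const_mul, integral_sq_mul_sq_dotProduct_direction, integral_sq_direction_dotProduct,
    integral_sqCosKernel, direction_dotProduct_self, direction_dotProduct_self, sqCosKernel]
  field_simp
  ring

variable (m) in
lemma isReproducingKernel_sqCosKernel : IsReproducingKernel (stdNormal m)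
    sqCosKernel (2 * ((Fintype.card m : ℝ) * (Fintype.card m + 2))⁻¹) where
  measurable := by
    have hfst : Measurable fun p : (m → ℝ) × (m → ℝ) => direction p.1 :=
      measurable_direction.comp measurable_fst
    have hsnd : Measurable fun p : (m → ℝ) × (m → ℝ) => direction p.2 :=
      measurable_direction.comp measurable_snd
    unfold Function.uncurry sqCosKernel dotProduct
    fun_prop
  symm x y := by rw [sqCosKernel, dotProduct_comm, sqCosKernel]
  abs_le_one := abs_sqCosKernel_le_one
  integral_mul := integral_sqCosKernel_mul

lemma measureReal_not_numRadiusLE_offDiagGram_le {ι : Type*} [Fintype ι] [DecidableEq ι]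
    [Nonempty ι] {κ : ℝ} (hκ : 0 < κ) :
    (Measure.pi fun _ : ι => stdNormal m).real
        {X | ¬ NumRadiusLE (offDiagGram fun j => direction (X j))
          (κ * ((Fintype.card ι : ℝ) / Fintype.card m))} ≤
      (8 / (Fintype.card m : ℝ) ^ 2 + 8 / Fintype.card ι +
        2 * ((Fintype.card m : ℝ) / Fintype.card ι) ^ 2) / κ ^ 4 := by
  have hd : (0 : ℝ) < Fintype.card m := by exact_mod_cast Fintype.card_pos
  have hq := isReproducingKernel_sqCosKernel m
  set c := 2 * ((Fintype.card m : ℝ) * (Fintype.card m + 2))⁻¹ with hc_def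
  have hc : c ≤ 2 / (Fintype.card m : ℝ) ^ 2 := by
    rw [hc_def, ← div_eq_mul_inv]
    gcongr
    nlinarith
  have hc0 : 0 ≤ c := by positivity
  have hbound := measureReal_not_numRadiusLE_le (M := offDiagKernel sqCosKernel)
    hq.isSymm_offDiagKernel (hq.integrable_sq_norm_offDiagKernel_mul_self (ι := ι))
    (a := κ * ((Fintype.card ι : ℝ) / Fintype.card m)) (by positivity)
  refine hbound.trans ?_
  rw [div_le_div_iff₀ (by positivity) (by positivity)]
  calc _ ≤ ((Fintype.card ι : ℝ) ^ 4 * c ^ 3 + 2 * (Fintype.card ι : ℝ) ^ 3 * c ^ 2 +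
          (Fintype.card ι : ℝ) ^ 2 * c) * κ ^ 4 := by
        gcongr
        exact hq.integral_sq_norm_offDiagKernel_mul_self_le ι hc0
    _ ≤ ((Fintype.card ι : ℝ) ^ 4 * (2 / (Fintype.card m : ℝ) ^ 2) ^ 3 +
          2 * (Fintype.card ι : ℝ) ^ 3 * (2 / (Fintype.card m : ℝ) ^ 2) ^ 2 +
          (Fintype.card ι : ℝ) ^ 2 * (2 / (Fintype.card m : ℝ) ^ 2)) * κ ^ 4 := by gcongr
    _ = _ := by
        field_simp
        ring

end DirectionKernel

/-! ### Moments of the leave-one-out deviations -/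

section MatrixMeasurability

variable {α m : Type*} [MeasurableSpace α] [Fintype m] {A : α → Matrix m m ℝ}

lemma measurable_frobenius_norm (hA : ∀ a b, Measurable fun x => A x a b) :
    Measurable fun x => ‖A x‖ := by
  simp only [frobenius_norm_def]
  fun_prop

lemma measurable_dotProduct_mulVec (hA : ∀ a b, Measurable fun x => A x a b) {u : α → m → ℝ}
    (hu : Measurable u) : Measurable fun x => u x ⬝ᵥ A x *ᵥ u x := by
  have hcoord := measurable_pi_iff.1 hu
  simp only [dotProduct, mulVec]
  fun_prop

variable [DecidableEq m]

lemma measurable_inv_apply (hA : ∀ a b, Measurable fun x => A x a b) (a b : m) :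
    Measurable fun x => (A x)⁻¹ a b := by
  have hof : Continuous (Matrix.of : (m → m → ℝ) → Matrix m m ℝ) := continuous_id
  have hinv : Measurable fun B : m → m → ℝ => (Matrix.of B)⁻¹ a b := by
    simp only [inv_def, Matrix.smul_apply, Ring.inverse_eq_inv', smul_eq_mul]
    exact hof.matrix_det.measurable.inv.mul (hof.matrix_adjugate.matrix_elem a b).measurable
  exact hinv.comp (measurable_pi_iff.2 fun c => measurable_pi_iff.2 (hA c))

lemma measurable_traceless_apply (hA : ∀ a b, Measurable fun x => A x a b) (a b : m) :
    Measurable fun x => traceless (A x) a b := by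
  simp only [traceless, trace, diag, Matrix.sub_apply, Matrix.smul_apply, smul_eq_mul]
  fun_prop

end MatrixMeasurability

lemma sq_norm_add_smul_one {m : Type*} [Fintype m] [DecidableEq m] {A : Matrix m m ℝ}
    (hA : A.IsSymm) (htr : A.trace = 0) (b : ℝ) :
    ‖A + b • (1 : Matrix m m ℝ)‖ ^ 2 = ‖A‖ ^ 2 + b ^ 2 * Fintype.card m := by
  rw [frobenius_norm_sq_eq_trace (hA.add (isSymm_one.smul b)), frobenius_norm_sq_eq_trace hA]
  simp only [Matrix.add_mul, Matrix.mul_add, Matrix.mul_smul, Matrix.smul_mul, Matrix.mul_one,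
    Matrix.one_mul, trace_add, trace_smul, trace_one, htr, smul_eq_mul]
  ring

section SqCosKernelMoments

variable {m ι : Type*} [Fintype m] [Nonempty m] [Fintype ι]

lemma integrable_sqCosKernel_eval (i k : ι) :
    Integrable (fun x : ι → m → ℝ => sqCosKernel (x i) (x k))
      (Measure.pi fun _ : ι => stdNormal m) :=
  integrable_of_abs_le ((isReproducingKernel_sqCosKernel m).measurable_apply i k) fun _ =>
    abs_sqCosKernel_le_one _ _

lemma integral_sqCosKernel_eval [DecidableEq ι] (i k : ι) :
    ∫ x : ι → m → ℝ, sqCosKernel (x i) (x k) ∂(Measure.pi fun _ : ι => stdNormal m) =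
      if i = k then 1 - 1 / (Fintype.card m : ℝ) else 0 := by
  split_ifs with hik
  · simp [hik, sqCosKernel, direction_dotProduct_self]
  · rw [← integral_integral_update (integrable_sqCosKernel_eval i k) i]
    simp [Function.update_of_ne (Ne.symm hik), integral_sqCosKernel]

end SqCosKernelMoments

section LeaveOneOut

variable {m ι : Type*} [Fintype m]

lemma direction_comp_update [DecidableEq ι] (x : ι → m → ℝ) (j : ι) (y : m → ℝ) :
    (fun i => direction (Function.update x j y i)) =
      Function.update (fun i => direction (x i)) j (direction y) :=
  Function.comp_update direction x j y

variable [Fintype ι] [DecidableEq ι]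

lemma leaveOneOut_update (U : ι → m → ℝ) (j : ι) (v : m → ℝ) :
    leaveOneOut (Function.update U j v) j = leaveOneOut U j := by
  simp only [leaveOneOut, scatter]
  congr 1
  refine Finset.sum_congr rfl fun i _ => ?_
  by_cases hij : i = j
  · simp [hij]
  · rw [Function.update_of_ne hij]

lemma measurable_leaveOneOut_direction_apply (j : ι) (a b : m) :
    Measurable fun x : ι → m → ℝ => leaveOneOut (fun i => direction (x i)) j a b := by
  have hdir : ∀ c, Measurable fun y : m → ℝ => direction y c :=
    measurable_pi_iff.1 measurable_direction
  simp only [leaveOneOut, scatter, Matrix.smul_apply, Matrix.sum_apply, vecMulVec_apply,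
    smul_eq_mul]
  fun_prop

variable [DecidableEq m]

lemma leaveOneOutDeviation_nonneg (U : ι → m → ℝ) (j : ι) : 0 ≤ leaveOneOutDeviation U j := by
  unfold leaveOneOutDeviation
  split_ifs <;> positivity

lemma isSymm_inv_leaveOneOut_sub_one (U : ι → m → ℝ) (j : ι) :
    ((leaveOneOut U j)⁻¹ - 1).IsSymm := by
  rw [IsSymm, transpose_sub, transpose_nonsing_inv, transpose_one, leaveOneOut,
    (scatter_isSymm _ U).eq]

lemma leaveOneOutDeviation_le {U : ι → m → ℝ} (hU : ∀ j, U j ⬝ᵥ U j = 1) (j : ι) :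
    leaveOneOutDeviation U j ≤ 4 * ‖leaveOneOut U j - 1‖ ^ 2 := by
  unfold leaveOneOutDeviation
  split_ifs with hcond
  · have hquad : |U j ⬝ᵥ traceless ((leaveOneOut U j)⁻¹ - 1) *ᵥ U j| ≤
        2 * ‖leaveOneOut U j - 1‖ := by
      simpa [hU] using NumRadiusLE.of_frobenius_norm_le
        ((norm_traceless_le (isSymm_inv_leaveOneOut_sub_one U j)).trans hcond) (U j)
    calc (U j ⬝ᵥ traceless ((leaveOneOut U j)⁻¹ - 1) *ᵥ U j) ^ 2
        ≤ (2 * ‖leaveOneOut U j - 1‖) ^ 2 := sq_le_sq' (abs_le.1 hquad).1 (abs_le.1 hquad).2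
      _ = 4 * ‖leaveOneOut U j - 1‖ ^ 2 := by ring
  · positivity

lemma measurable_leaveOneOutDeviation_direction (j : ι) :
    Measurable fun x : ι → m → ℝ => leaveOneOutDeviation (fun i => direction (x i)) j := by
  classical
  have hM := measurable_leaveOneOut_direction_apply (m := m) j
  have hsub : ∀ a b, Measurable fun x : ι → m → ℝ =>
      (leaveOneOut (fun i => direction (x i)) j - 1) a b := fun a b => (hM a b).sub_const _
  have hinv : ∀ a b, Measurable fun x : ι → m → ℝ =>
      ((leaveOneOut (fun i => direction (x i)) j)⁻¹ - 1) a b := fun a b =>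
    (measurable_inv_apply hM a b).sub_const _
  exact Measurable.ite
    (measurableSet_le (measurable_frobenius_norm hinv)
      ((measurable_frobenius_norm hsub).const_mul 2))
    ((measurable_dotProduct_mulVec (measurable_traceless_apply hinv)
      (measurable_direction.comp (measurable_pi_apply j))).pow_const 2) measurable_const

variable [Nonempty m]

lemma sq_norm_leaveOneOut_sub_one [Nonempty ι] {U : ι → m → ℝ} (hU : ∀ j, U j ⬝ᵥ U j = 1)
    (j : ι) :
    ‖leaveOneOut U j - 1‖ ^ 2 = ((Fintype.card m : ℝ) / Fintype.card ι) ^ 2 *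
        ∑ i, ∑ k, (if i = j then 0 else 1) * (if k = j then 0 else 1) *
          ((U i ⬝ᵥ U k) ^ 2 - 1 / Fintype.card m) +
      Fintype.card m / (Fintype.card ι : ℝ) ^ 2 := by
  have hn : (Fintype.card ι : ℝ) ≠ 0 := by exact_mod_cast Fintype.card_ne_zero
  set a : ι → ℝ := fun i => if i = j then 0 else 1 with ha
  have hcount : (∑ i, a i) / Fintype.card ι = 1 + -(1 / (Fintype.card ι : ℝ)) := by
    have hcompl : ∀ i, a i = 1 - if i = j then 1 else 0 := fun i => by
      by_cases hij : i = j <;> simp [ha, hij]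
    simp only [hcompl, Finset.sum_sub_distrib, Finset.sum_ite_eq', Finset.mem_univ, if_true]
    simp only [Finset.sum_const, Finset.card_univ, nsmul_eq_mul]
    field_simp
    ring
  set Q := ∑ i, a i • traceless (vecMulVec (U i) (U i)) with hQ
  have hdecomp : leaveOneOut U j - 1 = ((Fintype.card m : ℝ) / Fintype.card ι) • Q +
      (-(1 / (Fintype.card ι : ℝ))) • (1 : Matrix m m ℝ) := by
    rw [leaveOneOut, scatter_eq_sum_traceless_add hU, hcount, add_smul, one_smul]
    abel
  have htrace : Q.trace = 0 := by simp [hQ, trace_sum, trace_traceless]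
  rw [hdecomp, sq_norm_add_smul_one ((sum_smul_traceless_dyad_isSymm U a).smul _)
    (by rw [trace_smul, htrace, smul_zero]), norm_smul, mul_pow, Real.norm_eq_abs, sq_abs,
    sq_norm_sum_smul_traceless_dyad hU]
  ring

variable [Nonempty ι]

lemma sq_norm_leaveOneOut_direction_sub_one (x : ι → m → ℝ) (j : ι) :
    ‖leaveOneOut (fun i => direction (x i)) j - 1‖ ^ 2 =
      ((Fintype.card m : ℝ) / Fintype.card ι) ^ 2 * ∑ i, ∑ k,
          (if i = j then 0 else 1) * (if k = j then 0 else 1) * sqCosKernel (x i) (x k) +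
        Fintype.card m / (Fintype.card ι : ℝ) ^ 2 :=
  sq_norm_leaveOneOut_sub_one (fun i => direction_dotProduct_self (x i)) j

lemma integrable_sq_norm_leaveOneOut_sub_one (j : ι) :
    Integrable (fun x : ι → m → ℝ => ‖leaveOneOut (fun i => direction (x i)) j - 1‖ ^ 2)
      (Measure.pi fun _ : ι => stdNormal m) := by
  simp only [sq_norm_leaveOneOut_direction_sub_one]
  exact ((integrable_finsetSum _ fun i _ => integrable_finsetSum _ fun k _ =>
    (integrable_sqCosKernel_eval i k).const_mul _).const_mul _).add (integrable_const _)

lemma integral_sq_norm_leaveOneOut_sub_one_le (j : ι) :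
    ∫ x : ι → m → ℝ, ‖leaveOneOut (fun i => direction (x i)) j - 1‖ ^ 2
        ∂(Measure.pi fun _ : ι => stdNormal m) ≤ (Fintype.card m : ℝ) ^ 2 / Fintype.card ι := by
  have hd : (1 : ℝ) ≤ Fintype.card m := by exact_mod_cast Fintype.card_pos
  have hn : (1 : ℝ) ≤ Fintype.card ι := by exact_mod_cast Fintype.card_pos
  have hterm : ∀ i k, Integrable (fun x : ι → m → ℝ => (if i = j then 0 else 1) *
      (if k = j then 0 else 1) * sqCosKernel (x i) (x k)) (Measure.pi fun _ => stdNormal m) :=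
    fun i k => (integrable_sqCosKernel_eval i k).const_mul _
  have hrow : ∀ i, ∑ k, (if i = j then (0 : ℝ) else 1) * (if k = j then 0 else 1) *
      (if i = k then 1 - 1 / (Fintype.card m : ℝ) else 0) ≤ 1 - 1 / (Fintype.card m : ℝ) :=
    fun i => by
      have : 1 / (Fintype.card m : ℝ) ≤ 1 := (div_le_one (by positivity)).2 hd
      simp only [mul_ite, mul_zero, Finset.sum_ite_eq, Finset.mem_univ, if_true]
      split_ifs <;> linarith
  simp only [sq_norm_leaveOneOut_direction_sub_one]
  rw [integral_add ((integrable_finsetSum _ fun i _ => integrable_finsetSum _ fun k _ =>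
      hterm i k).const_mul _) (integrable_const _), integral_const_mul,
    integral_finsetSum _ fun i _ => integrable_finsetSum _ fun k _ => hterm i k]
  simp_rw [integral_finsetSum _ fun k _ => hterm _ k, integral_const_mul,
    integral_sqCosKernel_eval, integral_const, probReal_univ, one_smul]
  calc _ ≤ ((Fintype.card m : ℝ) / Fintype.card ι) ^ 2 *
        ∑ _i : ι, (1 - 1 / (Fintype.card m : ℝ)) + Fintype.card m / (Fintype.card ι : ℝ) ^ 2 := by
        gcongr with i
        exact hrow i
    _ = (Fintype.card m : ℝ) ^ 2 / Fintype.card ι - (Fintype.card m : ℝ) / Fintype.card ι *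
        (1 - 1 / Fintype.card ι) := by
        rw [Finset.sum_const, Finset.card_univ, nsmul_eq_mul]
        field_simp
        ring
    _ ≤ (Fintype.card m : ℝ) ^ 2 / Fintype.card ι := by
        have : 1 / (Fintype.card ι : ℝ) ≤ 1 := (div_le_one (by positivity)).2 hn
        exact sub_le_self _ (mul_nonneg (by positivity) (by linarith))

lemma integrable_leaveOneOutDeviation (j : ι) :
    Integrable (fun x : ι → m → ℝ => leaveOneOutDeviation (fun i => direction (x i)) j)
      (Measure.pi fun _ : ι => stdNormal m) :=
  ((integrable_sq_norm_leaveOneOut_sub_one j).const_mul 4).mono'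
    (measurable_leaveOneOutDeviation_direction j).aestronglyMeasurable (.of_forall fun x => by
      rw [Real.norm_of_nonneg (leaveOneOutDeviation_nonneg _ _)]
      exact leaveOneOutDeviation_le (fun i => direction_dotProduct_self (x i)) j)

lemma integral_leaveOneOutDeviation_le (j : ι) :
    ∫ x : ι → m → ℝ, leaveOneOutDeviation (fun i => direction (x i)) j
      ∂(Measure.pi fun _ : ι => stdNormal m) ≤ 8 / Fintype.card ι := by
  have hsq := integrable_sq_norm_leaveOneOut_sub_one (m := m) j
  -- `Xⱼ` is independent of its leave-one-out matrix, so it may be integrated out first.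
  have hresample : ∀ x : ι → m → ℝ, ∫ y, leaveOneOutDeviation
      (fun i => direction (Function.update x j y i)) j ∂stdNormal m ≤
      8 / (Fintype.card m : ℝ) ^ 2 * ‖leaveOneOut (fun i => direction (x i)) j - 1‖ ^ 2 :=
    fun x => by
      simp only [direction_comp_update, leaveOneOutDeviation, leaveOneOut_update,
        Function.update_self]
      split_ifs with hcond
      · calc _ ≤ 2 / (Fintype.card m : ℝ) ^ 2 *
              ‖(leaveOneOut (fun i => direction (x i)) j)⁻¹ - 1‖ ^ 2 :=
            integral_sq_dotProduct_traceless_mulVec_direction_le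
              (isSymm_inv_leaveOneOut_sub_one _ j)
          _ ≤ 2 / (Fintype.card m : ℝ) ^ 2 *
              (2 * ‖leaveOneOut (fun i => direction (x i)) j - 1‖) ^ 2 := by gcongr
          _ = _ := by ring
      · simp only [integral_zero]
        positivity
  calc _ ≤ ∫ x : ι → m → ℝ, 8 / (Fintype.card m : ℝ) ^ 2 *
        ‖leaveOneOut (fun i => direction (x i)) j - 1‖ ^ 2 ∂(Measure.pi fun _ => stdNormal m) :=
        integral_le_integral_of_integral_update_le j (integrable_leaveOneOutDeviation j)
          (hsq.const_mul _) hresample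
    _ ≤ 8 / (Fintype.card m : ℝ) ^ 2 * ((Fintype.card m : ℝ) ^ 2 / Fintype.card ι) := by
        rw [integral_const_mul]
        gcongr
        exact integral_sq_norm_leaveOneOut_sub_one_le j
    _ = 8 / Fintype.card ι := by field_simp

lemma measureReal_lt_sum_leaveOneOutDeviation_le {L : ℝ} (hL : 0 < L) :
    (Measure.pi fun _ : ι => stdNormal m).real {x |
      ¬ 2 * ∑ j, leaveOneOutDeviation (fun i => direction (x i)) j + 8 / Fintype.card ι ≤ L} ≤
      24 / L := by
  have hn : (1 : ℝ) ≤ Fintype.card ι := by exact_mod_cast Fintype.card_pos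
  have hint : Integrable (fun x : ι → m → ℝ =>
      2 * ∑ j, leaveOneOutDeviation (fun i => direction (x i)) j)
      (Measure.pi fun _ => stdNormal m) :=
    (integrable_finsetSum _ fun j _ => integrable_leaveOneOutDeviation j).const_mul 2
  have hsum : ∑ j : ι, ∫ x : ι → m → ℝ, leaveOneOutDeviation (fun i => direction (x i)) j
      ∂(Measure.pi fun _ => stdNormal m) ≤ 8 := by
    calc _ ≤ ∑ _j : ι, 8 / (Fintype.card ι : ℝ) :=
          Finset.sum_le_sum fun j _ => integral_leaveOneOutDeviation_le j
      _ = 8 := by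
          rw [Finset.sum_const, Finset.card_univ, nsmul_eq_mul]
          field_simp
  have hmean : ∫ x : ι → m → ℝ, (2 * ∑ j, leaveOneOutDeviation (fun i => direction (x i)) j +
      8 / Fintype.card ι) ∂(Measure.pi fun _ => stdNormal m) ≤ 24 := by
    rw [integral_add hint (integrable_const _), integral_const_mul,
      integral_finsetSum _ fun j _ => integrable_leaveOneOutDeviation j, integral_const,
      probReal_univ, one_smul]
    have : 8 / (Fintype.card ι : ℝ) ≤ 8 := div_le_self (by norm_num) hn
    linarith
  have hnonneg : ∀ x : ι → m → ℝ,
      0 ≤ 2 * ∑ j, leaveOneOutDeviation (fun i => direction (x i)) j + 8 / Fintype.card ι :=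
    fun x => add_nonneg (mul_nonneg two_pos.le (Finset.sum_nonneg fun j _ =>
      leaveOneOutDeviation_nonneg _ j)) (by positivity)
  have hmarkov := mul_meas_ge_le_integral_of_nonneg (.of_forall hnonneg)
    (hint.add (integrable_const _)) L
  rw [le_div_iff₀' hL]
  refine (mul_le_mul_of_nonneg_left (measureReal_mono fun x hx => ?_) hL.le).trans
    (hmarkov.trans hmean)
  exact (not_le.1 hx).le

end LeaveOneOut

/-! ### Concentration of the sample covariance matrix -/

section Chernoff

variable {Ω : Type*} [MeasurableSpace Ω] {μ : Measure Ω} [IsProbabilityMeasure μ] {Y : Ω → ℝ}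
  {ε : ℝ}

lemma exists_exp_mul_mgf_lt_one (hY : 0 ∈ interior (integrableExpSet Y μ)) (hY0 : ∫ x, Y x ∂μ = 0)
    (hε : 0 < ε) : ∃ t > 0, t ∈ integrableExpSet Y μ ∧ Real.exp (-t * ε) * mgf Y μ t < 1 := by
  have hmgf : HasDerivAt (mgf Y μ) 0 0 := by simpa [hY0] using hasDerivAt_mgf hY
  have hexp : HasDerivAt (fun t : ℝ => Real.exp (-t * ε)) (-ε) 0 := by
    simpa using ((hasDerivAt_id (0 : ℝ)).neg.mul_const ε).exp
  have hderiv : HasDerivAt (fun t => Real.exp (-t * ε) * mgf Y μ t) (-ε) 0 := by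
    simpa using hexp.fun_mul hmgf
  have hlt : ∀ᶠ t in nhdsWithin 0 (Set.Ioi 0), Real.exp (-t * ε) * mgf Y μ t < 1 := by
    have hslope := (hasDerivWithinAt_iff_tendsto_slope' Set.self_notMem_Ioi).1
      (hderiv.hasDerivWithinAt (s := Set.Ioi 0))
    filter_upwards [hslope.eventually (gt_mem_nhds (neg_neg_of_pos hε)), self_mem_nhdsWithin]
      with t ht ht0
    rw [slope_def_field, sub_zero, div_lt_iff₀ ht0] at ht
    simpa [sub_neg] using ht
  have hint : ∀ᶠ t in nhdsWithin 0 (Set.Ioi 0), t ∈ integrableExpSet Y μ :=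
    nhdsWithin_le_nhds (mem_interior_iff_mem_nhds.1 hY)
  obtain ⟨t, ht, ht_int, ht0⟩ := (hlt.and (hint.and self_mem_nhdsWithin)).exists
  exact ⟨t, ht0, ht_int, ht⟩

lemma measureReal_card_mul_le_sum_le {ι : Type*} [Fintype ι] {t : ℝ} (ht0 : 0 ≤ t)
    (ht : t ∈ integrableExpSet Y μ) (ε : ℝ) :
    (Measure.pi fun _ : ι => μ).real {x | Fintype.card ι * ε ≤ ∑ j, Y (x j)} ≤
      (Real.exp (-t * ε) * mgf Y μ t) ^ Fintype.card ι := by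
  have hprod : (fun x : ι → Ω => Real.exp (t * ∑ j, Y (x j))) =
      fun x => ∏ j, Real.exp (t * Y (x j)) := by
    ext x
    rw [Finset.mul_sum, Real.exp_sum]
  have hmgf : mgf (fun x : ι → Ω => ∑ j, Y (x j)) (Measure.pi fun _ => μ) t =
      mgf Y μ t ^ Fintype.card ι := by
    rw [mgf, hprod, integral_fintype_prod_eq_prod fun _ x => Real.exp (t * Y x)]
    simp [mgf]
  refine (measure_ge_le_exp_mul_mgf _ ht0 ?_).trans_eq ?_
  · rw [hprod]
    exact Integrable.fintype_prod (f := fun _ x => Real.exp (t * Y x)) fun _ => ht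
  · rw [hmgf, mul_pow, ← Real.exp_nat_mul]
    ring_nf

theorem exists_measureReal_card_mul_le_sum_le_pow (hY : 0 ∈ interior (integrableExpSet Y μ))
    (hY0 : ∫ x, Y x ∂μ = 0) (hε : 0 < ε) :
    ∃ ρ, 0 < ρ ∧ ρ < 1 ∧ ∀ (ι : Type*) [Fintype ι],
      (Measure.pi fun _ : ι => μ).real {x | Fintype.card ι * ε ≤ ∑ j, Y (x j)} ≤
        ρ ^ Fintype.card ι := by
  obtain ⟨t, ht0, ht, hlt⟩ := exists_exp_mul_mgf_lt_one hY hY0 hε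
  exact ⟨_, mul_pos (Real.exp_pos _) (mgf_pos ht), hlt, fun ι _ =>
    measureReal_card_mul_le_sum_le ht0.le ht ε⟩

lemma zero_mem_interior_integrableExpSet_sq_sub_one_gaussianReal (s : ℝ) :
    0 ∈ interior (integrableExpSet (fun y => s * (y ^ 2 - 1)) (gaussianReal 0 1)) := by
  obtain ⟨C, hC, hint⟩ := IsGaussian.exists_integrable_exp_sq (gaussianReal 0 1)
  have hsmall : ∀ᶠ t in nhds (0 : ℝ), |t * s| < C := by
    have h : ContinuousAt (fun t : ℝ => |t * s|) 0 := by fun_prop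
    exact h.eventually_lt continuousAt_const (by simpa using hC)
  rw [mem_interior_iff_mem_nhds]
  filter_upwards [hsmall] with t ht
  refine Integrable.mono' (hint.const_mul (Real.exp C)) (by fun_prop) (.of_forall fun y => ?_)
  rw [Real.norm_eq_abs, Real.abs_exp, ← Real.exp_add, Real.exp_le_exp, Real.norm_eq_abs, sq_abs]
  nlinarith [abs_lt.1 ht, sq_nonneg y]

lemma exists_measureReal_card_mul_le_abs_sum_sq_sub_one_le_pow (hε : 0 < ε) :
    ∃ ρ, 0 < ρ ∧ ρ < 1 ∧ ∀ (ι : Type*) [Fintype ι],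
      (Measure.pi fun _ : ι => gaussianReal 0 1).real
        {y | Fintype.card ι * ε ≤ |∑ j, (y j ^ 2 - 1)|} ≤ 2 * ρ ^ Fintype.card ι := by
  have hint : ∀ s : ℝ, ∫ y, s * (y ^ 2 - 1) ∂gaussianReal 0 1 = 0 := fun s => by
    rw [integral_const_mul, integral_sq_sub_one_gaussianReal, mul_zero]
  obtain ⟨ρ₁, hρ₁, hρ₁1, hupper⟩ := exists_measureReal_card_mul_le_sum_le_pow
    (zero_mem_interior_integrableExpSet_sq_sub_one_gaussianReal 1) (hint 1) hε
  obtain ⟨ρ₂, hρ₂, hρ₂1, hlower⟩ := exists_measureReal_card_mul_le_sum_le_pow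
    (zero_mem_interior_integrableExpSet_sq_sub_one_gaussianReal (-1)) (hint (-1)) hε
  refine ⟨max ρ₁ ρ₂, lt_max_of_lt_left hρ₁, max_lt hρ₁1 hρ₂1, fun ι _ => ?_⟩
  simp only [one_mul, neg_one_mul, Finset.sum_neg_distrib] at hupper hlower
  simp only [le_abs, Set.ofPred_or]
  calc _ ≤ ρ₁ ^ Fintype.card ι + ρ₂ ^ Fintype.card ι :=
        (measureReal_union_le _ _).trans (add_le_add (hupper ι) (hlower ι))
    _ ≤ max ρ₁ ρ₂ ^ Fintype.card ι + max ρ₁ ρ₂ ^ Fintype.card ι := by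
        gcongr
        exacts [le_max_left _ _, le_max_right _ _]
    _ = _ := (two_mul _).symm

end Chernoff

section Net

lemma packingNumber_one_le {E : Type*} [NormedAddCommGroup E] [NormedSpace ℝ E]
    [FiniteDimensional ℝ E] {A : Set E} (hA : A ⊆ Metric.closedBall 0 2) :
    Metric.packingNumber 1 A ≤ (5 ^ Module.finrank ℝ E : ℕ) := by
  refine iSup_le fun C => iSup₂_le fun hCA hC => ?_
  by_contra! hcard
  obtain ⟨t, htC, ht⟩ := Set.exists_subset_encard_eq (Order.add_one_le_of_lt hcard)
  rw [← Nat.cast_add_one] at ht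
  lift t to Finset E using Set.finite_of_encard_eq_coe ht
  have hle : t.card ≤ 5 ^ Module.finrank ℝ E :=
    Besicovitch.card_le_of_separated t (fun c hc => by simpa using hA (hCA (htC hc)))
      fun c hc e he hce => by
        have h : ((1 : NNReal) : ENNReal) < edist c e := hC (htC hc) (htC he) hce
        rw [edist_nndist, ENNReal.coe_lt_coe] at h
        rw [← dist_eq_norm]
        exact_mod_cast h.le
  rw [Set.encard_coe_eq_coe_finsetCard, Nat.cast_inj] at ht
  omega

lemma exists_finset_cover_sphere_two (E : Type*) [NormedAddCommGroup E] [NormedSpace ℝ E]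
    [FiniteDimensional ℝ E] :
    ∃ s : Finset E, (∀ x ∈ s, ‖x‖ = 2) ∧ s.card ≤ 5 ^ Module.finrank ℝ E ∧
      ∀ y, ‖y‖ = 2 → ∃ x ∈ s, ‖y - x‖ ≤ 1 := by
  have hpack := packingNumber_one_le (Metric.sphere_subset_closedBall (x := (0 : E)) (ε := 2))
  have htop : Metric.packingNumber 1 (Metric.sphere (0 : E) 2) ≠ ⊤ :=
    (hpack.trans_lt (ENat.natCast_lt_top _)).ne
  have hcard := (Metric.encard_maximalSeparatedSet htop).trans_le hpack
  have hcover := Metric.isCover_maximalSeparatedSet htop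
  have hsub := Metric.maximalSeparatedSet_subset (ε := 1) (A := Metric.sphere (0 : E) 2)
  generalize Metric.maximalSeparatedSet 1 (Metric.sphere (0 : E) 2) = S at hcard hcover hsub
  lift S to Finset E using Set.finite_of_encard_le_coe hcard
  rw [Set.encard_coe_eq_coe_finsetCard, Nat.cast_le] at hcard
  refine ⟨S, fun x hx => by simpa using hsub hx, hcard, fun y hy => ?_⟩
  obtain ⟨x, hx, hxy⟩ := hcover (show y ∈ Metric.sphere (0 : E) 2 by simpa using hy)
  refine ⟨x, hx, ?_⟩
  rw [← dist_eq_norm]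
  exact_mod_cast (edist_le_coe.1 hxy : nndist y x ≤ 1)

lemma exists_finset_card_le_forall_exists_dotProduct_ge (m : Type*) [Fintype m] :
    ∃ s : Finset (m → ℝ), s.card ≤ 5 ^ Fintype.card m ∧ (∀ v ∈ s, v ⬝ᵥ v = 1) ∧
      ∀ u, u ⬝ᵥ u = 1 → ∃ v ∈ s, 7 / 8 ≤ v ⬝ᵥ u := by
  classical
  have hinner : ∀ x y : EuclideanSpace ℝ m, x.ofLp ⬝ᵥ y.ofLp = inner ℝ x y := fun x y => by
    simp [EuclideanSpace.inner_eq_star_dotProduct, dotProduct_comm]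
  obtain ⟨s, hs2, hscard, hcover⟩ := exists_finset_cover_sphere_two (EuclideanSpace ℝ m)
  rw [finrank_euclideanSpace] at hscard
  refine ⟨s.image fun x => (2⁻¹ : ℝ) • x.ofLp, Finset.card_image_le.trans hscard, ?_, ?_⟩
  · rw [Finset.forall_mem_image]
    intro x hx
    rw [smul_dotProduct, dotProduct_smul, hinner, real_inner_self_eq_norm_sq, hs2 x hx]
    norm_num
  · intro u hu
    have hu2 : ‖WithLp.toLp 2 ((2 : ℝ) • u)‖ = 2 := by
      rw [← sq_eq_sq₀ (norm_nonneg _) zero_le_two, ← real_inner_self_eq_norm_sq, ← hinner,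
        smul_dotProduct, dotProduct_smul, hu]
      norm_num
    obtain ⟨x, hx, hdist⟩ := hcover _ hu2
    refine ⟨_, Finset.mem_image_of_mem _ hx, ?_⟩
    have h := pow_le_one₀ (n := 2) (norm_nonneg _) hdist
    rw [norm_sub_sq_real, hu2, hs2 x hx, ← hinner, smul_dotProduct, dotProduct_comm] at h
    rw [smul_dotProduct]
    simp only [smul_eq_mul] at h ⊢
    linarith

end Net

section EigenvectorNet

variable {m : Type*} [Fintype m] {M : Matrix m m ℝ} {u v : m → ℝ} {b c : ℝ}

lemma exists_abs_eigenvalue_numRadiusLE [Nonempty m] (hM : M.IsSymm) :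
    ∃ (c : ℝ) (u : m → ℝ), u ⬝ᵥ u = 1 ∧ M *ᵥ u = c • u ∧ NumRadiusLE M |c| := by
  obtain ⟨c, u, hu, hcu, hc⟩ := exists_max_eigenvalue (A := M) hM
  obtain ⟨c', u', hu', hcu', hc'⟩ := exists_max_eigenvalue (A := -M) hM.neg
  simp only [neg_mulVec, dotProduct_neg] at hcu' hc'
  have hbound : NumRadiusLE M (max c c') := fun w => by
    have hw := dotProduct_self_nonneg w
    exact abs_le'.2 ⟨(hc w).trans (by gcongr; exact le_max_left _ _),
      (hc' w).trans (by gcongr; exact le_max_right _ _)⟩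
  rcases le_total c' c with hle | hle
  · exact ⟨c, u, hu, hcu, hbound.mono ((max_eq_left hle).trans_le (le_abs_self c))⟩
  · refine ⟨-c', u', hu', by rw [neg_smul, ← hcu', neg_neg], hbound.mono ?_⟩
    rw [abs_neg, max_eq_right hle]
    exact le_abs_self c'

lemma mul_abs_eigenvalue_le_abs_dotProduct_mulVec (hM : M.IsSymm) (hc : NumRadiusLE M |c|)
    (hu : u ⬝ᵥ u = 1) (hcu : M *ᵥ u = c • u) (hv : v ⬝ᵥ v = 1) :
    (2 * (v ⬝ᵥ u) ^ 2 - 1) * |c| ≤ |v ⬝ᵥ M *ᵥ v| := by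
  set a := v ⬝ᵥ u with ha
  set z := v - a • u with hz
  have huz : u ⬝ᵥ z = 0 := by
    rw [hz, dotProduct_sub, dotProduct_smul, hu, dotProduct_comm u, ha]
    simp
  have hvz : v = a • u + z := by rw [hz]; abel
  have hzz : z ⬝ᵥ z = 1 - a ^ 2 := by
    have h := hv
    rw [hvz] at h
    simp only [add_dotProduct, dotProduct_add, smul_dotProduct, dotProduct_smul, hu, huz,
      dotProduct_comm z u, smul_eq_mul] at h
    linarith
  have hquad : v ⬝ᵥ M *ᵥ v = a ^ 2 * c + z ⬝ᵥ M *ᵥ z := by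
    have huMz : u ⬝ᵥ M *ᵥ z = 0 := by
      rw [dotProduct_mulVec_comm hM, hcu, smul_dotProduct, huz, smul_zero]
    conv_lhs => rw [hvz]
    simp only [mulVec_add, mulVec_smul, hcu, add_dotProduct, dotProduct_add, smul_dotProduct,
      dotProduct_smul, hu, huMz, huz, dotProduct_comm z u, smul_eq_mul]
    ring
  have hzM := hc z
  rw [hzz] at hzM
  have htri := abs_sub_abs_le_abs_sub (a ^ 2 * c) (-(z ⬝ᵥ M *ᵥ z))
  rw [sub_neg_eq_add, abs_neg, abs_mul, abs_of_nonneg (sq_nonneg a)] at htri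
  rw [hquad]
  linarith

lemma NumRadiusLE.of_forall_net [Nonempty m] (hM : M.IsSymm)
    {s : Finset (m → ℝ)} (hs1 : ∀ v ∈ s, v ⬝ᵥ v = 1)
    (hs : ∀ u, u ⬝ᵥ u = 1 → ∃ v ∈ s, 7 / 8 ≤ v ⬝ᵥ u)
    (hb : ∀ v ∈ s, |v ⬝ᵥ M *ᵥ v| ≤ b) : NumRadiusLE M (2 * b) := by
  obtain ⟨c, u, hu, hcu, hc⟩ := exists_abs_eigenvalue_numRadiusLE hM
  obtain ⟨v, hv, hvu⟩ := hs u hu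
  have h := (mul_abs_eigenvalue_le_abs_dotProduct_mulVec hM hc hu hcu (hs1 v hv)).trans (hb v hv)
  refine hc.mono ?_
  nlinarith [abs_nonneg c, mul_le_mul hvu hvu (by norm_num) (by linarith)]

end EigenvectorNet

section SampleCovariance

variable {m ι : Type*} [Fintype ι]

lemma sampleCov_isSymm (X : ι → m → ℝ) : (sampleCov X).IsSymm := by
  simp [sampleCov, IsSymm, transpose_sum, transpose_vecMulVec]

variable [Fintype m]

lemma measurePreserving_dotProduct {v : m → ℝ} (hv : v ⬝ᵥ v = 1) :
    MeasurePreserving (fun x => v ⬝ᵥ x) (stdNormal m) (gaussianReal 0 1) := by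
  classical
  obtain ⟨i, -⟩ := Function.ne_iff.1 (ne_zero_of_dotProduct_self_eq_one hv)
  obtain ⟨e, he, -, hdot⟩ := exists_measurePreserving_dotProduct_eq (p := v) (q := Pi.single i 1)
    (by simp [hv])
  have heval : (fun x => v ⬝ᵥ x) = Function.eval i ∘ e.symm := by
    ext x
    simpa using hdot (e.symm x)
  rw [heval]
  exact (measurePreserving_eval _ i).comp (he.symm e)

lemma card_mul_dotProduct_sampleCov_sub_one_mulVec [Nonempty ι] [DecidableEq m] (X : ι → m → ℝ)
    {v : m → ℝ} (hv : v ⬝ᵥ v = 1) :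
    Fintype.card ι * (v ⬝ᵥ (sampleCov X - 1) *ᵥ v) = ∑ j, ((v ⬝ᵥ X j) ^ 2 - 1) := by
  rw [sub_mulVec, dotProduct_sub, one_mulVec, hv, sampleCov, smul_mulVec, dotProduct_smul,
    sum_mulVec, dotProduct_sum, smul_eq_mul, mul_sub, mul_inv_cancel_left₀ (by simp)]
  simp_rw [dotProduct_vecMulVec_mulVec]
  simp [dotProduct_comm v]

lemma exists_measureReal_lt_abs_dotProduct_sampleCov_sub_one_le {ε : ℝ} (hε : 0 < ε) :
    ∃ ρ, 0 < ρ ∧ ρ < 1 ∧ ∀ (m ι : Type*) [Fintype m] [DecidableEq m] [Fintype ι] [Nonempty ι]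
      (v : m → ℝ), v ⬝ᵥ v = 1 → (Measure.pi fun _ : ι => stdNormal m).real
        {X | ¬ |v ⬝ᵥ (sampleCov X - 1) *ᵥ v| ≤ ε} ≤ 2 * ρ ^ Fintype.card ι := by
  obtain ⟨ρ, hρ0, hρ1, hρ⟩ := exists_measureReal_card_mul_le_abs_sum_sq_sub_one_le_pow hε
  refine ⟨ρ, hρ0, hρ1, fun m ι _ _ _ _ v hv => le_trans ?_ (hρ ι)⟩
  have hproj : MeasurePreserving (fun (X : ι → m → ℝ) j => v ⬝ᵥ X j)
      (Measure.pi fun _ => stdNormal m) (Measure.pi fun _ => gaussianReal 0 1) :=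
    measurePreserving_pi _ _ fun _ => measurePreserving_dotProduct hv
  rw [← hproj.measureReal_preimage (by measurability)]
  refine measureReal_mono fun X hX => ?_
  have : (0 : ℝ) ≤ Fintype.card ι := Nat.cast_nonneg _
  simp only [Set.mem_preimage, Set.mem_ofPred_eq, not_le,
    ← card_mul_dotProduct_sampleCov_sub_one_mulVec X hv, abs_mul, Nat.abs_cast] at hX ⊢
  gcongr

theorem exists_measureReal_not_numRadiusLE_sampleCov_sub_one_le {ε : ℝ} (hε : 0 < ε) :
    ∃ ρ, 0 < ρ ∧ ρ < 1 ∧ ∀ (m ι : Type*) [Fintype m] [DecidableEq m] [Nonempty m] [Fintype ι]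
      [Nonempty ι], (Measure.pi fun _ : ι => stdNormal m).real
        {X | ¬ NumRadiusLE (sampleCov X - 1) ε} ≤
          2 * 5 ^ Fintype.card m * ρ ^ Fintype.card ι := by
  obtain ⟨ρ, hρ0, hρ1, hρ⟩ :=
    exists_measureReal_lt_abs_dotProduct_sampleCov_sub_one_le (half_pos hε)
  refine ⟨ρ, hρ0, hρ1, fun m ι _ _ _ _ _ => ?_⟩
  obtain ⟨s, hcard, hs1, hs⟩ := exists_finset_card_le_forall_exists_dotProduct_ge m
  have hsub : {X : ι → m → ℝ | ¬ NumRadiusLE (sampleCov X - 1) ε} ⊆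
      ⋃ v ∈ s, {X | ¬ |v ⬝ᵥ (sampleCov X - 1) *ᵥ v| ≤ ε / 2} := fun X hX => by
    by_contra hnet
    simp only [Set.mem_iUnion, Set.mem_ofPred_eq, not_exists, not_not] at hnet
    refine hX ?_
    rw [← mul_div_cancel₀ ε two_ne_zero]
    exact .of_forall_net ((sampleCov_isSymm X).sub isSymm_one) hs1 hs hnet
  calc _ ≤ ∑ v ∈ s, (Measure.pi fun _ : ι => stdNormal m).real
        {X | ¬ |v ⬝ᵥ (sampleCov X - 1) *ᵥ v| ≤ ε / 2} :=
        (measureReal_mono hsub (measure_ne_top _ _)).trans (measureReal_biUnion_finset_le _ _)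
    _ ≤ s.card • (2 * ρ ^ Fintype.card ι) :=
        Finset.sum_le_card_nsmul _ _ _ fun v hv => hρ m ι v (hs1 v hv)
    _ ≤ (5 ^ Fintype.card m : ℕ) • (2 * ρ ^ Fintype.card ι) := by gcongr
    _ = _ := by
        push_cast [nsmul_eq_mul]
        ring

end SampleCovariance

/-! ### Regularity of Gaussian samples and the limit theorem -/

section Limit

lemma exists_measureReal_not_isRegularSample_le :
    ∃ C ρ : ℝ, 0 < ρ ∧ ρ < 1 ∧ ∀ (m ι : Type*) [Fintype m] [DecidableEq m] [Nonempty m]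
      [Fintype ι] [DecidableEq ι] [Nonempty ι] (κ L : ℝ), 0 < κ → 0 < L →
      (Measure.pi fun _ : ι => stdNormal m).real {X | ¬ IsRegularSample X κ L} ≤
        C / κ ^ 4 * (1 / Fintype.card ι + 3 / Fintype.card m) +
        2 * 5 ^ Fintype.card m * ρ ^ Fintype.card ι +
        (8 / (Fintype.card m : ℝ) ^ 2 + 8 / Fintype.card ι +
          2 * ((Fintype.card m : ℝ) / Fintype.card ι) ^ 2) / κ ^ 4 + 24 / L := by
  obtain ⟨C, hradial⟩ := exists_measureReal_not_numRadiusLE_radialScatter_le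
  obtain ⟨ρ, hρ0, hρ1, hcov⟩ :=
    exists_measureReal_not_numRadiusLE_sampleCov_sub_one_le (ε := 1 / 20) (by norm_num)
  refine ⟨C, ρ, hρ0, hρ1, fun m ι _ _ _ _ _ _ κ L hκ hL => ?_⟩
  have hunion : {X : ι → m → ℝ | ¬ IsRegularSample X κ L} ⊆
      {X | ¬ NumRadiusLE (radialScatter X) (κ * √((Fintype.card m : ℝ) / Fintype.card ι))} ∪
      {X | ¬ NumRadiusLE (sampleCov X - 1) (1 / 20)} ∪
      {X | ¬ NumRadiusLE (offDiagGram fun j => direction (X j))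
        (κ * ((Fintype.card ι : ℝ) / Fintype.card m))} ∪
      {X | ¬ 2 * ∑ j, leaveOneOutDeviation (fun j => direction (X j)) j +
        8 / Fintype.card ι ≤ L} := fun X hX => by
    simp only [Set.mem_union, Set.mem_ofPred_eq, ← not_and_or] at hX ⊢
    exact fun h => hX ⟨h.1.1.1, h.1.1.2, h.1.2, h.2⟩
  refine (measureReal_mono hunion).trans ?_
  grw [measureReal_union_le, measureReal_union_le, measureReal_union_le, hradial m ι κ hκ,
    hcov m ι, measureReal_not_numRadiusLE_offDiagGram_le hκ,
    measureReal_lt_sum_leaveOneOutDeviation_le hL]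

variable {n : ℕ → ℕ}

lemma tendsto_pow_mul_pow_nhds_zero (hn : Tendsto n atTop atTop)
    (hdn : Tendsto (fun d : ℕ => (d : ℝ) / n d) atTop (nhds 0)) {a ρ : ℝ} (ha : 0 < a)
    (hρ0 : 0 < ρ) (hρ1 : ρ < 1) : Tendsto (fun d => a ^ d * ρ ^ n d) atTop (nhds 0) := by
  obtain ⟨k, hk⟩ := exists_pow_lt_of_lt_one (show 0 < (2 * a)⁻¹ by positivity) hρ1
  have hkn : ∀ᶠ d in atTop, k * d ≤ n d := by
    have hlim : Tendsto (fun d : ℕ => k * ((d : ℝ) / n d)) atTop (nhds 0) := by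
      simpa using hdn.const_mul (k : ℝ)
    filter_upwards [hlim.eventually_le_const zero_lt_one, hn.eventually_gt_atTop 0] with d hd hnd
    rw [← mul_div_assoc, div_le_one (by exact_mod_cast hnd)] at hd
    exact_mod_cast hd
  refine squeeze_zero' (.of_forall fun d => by positivity) ?_
    (tendsto_pow_atTop_nhds_zero_of_lt_one one_half_pos.le one_half_lt_one)
  filter_upwards [hkn] with d hd
  calc a ^ d * ρ ^ n d ≤ a ^ d * ρ ^ (k * d) := by
        gcongr a ^ d * ?_
        exact pow_le_pow_of_le_one hρ0.le hρ1.le hd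
    _ = (a * ρ ^ k) ^ d := by rw [mul_pow, pow_mul]
    _ ≤ (a * (2 * a)⁻¹) ^ d := by gcongr
    _ = (1 / 2) ^ d := by
        congr 1
        field_simp

lemma eventually_measureReal_not_isRegularSample_le (hn : Tendsto n atTop atTop)
    (hdn : Tendsto (fun d : ℕ => (d : ℝ) / n d) atTop (nhds 0)) {κ L η : ℝ} (hκ : 0 < κ)
    (hL : 0 < L) (hη : 24 / L < η) :
    ∀ᶠ d in atTop, (Measure.pi fun _ : Fin (n d) => stdNormal (Fin d)).real
      {X | ¬ IsRegularSample X κ L} ≤ η := by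
  obtain ⟨C, ρ, hρ0, hρ1, hbound⟩ := exists_measureReal_not_isRegularSample_le
  have hd : ∀ c : ℝ, Tendsto (fun d : ℕ => c / (d : ℝ)) atTop (nhds 0) :=
    fun c => tendsto_const_div_atTop_nhds_zero_nat c
  have hdsq : Tendsto (fun d : ℕ => 8 / (d : ℝ) ^ 2) atTop (nhds 0) :=
    tendsto_const_div_pow 8 2 two_ne_zero
  have hlim : Tendsto (fun d : ℕ => C / κ ^ 4 * (1 / (n d : ℝ) + 3 / d) + 2 * 5 ^ d * ρ ^ n d +
      (8 / (d : ℝ) ^ 2 + 8 / (n d : ℝ) + 2 * ((d : ℝ) / n d) ^ 2) / κ ^ 4 + 24 / L)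
      atTop (nhds (24 / L)) := by
    have h := ((((((hd 1).comp hn).add (hd 3)).const_mul (C / κ ^ 4)).add
      ((tendsto_pow_mul_pow_nhds_zero hn hdn (by norm_num : (0 : ℝ) < 5) hρ0 hρ1).const_mul 2)).add
      (((hdsq.add ((hd 8).comp hn)).add ((hdn.pow 2).const_mul 2)).div_const (κ ^ 4))).add_const
      (24 / L)
    simpa [mul_assoc] using h
  filter_upwards [hlim.eventually_le_const hη, eventually_gt_atTop 0, hn.eventually_gt_atTop 0]
    with d hle hd0 hn0
  have : NeZero d := ⟨hd0.ne'⟩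
  have : NeZero (n d) := ⟨hn0.ne'⟩
  refine (hbound (Fin d) (Fin (n d)) κ L hκ hL).trans ?_
  simpa using hle

lemma eventually_three_mul_le_sq (hn : Tendsto n atTop atTop)
    (hdn : Tendsto (fun d : ℕ => (d : ℝ) / n d) atTop (nhds 0)) {κ L e : ℝ}
    (he : 3 * (κ * L) < e ^ 2) :
    ∀ᶠ d : ℕ in atTop, 3 * (((d : ℝ) / n d + κ) * L + L ^ 2 / n d) ≤ e ^ 2 := by
  have hn' : Tendsto (fun d => L ^ 2 / (n d : ℝ)) atTop (nhds 0) :=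
    (tendsto_const_div_atTop_nhds_zero_nat (L ^ 2)).comp hn
  have h := (((hdn.add_const κ).mul_const L).add hn').const_mul 3
  rw [zero_add, add_zero] at h
  exact h.eventually_le_const he

lemma exists_regularity_parameters {ε η : ℝ} (hε : 0 < ε) (hη : 0 < η) :
    ∃ κ L e : ℝ, 0 < κ ∧ κ ≤ 1 / 20 ∧ 0 < L ∧ 24 / L < η ∧ 0 ≤ e ∧ e ≤ 9 / 160 ∧
      3 * (κ * L) < e ^ 2 ∧ 40 * e + κ ≤ ε := by
  have hL : 0 < 25 / η := by positivity
  have he : 0 < min (9 / 160) (ε / 80) := by positivity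
  generalize hLdef : 25 / η = L at hL
  generalize hedef : min (9 / 160) (ε / 80) = e at he
  have hκL : e ^ 2 / (6 * L) * L = e ^ 2 / 6 := by field_simp
  refine ⟨min (min (1 / 20) (ε / 2)) (e ^ 2 / (6 * L)), L, e, by positivity, by simp, hL, ?_,
    he.le, hedef ▸ min_le_left _ _, ?_, ?_⟩
  · rw [← hLdef, div_div_eq_mul_div, div_lt_iff₀ (by norm_num)]
    linarith
  · have := mul_le_mul_of_nonneg_right (min_le_right (min (1 / 20) (ε / 2)) (e ^ 2 / (6 * L))) hL.le
    nlinarith [pow_pos he 2]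
  · have hκ : min (min (1 / 20) (ε / 2)) (e ^ 2 / (6 * L)) ≤ ε / 2 := by simp
    have he80 : e ≤ ε / 80 := hedef ▸ min_le_right _ _
    linarith

variable {Ω : Type*} [MeasurableSpace Ω] {P : Measure Ω}

lemma measurePreserving_sample {m ι : Type*} [Fintype m] [Fintype ι] [IsProbabilityMeasure P]
    {X : ι → Ω → m → ℝ} (hmeas : ∀ j, Measurable (X j)) (hindep : iIndepFun X P)
    (hgauss : ∀ j, P.map (X j) = stdNormal m) :
    MeasurePreserving (fun ω j => X j ω) P (Measure.pi fun _ => stdNormal m) := by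
  refine ⟨measurable_pi_lambda _ hmeas, ?_⟩
  rw [(iIndepFun_iff_map_fun_eq_pi_map fun j => (hmeas j).aemeasurable).1 hindep]
  simp only [hgauss]

lemma measure_lt_specNorm_le {d n : ℕ} [NeZero d] [NeZero n] {X : Ω → Fin n → Fin d → ℝ}
    (hX : MeasurePreserving X P (Measure.pi fun _ => stdNormal (Fin d)))
    {T : Ω → Matrix (Fin d) (Fin d) ℝ} (hT : ∀ᵐ ω ∂P, IsTyler (X ω) (T ω)) {κ L e ε : ℝ}
    (hκ0 : 0 ≤ κ) (hκ : κ ≤ 1 / 20) (hδ : (d : ℝ) / n ≤ 1 / 10) (he0 : 0 ≤ e) (he1 : e ≤ 9 / 160)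
    (he : 3 * (((d : ℝ) / n + κ) * L + L ^ 2 / n) ≤ e ^ 2) (hε : 40 * e + κ ≤ ε) :
    P {ω | specNorm (√((n : ℝ) / d) • (T ω - 1) -
      √((n : ℝ) / d) • ((n : ℝ)⁻¹ • ∑ j, vecMulVec (X ω j) (X ω j) - 1)) > ε} ≤
      (Measure.pi fun _ : Fin n => stdNormal (Fin d)) {X | ¬ IsRegularSample X κ L} := by
  have hX0 : ∀ᵐ ω ∂P, ∀ j, X ω j ≠ 0 := hX.quasiMeasurePreserving.ae <|
    ae_all_iff.2 fun j =>
      (measurePreserving_eval _ j).quasiMeasurePreserving.ae ae_stdNormal_ne_zero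
  refine (measure_mono_ae ?_).trans (hX.map_eq ▸ Measure.le_map_apply hX.aemeasurable _)
  filter_upwards [hX0, hT] with ω hω0 hωT hlt hreg
  have hle := specNorm_sqrt_smul_sub_le hreg hω0 hωT hκ0 hκ hδ he0 he1 he
  exact (hlt.trans_le (hle.trans hε)).false

end Limit

end TylerGaussian

open TylerGaussian

/-- **Proposition 1 (Dümbgen):** for an i.i.d. standard normal sample `N_d(0, I)` with
`n(d) → ∞` and `d/n(d) → 0`, the spectral norm of the difference between the standardized
Tyler M-estimator `T*_d = √(n(d)/d)·(T_d − I)` and the standardized sample covariance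
matrix `S*_d = √(n(d)/d)·(S_d − I)` converges in probability to `0`. -/
theorem specNorm_tylerStar_sub_covStar_tendsto_zero
    {Ωs : Type*} [MeasurableSpace Ωs] (P : Measure Ωs) [IsProbabilityMeasure P]
    (n : ℕ → ℕ) (hn : Tendsto n atTop atTop)
    (hdn : Tendsto (fun d : ℕ => (d : ℝ) / (n d : ℝ)) atTop (nhds 0))
    (X : ∀ d : ℕ, Fin (n d) → Ωs → Fin d → ℝ)
    (hmeas : ∀ d j, Measurable (X d j))
    (hindep : ∀ d, iIndepFun (X d) P)
    (hgauss : ∀ d j,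
      Measure.map (X d j) P = Measure.pi fun _ : Fin d => gaussianReal 0 1)
    (T : ∀ d : ℕ, Ωs → Matrix (Fin d) (Fin d) ℝ)
    (hT : ∀ d, ∀ᵐ ω ∂P, IsTyler (fun j => X d j ω) (T d ω)) :
    ∀ ε > (0 : ℝ),
      Tendsto (fun d =>
          P {ω | specNorm
              (Real.sqrt ((n d : ℝ) / d) • (T d ω - 1) -
               Real.sqrt ((n d : ℝ) / d) •
                 ((n d : ℝ)⁻¹ • ∑ j : Fin (n d), vecMulVec (X d j ω) (X d j ω) - 1)) > ε})
        atTop (nhds 0) := by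
  intro ε hε
  refine ENNReal.tendsto_nhds_zero.2 fun η hη => ?_
  obtain ⟨η', hη'0, hη'⟩ := ENNReal.lt_iff_exists_nnreal_btwn.1 hη
  obtain ⟨κ, L, e, hκ0, hκ, hL, hLη, he0, he1, heκ, hεe⟩ :=
    exists_regularity_parameters hε (show (0 : ℝ) < η' by exact_mod_cast hη'0)
  filter_upwards [eventually_gt_atTop 0, hn.eventually_gt_atTop 0,
    hdn.eventually_le_const (show (0 : ℝ) < 1 / 10 by norm_num),
    eventually_three_mul_le_sq hn hdn heκ,
    eventually_measureReal_not_isRegularSample_le hn hdn hκ0 hL hLη] with d hd0 hn0 hδ he hreg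
  have : NeZero d := ⟨hd0.ne'⟩
  have : NeZero (n d) := ⟨hn0.ne'⟩
  refine (measure_lt_specNorm_le (measurePreserving_sample (hmeas d) (hindep d) (hgauss d)) (hT d)
    hκ0.le hκ hδ he0 he1 he hεe).trans (le_trans ?_ hη'.le)
  rw [← ofReal_measureReal]
  exact (ENNReal.ofReal_le_ofReal hreg).trans_eq (ENNReal.ofReal_coe_nnreal)
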